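/- Let K be an algebraically closed field of characteristic zero and let A = A(α,β,γ) be a down-up algebra with β ≠ 0 and α + β ≠ 1. If t² − αt − β = (t − μ)² for some μ ∈ K that is a primitive n-th root of unity (for some n ≥ 1), then 2 ≤ sr(A) ≤ 3. -/

import Mathlib

noncomputable section

/-- Defining relations of the down-up algebra `A(α,β,γ)`:
`D = ι 0`, `U = ι 1`, relations `DU² = αUDU + βU²D + γU` and `D²U = αDUD + βUD² + γD`. -/
inductive DownUpRel (K : Type) [Field K] (a b g : K) :
    FreeAlgebra K (Fin 2) → FreeAlgebra K (Fin 2) → Prop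
  | rel1 : DownUpRel K a b g
      (FreeAlgebra.ι K (0 : Fin 2) * FreeAlgebra.ι K (1 : Fin 2) * FreeAlgebra.ι K (1 : Fin 2))
      (a • (FreeAlgebra.ι K (1 : Fin 2) * FreeAlgebra.ι K (0 : Fin 2) * FreeAlgebra.ι K (1 : Fin 2)) +
       b • (FreeAlgebra.ι K (1 : Fin 2) * FreeAlgebra.ι K (1 : Fin 2) * FreeAlgebra.ι K (0 : Fin 2)) +
       g • FreeAlgebra.ι K (1 : Fin 2))
  | rel2 : DownUpRel K a b g
      (FreeAlgebra.ι K (0 : Fin 2) * FreeAlgebra.ι K (0 : Fin 2) * FreeAlgebra.ι K (1 : Fin 2))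
      (a • (FreeAlgebra.ι K (0 : Fin 2) * FreeAlgebra.ι K (1 : Fin 2) * FreeAlgebra.ι K (0 : Fin 2)) +
       b • (FreeAlgebra.ι K (1 : Fin 2) * FreeAlgebra.ι K (0 : Fin 2) * FreeAlgebra.ι K (0 : Fin 2)) +
       g • FreeAlgebra.ι K (0 : Fin 2))

/-- The down-up algebra `A(α,β,γ)`. -/
abbrev DownUp (K : Type) [Field K] (a b g : K) := RingQuot (DownUpRel K a b g)

/-- The generator `D` of `A(α,β,γ)`. -/
def DownUp.D (K : Type) [Field K] (a b g : K) : DownUp K a b g :=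
  RingQuot.mkAlgHom K (DownUpRel K a b g) (FreeAlgebra.ι K (0 : Fin 2))

/-- The generator `U` of `A(α,β,γ)`. -/
def DownUp.U (K : Type) [Field K] (a b g : K) : DownUp K a b g :=
  RingQuot.mkAlgHom K (DownUpRel K a b g) (FreeAlgebra.ι K (1 : Fin 2))

/-- A row `(u₁,…,u_s)` over `R` is unimodular if `u₁R + ⋯ + u_sR = R`. -/
def IsUnimodularRow {R : Type} [Ring R] {s : ℕ} (u : Fin s → R) : Prop :=
  Submodule.span Rᵐᵒᵖ (Set.range u) = ⊤

/-- A unimodular row `(u₁,…,u_{s+1})` is stable if there exist `r₁,…,r_s` such that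
`(u₁ + u_{s+1}r₁, …, u_s + u_{s+1}r_s)` is unimodular. -/
def IsStableRow {R : Type} [Ring R] {s : ℕ} (u : Fin (s + 1) → R) : Prop :=
  ∃ r : Fin s → R,
    IsUnimodularRow (fun i : Fin s => u i.castSucc + u (Fin.last s) * r i)

/-- The stable rank of `R`: the least `t` such that every unimodular row of
length `t + 1` over `R` is stable. -/
noncomputable def stableRank (R : Type) [Ring R] : ℕ :=
  sInf {t : ℕ | ∀ u : Fin (t + 1) → R, IsUnimodularRow u → IsStableRow u}

namespace DUP

/-! ### Ambiskew presentations: monomials, the action on the free module, PBW -/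

section Rel
variable {L E : Type} [Field L] [CommRing E] [Algebra L E]

/-- coefficients: `D U^a = μ^a U^a D + U^(a-1) c_a` -/
def cc (w : E) (μ ε : L) : ℕ → E
  | 0 => 0
  | i + 1 => μ • cc w μ ε i + μ ^ i • w + algebraMap L E ε

theorem cc_closed (w : E) (μ ε : L) (i : ℕ) :
    cc w μ ε (i + 1) = ((i + 1 : ℕ) * μ ^ i : L) • w
      + algebraMap L E (ε * ∑ s ∈ Finset.range (i + 1), μ ^ s) := by
  induction i with
  | zero => simp [cc]
  | succ i ih =>
    rw [cc, ih]
    have : ∑ s ∈ Finset.range (i + 1 + 1), μ ^ s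
        = μ * ∑ s ∈ Finset.range (i + 1), μ ^ s + 1 := by
      rw [Finset.sum_range_succ', Finset.mul_sum]; simp [pow_succ']
    rw [this]
    simp only [Algebra.smul_def, map_mul, map_add, map_pow, map_natCast, map_one]
    push_cast
    ring

theorem map_cc (σ : E →ₐ[L] E) (w : E) (μ ε : L) (hσ : σ w = μ • w) (i : ℕ) :
    σ (cc w μ ε i) + μ ^ i • (w + algebraMap L E ε) = cc w μ ε (i + 1) := by
  induction i with
  | zero => simp [cc]
  | succ i ih =>
    have e : cc w μ ε (i + 1 + 1) = μ • cc w μ ε (i + 1) + μ ^ (i + 1) • w + algebraMap L E ε := rfl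
    rw [e]
    conv_rhs => rw [← ih]
    have e : cc w μ ε (i + 1) = μ • cc w μ ε i + μ ^ i • w + algebraMap L E ε := rfl
    rw [e]
    simp only [map_add, map_smul, hσ, AlgHom.commutes, smul_add, smul_smul, Algebra.smul_def,
      map_pow, map_mul]
    ring

structure DURel {R : Type} [Ring R] [Algebra L R]
    (σ : E →ₐ[L] E) (w : E) (μ ε : L) (ι : E →ₐ[L] R) (U D : R) : Prop where
  sw : σ w = μ • w
  fU : ∀ f, ι f * U = U * ι (σ f)
  Df : ∀ f, D * ι f = ι (σ f) * D
  DU : D * U = μ • (U * D) + ι w + algebraMap L R ε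

/-- operators on the free module with basis `U^i D^j` -/
def Uop (L E : Type) [Field L] [CommRing E] [Algebra L E] :
    (ℕ × ℕ →₀ E) →ₗ[L] (ℕ × ℕ →₀ E) :=
  Finsupp.lsum L fun p => Finsupp.lsingle (p.1 + 1, p.2)

def Dop (σ : E →ₐ[L] E) (w : E) (μ ε : L) : (ℕ × ℕ →₀ E) →ₗ[L] (ℕ × ℕ →₀ E) :=
  Finsupp.lsum L fun p =>
    (Finsupp.lsingle (p.1, p.2 + 1)) ∘ₗ (μ ^ p.1 • σ.toLinearMap)
    + (Finsupp.lsingle (p.1 - 1, p.2)) ∘ₗ (LinearMap.mulLeft L (cc w μ ε p.1))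

def iop (σ : E →ₐ[L] E) (f : E) : (ℕ × ℕ →₀ E) →ₗ[L] (ℕ × ℕ →₀ E) :=
  Finsupp.lsum L fun p => (Finsupp.lsingle p) ∘ₗ (LinearMap.mulLeft L ((σ ^ p.1) f))

@[simp] theorem Uop_single (i j : ℕ) (g : E) :
    Uop L E (Finsupp.single (i, j) g) = Finsupp.single (i + 1, j) g := by
  simp [Uop]

@[simp] theorem Dop_single (σ : E →ₐ[L] E) (w : E) (μ ε : L) (i j : ℕ) (g : E) :
    Dop σ w μ ε (Finsupp.single (i, j) g) = Finsupp.single (i, j + 1) (μ ^ i • σ g)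
      + Finsupp.single (i - 1, j) (cc w μ ε i * g) := by
  simp [Dop]

@[simp] theorem iop_single (σ : E →ₐ[L] E) (f : E) (i j : ℕ) (g : E) :
    iop (L := L) σ f (Finsupp.single (i, j) g) = Finsupp.single (i, j) ((σ ^ i) f * g) := by
  simp [iop]

theorem pow_map_w {σ : E →ₐ[L] E} {w : E} {μ : L} (h : σ w = μ • w) (i : ℕ) :
    (σ ^ i) w = μ ^ i • w := by
  induction i with
  | zero => simp
  | succ i ih => rw [pow_succ, AlgHom.mul_apply, h, map_smul, ih, smul_smul, pow_succ']

def iopHom (σ : E →ₐ[L] E) : E →ₐ[L] Module.End L (ℕ × ℕ →₀ E) where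
  toFun := iop σ
  map_one' := by refine Finsupp.lhom_ext fun ⟨i, j⟩ x => ?_; simp [-Finsupp.single_mul]
  map_mul' f g := by
    refine Finsupp.lhom_ext fun ⟨i, j⟩ x => ?_; simp [mul_assoc, -Finsupp.single_mul]
  map_zero' := by
    refine Finsupp.lhom_ext fun ⟨i, j⟩ x => ?_; simp [-Finsupp.single_mul]
  map_add' f g := by
    refine Finsupp.lhom_ext fun ⟨i, j⟩ x => ?_; simp [add_mul, -Finsupp.single_mul]
  commutes' l := by
    refine Finsupp.lhom_ext fun ⟨i, j⟩ x => ?_; simp [Algebra.smul_def, -Finsupp.single_mul]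

theorem DURel_op (σ : E →ₐ[L] E) (w : E) (μ ε : L) (hs : σ w = μ • w) :
    DURel (R := Module.End L (ℕ × ℕ →₀ E)) σ w μ ε (iopHom σ) (Uop L E) (Dop σ w μ ε) where
  sw := hs
  fU f := by
    refine Finsupp.lhom_ext fun ⟨i, j⟩ g => ?_
    simp [iopHom, pow_succ, -Finsupp.single_mul]
  Df f := by
    refine Finsupp.lhom_ext fun ⟨i, j⟩ g => ?_
    rcases i with _ | i
    · simp [iopHom, cc, -Finsupp.single_mul]
    · simp only [iopHom, AlgHom.coe_mk, RingHom.coe_mk, MonoidHom.coe_mk, OneHom.coe_mk,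
        Module.End.mul_apply, iop_single, Dop_single, map_add, map_mul]
      congr 1
      · rw [← AlgHom.mul_apply, ← pow_succ', ← AlgHom.mul_apply, ← pow_succ, mul_smul_comm]
      · rw [← AlgHom.mul_apply, Nat.add_sub_cancel, ← pow_succ]; congr 1; ring
  DU := by
    refine Finsupp.lhom_ext fun ⟨i, j⟩ g => ?_
    simp only [iopHom, AlgHom.coe_mk, RingHom.coe_mk, MonoidHom.coe_mk, OneHom.coe_mk,
        Module.End.mul_apply, iop_single, Dop_single, map_add, map_mul, Uop_single,
        LinearMap.add_apply, LinearMap.smul_apply, Nat.add_sub_cancel, smul_add,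
        Finsupp.smul_single, smul_smul, ← pow_succ', Module.algebraMap_end_apply, pow_map_w hs]
    have : Finsupp.single (i - 1 + 1, j) (μ • (cc w μ ε i * g))
        = Finsupp.single (i, j) (μ • (cc w μ ε i * g)) := by
      rcases i with _ | i <;> simp [cc]
    rw [this, cc, add_assoc (Finsupp.single _ _ + _), ← Finsupp.single_add, add_assoc (Finsupp.single _ _), ← Finsupp.single_add]
    congr 2
    simp only [Algebra.smul_def]; ring

/-- the monomial map -/
def Phi {R : Type} [Ring R] [Algebra L R] (ι : E →ₐ[L] R) (U D : R) :
    (ℕ × ℕ →₀ E) →ₗ[L] R :=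
  Finsupp.lsum L fun p =>
    (LinearMap.mulLeft L (U ^ p.1)) ∘ₗ (LinearMap.mulRight L (D ^ p.2)) ∘ₗ ι.toLinearMap

@[simp] theorem Phi_single {R : Type} [Ring R] [Algebra L R] (ι : E →ₐ[L] R) (U D : R)
    (i j : ℕ) (f : E) : Phi ι U D (Finsupp.single (i, j) f) = U ^ i * (ι f * D ^ j) := by
  simp [Phi]

namespace DURel
variable {R : Type} [Ring R] [Algebra L R] {σ : E →ₐ[L] E} {w : E} {μ ε : L} {ι : E →ₐ[L] R}
  {U D : R} (h : DURel σ w μ ε ι U D)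
include h

theorem fUpow (f : E) (a : ℕ) : ι f * U ^ a = U ^ a * ι ((σ ^ a) f) := by
  induction a generalizing f with
  | zero => simp
  | succ a ih => rw [pow_succ', ← mul_assoc, h.fU, mul_assoc, ih, ← mul_assoc, pow_succ σ a,
      AlgHom.mul_apply]

theorem Dfpow (f : E) (a : ℕ) : D ^ a * ι f = ι ((σ ^ a) f) * D ^ a := by
  induction a generalizing f with
  | zero => simp
  | succ a ih => rw [pow_succ, mul_assoc, h.Df, ← mul_assoc, ih, mul_assoc, pow_succ σ a,
      AlgHom.mul_apply]

theorem DUpow (a : ℕ) : D * U ^ a = μ ^ a • (U ^ a * D) + U ^ (a - 1) * ι (cc w μ ε a) := by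
  induction a with
  | zero => simp [cc]
  | succ a ih =>
    rw [pow_succ, ← mul_assoc, ih, add_mul, mul_assoc, h.fU, ← map_cc σ w μ ε h.sw a]
    have e : U ^ (a - 1) * (U * ι (σ (cc w μ ε a))) = U ^ a * ι (σ (cc w μ ε a)) := by
      rcases a with _ | a
      · simp [cc]
      · rw [Nat.add_sub_cancel, ← mul_assoc, ← pow_succ]
    rw [e, Nat.add_sub_cancel, smul_mul_assoc, mul_assoc, h.DU]
    simp only [mul_add, map_add, map_smul, AlgHom.commutes, mul_smul_comm, smul_add, smul_smul,
      pow_succ, mul_assoc]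
    abel

theorem Phi_U (F : ℕ × ℕ →₀ E) : Phi ι U D (Uop L E F) = U * Phi ι U D F := by
  have : Phi ι U D ∘ₗ Uop L E = LinearMap.mulLeft L U ∘ₗ Phi ι U D := by
    refine Finsupp.lhom_ext fun ⟨i, j⟩ g => ?_
    simp [pow_succ', mul_assoc]
  exact LinearMap.congr_fun this F

theorem Phi_i (f : E) (F : ℕ × ℕ →₀ E) : Phi ι U D (iop σ f F) = ι f * Phi ι U D F := by
  have : Phi ι U D ∘ₗ iop σ f = LinearMap.mulLeft L (ι f) ∘ₗ Phi ι U D := by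
    refine Finsupp.lhom_ext fun ⟨i, j⟩ g => ?_
    simp only [LinearMap.comp_apply, iop_single, Phi_single, LinearMap.mulLeft_apply]
    rw [← mul_assoc (ι f), h.fUpow, map_mul]; simp only [mul_assoc]
  exact LinearMap.congr_fun this F

theorem Phi_D (F : ℕ × ℕ →₀ E) : Phi ι U D (Dop σ w μ ε F) = D * Phi ι U D F := by
  have : Phi ι U D ∘ₗ Dop σ w μ ε = LinearMap.mulLeft L D ∘ₗ Phi ι U D := by
    refine Finsupp.lhom_ext fun ⟨i, j⟩ g => ?_
    simp only [LinearMap.comp_apply, Dop_single, map_add, Phi_single, LinearMap.mulLeft_apply]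
    rw [← mul_assoc D, h.DUpow, add_mul, map_mul, smul_mul_assoc, mul_assoc (U ^ i) D,
      ← mul_assoc D, h.Df]
    simp only [map_smul, smul_mul_assoc, mul_smul_comm, pow_succ', mul_assoc]
  exact LinearMap.congr_fun this F

theorem surj (hgen : Algebra.adjoin L {U, D} = ⊤) : Function.Surjective (Phi ι U D) := by
  intro r
  have hr : r ∈ Algebra.adjoin L {U, D} := by rw [hgen]; trivial
  suffices H : ∀ y ∈ LinearMap.range (Phi ι U D), r * y ∈ LinearMap.range (Phi ι U D) by
    have := H 1 ⟨Finsupp.single (0, 0) 1, by simp⟩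
    rw [mul_one] at this
    exact this
  induction hr using Algebra.adjoin_induction with
  | mem x hx =>
    rintro _ ⟨F, rfl⟩
    rcases hx with rfl | rfl
    · exact ⟨_, h.Phi_U F⟩
    · exact ⟨_, h.Phi_D F⟩
  | algebraMap l =>
    rintro _ ⟨F, rfl⟩
    exact ⟨l • F, by rw [map_smul, Algebra.smul_def]⟩
  | add x y _ _ hx hy =>
    intro z hz; rw [add_mul]; exact add_mem (hx z hz) (hy z hz)
  | mul x y _ _ hx hy =>
    intro z hz; rw [mul_assoc]; exact hx _ (hy z hz)

end DURel

structure PBW {R : Type} [Ring R] [Algebra L R]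
    (σ : E →ₐ[L] E) (w : E) (μ ε : L) (ι : E →ₐ[L] R) (U D : R) : Prop
    extends DURel σ w μ ε ι U D where
  inj : Function.Injective (Phi ι U D)
  surj : Function.Surjective (Phi ι U D)
  gen : Algebra.adjoin L {U, D} = ⊤

theorem exists_PBW_aux {R : Type} [Ring R] [Algebra L R] {σ : E →ₐ[L] E} {w : E} {μ ε : L}
    {ι : E →ₐ[L] R} {U D : R} (h : DURel σ w μ ε ι U D) (hinj : Function.Injective (Phi ι U D))
    (hw : Algebra.adjoin L {w} = ⊤) :
    ∃ (R : Type) (_ : Ring R) (_ : Algebra L R) (ι : E →ₐ[L] R) (U D : R),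
      PBW σ w μ ε ι U D := by
  let S := Algebra.adjoin L ({U, D} : Set R)
  have hU : U ∈ S := Algebra.subset_adjoin (by simp)
  have hD : D ∈ S := Algebra.subset_adjoin (by simp)
  have hi : ∀ f, ι f ∈ S := by
    intro f
    have hf : f ∈ Algebra.adjoin L {w} := by rw [hw]; trivial
    have : Algebra.adjoin L {w} ≤ S.comap ι := by
      refine Algebra.adjoin_le ?_
      intro x hx
      rw [Set.mem_singleton_iff.1 hx]
      change ι w ∈ S
      have e2 : ι w = D * U - μ • (U * D) - algebraMap L _ ε := by rw [h.DU]; abel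
      rw [e2]
      exact sub_mem (sub_mem (mul_mem hD hU) (S.smul_mem (mul_mem hU hD) _))
        (S.algebraMap_mem _)
    exact this hf
  let ι' : E →ₐ[L] S := ι.codRestrict S hi
  have hrel : DURel σ w μ ε ι' (⟨_, hU⟩ : S) ⟨_, hD⟩ := by
    refine ⟨h.sw, fun f => Subtype.ext (h.fU f), fun f => Subtype.ext (h.Df f), Subtype.ext h.DU⟩
  have hgen : Algebra.adjoin L ({⟨_, hU⟩, ⟨_, hD⟩} : Set S) = ⊤ := by
    have := Algebra.adjoin_adjoin_coe_preimage (R := L) (s := ({U, D} : Set R))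
    convert this using 2
    ext ⟨x, hx⟩
    simp [Subtype.ext_iff]
  refine ⟨S, inferInstance, inferInstance, ι', ⟨_, hU⟩, ⟨_, hD⟩, hrel, ?_, hrel.surj hgen, hgen⟩
  have : S.val.toLinearMap ∘ₗ Phi ι' (⟨_, hU⟩ : S) ⟨_, hD⟩ = Phi ι U D := by
    refine Finsupp.lhom_ext fun ⟨i, j⟩ g => ?_
    simp [ι']
  intro F G hFG
  apply hinj
  rw [← this]
  simp [hFG]

theorem exists_PBW (σ : E →ₐ[L] E) (w : E) (μ ε : L) (hs : σ w = μ • w)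
    (hw : Algebra.adjoin L {w} = ⊤) :
    ∃ (R : Type) (_ : Ring R) (_ : Algebra L R) (ι : E →ₐ[L] R) (U D : R),
      PBW σ w μ ε ι U D := by
  have h := DURel_op σ w μ ε hs
  refine exists_PBW_aux h ?_ hw
  have hDp : ∀ j, (Dop σ w μ ε ^ j) (Finsupp.single (0, 0) (1 : E))
      = Finsupp.single (0, j) 1 := by
    intro j
    induction j with
    | zero => simp
    | succ j ih => rw [pow_succ', Module.End.mul_apply, ih]; simp [cc]
  have hUp : ∀ i j f, (Uop L E ^ i) (Finsupp.single (0, j) f)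
      = Finsupp.single (i, j) f := by
    intro i j f
    induction i with
    | zero => simp
    | succ j ih => rw [pow_succ', Module.End.mul_apply, ih]; simp
  have key : (LinearMap.applyₗ (Finsupp.single (0, 0) (1 : E)) ∘ₗ
      Phi (iopHom (L := L) σ) (Uop L E) (Dop σ w μ ε)) = LinearMap.id := by
    refine Finsupp.lhom_ext fun ⟨i, j⟩ g => ?_
    simp only [LinearMap.comp_apply, Phi_single]
    simp [hDp, iopHom, hUp]
  intro F G hFG
  have h1 := LinearMap.congr_fun key F
  have h2 := LinearMap.congr_fun key G
  simp only [LinearMap.comp_apply, hFG] at h1 h2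
  exact h1.symm.trans h2

end Rel
end DUP

namespace DUP

section Fil
variable {L E : Type} [Field L] [CommRing E] [Algebra L E]
variable {R : Type} [Ring R] [Algebra L R]

def Fil (ι : E →ₐ[L] R) (U D : R) (s : Set (ℕ × ℕ)) : Submodule L R :=
  (Finsupp.supported E L s).map (Phi ι U D)

def Tset (m : ℕ) : Finset (ℕ × ℕ) := (Finset.range (m + 1)).biUnion
  (fun k => Finset.HasAntidiagonal.antidiagonal k)

theorem mem_Tset {m : ℕ} {p : ℕ × ℕ} : p ∈ Tset m ↔ p.1 + p.2 ≤ m := by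
  simp only [Tset, Finset.mem_biUnion, Finset.mem_range, Finset.HasAntidiagonal.mem_antidiagonal]
  constructor
  · rintro ⟨a, h1, h2⟩; omega
  · intro h; exact ⟨_, by omega, rfl⟩

def tri (m : ℕ) : ℕ := ∑ k ∈ Finset.range (m + 1), (k + 1)

theorem card_Tset (m : ℕ) : (Tset m).card = tri m := by
  rw [Tset, Finset.card_biUnion]
  · simp [tri]
  · intro a _ b _ hab
    rw [Function.onFun, Finset.disjoint_left]
    intro p hp hq
    rw [Finset.HasAntidiagonal.mem_antidiagonal] at hp hq
    omega

theorem tri_succ (m : ℕ) : tri (m + 1) = tri m + (m + 2) := by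
  rw [tri, Finset.sum_range_succ, ← tri]

theorem two_tri (m : ℕ) : 2 * tri m = (m + 1) * (m + 2) := by
  induction m with
  | zero => simp [tri]
  | succ m ih => rw [tri_succ, mul_add, ih]; ring

theorem tri_shift (m d : ℕ) : tri (m + d) ≤ tri m + d * (m + d + 1) := by
  induction d with
  | zero => simp
  | succ d ih => rw [← add_assoc, tri_succ]; nlinarith

theorem tri_small {m e : ℕ} (h : m < e) : tri m ≤ e * (m + 1) := by
  have := two_tri m
  nlinarith

/-- degree-lexicographic initial segment -/
def Low (i j : ℕ) : Set (ℕ × ℕ) := {p | p.1 + p.2 < i + j ∨ (p.1 + p.2 = i + j ∧ p.1 < i)}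

def Lt (d : ℕ) : Set (ℕ × ℕ) := {p | p.1 + p.2 < d}

theorem Lt_sub_Low (i j : ℕ) : Lt (i + j) ⊆ Low i j := fun _ hp => Or.inl hp

theorem Fil_mono (ι : E →ₐ[L] R) (U D : R) {s t : Set (ℕ × ℕ)} (h : s ⊆ t) :
    Fil ι U D s ≤ Fil ι U D t := Submodule.map_mono (Finsupp.supported_mono h)

theorem mem_Fil (ι : E →ₐ[L] R) (U D : R) {s : Set (ℕ × ℕ)} {i j : ℕ} (h : (i, j) ∈ s) (f : E) :
    U ^ i * (ι f * D ^ j) ∈ Fil ι U D s :=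
  ⟨Finsupp.single (i, j) f, Finsupp.single_mem_supported _ _ h, by simp⟩

theorem Fil_le (ι : E →ₐ[L] R) (U D : R) {s : Set (ℕ × ℕ)} {N : Submodule L R}
    (h : ∀ i j f, (i, j) ∈ s → U ^ i * (ι f * D ^ j) ∈ N) : Fil ι U D s ≤ N := by
  rintro _ ⟨F, hF, rfl⟩
  rw [← Finsupp.sum_single F, Finsupp.sum, map_sum]
  refine sum_mem fun p hp => ?_
  obtain ⟨i, j⟩ := p
  rw [Phi_single]
  exact h _ _ _ (hF hp)

abbrev TT (ι : E →ₐ[L] R) (U D : R) (m : ℕ) : Submodule L R := Fil ι U D (Tset m : Set (ℕ × ℕ))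

variable {σ : E →ₐ[L] E} {w : E} {μ ε : L} {ι : E →ₐ[L] R} {U D : R}

namespace DURel
variable (h : DURel σ w μ ε ι U D)
include h

theorem U_Lt {d : ℕ} {x : R} (hx : x ∈ Fil ι U D (Lt d)) : U * x ∈ Fil ι U D (Lt (d + 1)) := by
  suffices H : Fil ι U D (Lt d) ≤ (Fil ι U D (Lt (d + 1))).comap (LinearMap.mulLeft L U) from H hx
  refine Fil_le _ _ _ fun i j f hij => ?_
  simp only [Submodule.mem_comap, LinearMap.mulLeft_apply]
  rw [← mul_assoc, ← pow_succ']
  exact mem_Fil _ _ _ (by simp only [Lt, Set.mem_ofPred_eq] at *; omega) _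

theorem i_Fil {s : Set (ℕ × ℕ)} (f : E) {x : R} (hx : x ∈ Fil ι U D s) :
    ι f * x ∈ Fil ι U D s := by
  suffices H : Fil ι U D s ≤ (Fil ι U D s).comap (LinearMap.mulLeft L (ι f)) from H hx
  refine Fil_le _ _ _ fun i j g hij => ?_
  simp only [Submodule.mem_comap, LinearMap.mulLeft_apply]
  rw [← mul_assoc, h.fUpow, mul_assoc, ← mul_assoc (ι _), ← map_mul]
  exact mem_Fil _ _ _ hij _

theorem D_mon (a b : ℕ) (g : E) : D * (U ^ a * (ι g * D ^ b)) =
    U ^ a * (ι (μ ^ a • σ g) * D ^ (b + 1)) + U ^ (a - 1) * (ι (cc w μ ε a * g) * D ^ b) := by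
  have := h.Phi_D (Finsupp.single (a, b) g)
  rw [Dop_single, map_add, Phi_single, Phi_single, Phi_single] at this
  exact this.symm

theorem D_mon' (a b : ℕ) (g : E) : D * (U ^ a * (ι g * D ^ b)) -
    U ^ a * (ι (μ ^ a • σ g) * D ^ (b + 1)) ∈ Fil ι U D (Lt (a + b + 1)) := by
  rw [h.D_mon, add_sub_cancel_left]
  exact mem_Fil _ _ _ (by simp only [Lt, Set.mem_ofPred_eq] at *; omega) _

theorem D_Lt {d : ℕ} {x : R} (hx : x ∈ Fil ι U D (Lt d)) : D * x ∈ Fil ι U D (Lt (d + 1)) := by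
  suffices H : Fil ι U D (Lt d) ≤ (Fil ι U D (Lt (d + 1))).comap (LinearMap.mulLeft L D) from H hx
  refine Fil_le _ _ _ fun i j f hij => ?_
  simp only [Submodule.mem_comap, LinearMap.mulLeft_apply]
  rw [h.D_mon]
  simp only [Lt, Set.mem_ofPred_eq] at hij
  exact add_mem (mem_Fil _ _ _ (by simp only [Lt, Set.mem_ofPred_eq] at *; omega) _)
    (mem_Fil _ _ _ (by simp only [Lt, Set.mem_ofPred_eq] at *; omega) _)

theorem Dpow_mon (k a b : ℕ) (g : E) : D ^ k * (U ^ a * (ι g * D ^ b)) -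
    U ^ a * (ι (μ ^ (k * a) • (σ ^ k) g) * D ^ (k + b)) ∈ Fil ι U D (Lt (k + a + b)) := by
  induction k with
  | zero => simp
  | succ k ih =>
    have h1 := h.D_Lt ih
    have h2 := h.D_mon' a (k + b) (μ ^ (k * a) • (σ ^ k) g)
    have h3 := add_mem h1 (Fil_mono ι U D (t := Lt (k + a + b + 1)) (by
      intro p hp; simp only [Lt, Set.mem_ofPred_eq] at *; omega) h2)
    convert h3 using 1
    · congr 2; ring
    · rw [mul_sub, sub_add_sub_cancel, pow_succ', mul_assoc]
      congr 4
      · rw [map_smul, smul_smul, pow_succ' σ, AlgHom.mul_apply, ← pow_add]; congr 3; ring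
      · ring

theorem mon_mul (i j a b : ℕ) (f g : E) :
    U ^ i * (ι f * D ^ j) * (U ^ a * (ι g * D ^ b)) -
    U ^ (i + a) * (ι (μ ^ (j * a) • ((σ ^ a) f * (σ ^ j) g)) * D ^ (j + b))
      ∈ Fil ι U D (Lt ((i + a) + (j + b))) := by
  have h1 := h.i_Fil f (h.Dpow_mon j a b g)
  have h2 : ∀ (k d : ℕ) x, x ∈ Fil ι U D (Lt d) → U ^ k * x ∈ Fil ι U D (Lt (d + k)) := by
    intro k
    induction k with
    | zero => intro d x hx; simpa using hx
    | succ k ih => intro d x hx; rw [pow_succ', mul_assoc]; exact h.U_Lt (ih d x hx)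
  have h3 := h2 i _ _ h1
  convert h3 using 1
  · congr 2; ring
  · rw [mul_sub, mul_sub]
    congr 1
    · simp only [mul_assoc]
    · rw [← mul_assoc (ι f), h.fUpow, pow_add, mul_assoc, mul_assoc, ← mul_assoc (ι _) (ι _),
        ← map_mul, mul_smul_comm]

theorem mon_mul_mem {s : Set (ℕ × ℕ)} {i j a b : ℕ} (hs : (i + a, j + b) ∈ s)
    (hs' : Lt ((i + a) + (j + b)) ⊆ s) (f g : E) :
    U ^ i * (ι f * D ^ j) * (U ^ a * (ι g * D ^ b)) ∈ Fil ι U D s := by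
  have := add_mem (Fil_mono ι U D hs' (h.mon_mul i j a b f g)) (mem_Fil ι U D hs
    (μ ^ (j * a) • ((σ ^ a) f * (σ ^ j) g)))
  rwa [sub_add_cancel] at this

theorem Fil_mul {s t u : Set (ℕ × ℕ)} (hs : ∀ p ∈ s, ∀ q ∈ t, (p.1 + q.1, p.2 + q.2) ∈ u)
    (hs' : ∀ p ∈ s, ∀ q ∈ t, Lt ((p.1 + q.1) + (p.2 + q.2)) ⊆ u) {x y : R}
    (hx : x ∈ Fil ι U D s) (hy : y ∈ Fil ι U D t) : x * y ∈ Fil ι U D u := by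
  suffices H : Fil ι U D s ≤ (Fil ι U D u).comap (LinearMap.mulRight L y) from H hx
  refine Fil_le _ _ _ fun i j f hij => ?_
  simp only [Submodule.mem_comap, LinearMap.mulRight_apply]
  suffices H : Fil ι U D t ≤ (Fil ι U D u).comap (LinearMap.mulLeft L (U ^ i * (ι f * D ^ j)))
    from H hy
  refine Fil_le _ _ _ fun a b g hab => ?_
  simp only [Submodule.mem_comap, LinearMap.mulLeft_apply]
  exact h.mon_mul_mem (hs _ hij _ hab) (hs' _ hij _ hab) f g

theorem TT_mul {m k : ℕ} {x y : R} (hx : x ∈ TT ι U D m) (hy : y ∈ TT ι U D k) :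
    x * y ∈ TT ι U D (m + k) := by
  refine h.Fil_mul ?_ ?_ hx hy
  · intro p hp q hq
    simp only [Finset.mem_coe, mem_Tset] at *; omega
  · intro p hp q hq r hr
    simp only [Finset.mem_coe, mem_Tset, Lt, Set.mem_ofPred_eq] at *; omega

end DURel

def HasLead (ι : E →ₐ[L] R) (U D : R) (q : R) (i j : ℕ) (f : E) : Prop :=
  q - U ^ i * (ι f * D ^ j) ∈ Fil ι U D (Low i j)

theorem HasLead.mul (h : DURel σ w μ ε ι U D) {q r : R} {i j a b : ℕ} {f g : E}
    (hq : HasLead ι U D q i j f) (hr : HasLead ι U D r a b g) :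
    HasLead ι U D (q * r) (i + a) (j + b) (μ ^ (j * a) • ((σ ^ a) f * (σ ^ j) g)) := by
  set A := U ^ i * (ι f * D ^ j) with hA
  set B := U ^ a * (ι g * D ^ b) with hB
  have e : q * r - U ^ (i + a) * (ι (μ ^ (j * a) • ((σ ^ a) f * (σ ^ j) g)) * D ^ (j + b))
    = (A * B - U ^ (i + a) * (ι (μ ^ (j * a) • ((σ ^ a) f * (σ ^ j) g)) * D ^ (j + b)))
      + A * (r - B) + (q - A) * B + (q - A) * (r - B) := by noncomm_ring
  unfold HasLead
  rw [e]
  have hA' : A ∈ Fil ι U D {(i, j)} := mem_Fil _ _ _ (by simp) _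
  have hB' : B ∈ Fil ι U D {(a, b)} := mem_Fil _ _ _ (by simp) _
  refine add_mem (add_mem (add_mem ?_ ?_) ?_) ?_
  · exact Fil_mono _ _ _ (Lt_sub_Low _ _) (h.mon_mul i j a b f g)
  · refine h.Fil_mul ?_ ?_ hA' hr
    · rintro p rfl q hq
      simp only [Low, Set.mem_ofPred_eq] at *; omega
    · rintro p rfl q hq r hr
      simp only [Low, Lt, Set.mem_ofPred_eq] at *; omega
  · refine h.Fil_mul ?_ ?_ hq hB'
    · rintro p hp q rfl
      simp only [Low, Set.mem_ofPred_eq] at *; omega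
    · rintro p hp q rfl r hr
      simp only [Low, Lt, Set.mem_ofPred_eq] at *; omega
  · refine h.Fil_mul ?_ ?_ hq hr
    · rintro p hp q hq
      simp only [Low, Set.mem_ofPred_eq] at *; omega
    · rintro p hp q hq r hr
      simp only [Low, Lt, Set.mem_ofPred_eq] at *; omega

theorem HasLead.ne_zero (hi : Function.Injective (Phi ι U D)) {q : R} {i j : ℕ} {f : E}
    (hq : HasLead ι U D q i j f) (hf : f ≠ 0) : q ≠ 0 := by
  rintro rfl
  unfold HasLead at hq
  rw [zero_sub, Submodule.neg_mem_iff] at hq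
  obtain ⟨F, hF, hF2⟩ := hq
  rw [← Phi_single] at hF2
  have := hi hF2
  subst this
  have hm : (i, j) ∈ Low i j := hF (by simp [hf])
  simp [Low] at hm

theorem exists_lead (F : ℕ × ℕ →₀ E) (hF : F ≠ 0) :
    ∃ i j, F (i, j) ≠ 0 ∧ HasLead ι U D (Phi ι U D F) i j (F (i, j)) := by
  have hne : F.support.Nonempty := Finsupp.support_nonempty_iff.2 hF
  obtain ⟨⟨i, j⟩, hp, hmax⟩ := Finset.exists_max_image F.support
    (fun p => toLex (p.1 + p.2, p.1)) hne
  refine ⟨i, j, Finsupp.mem_support_iff.1 hp, ?_⟩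
  unfold HasLead
  rw [← Phi_single, ← map_sub]
  refine ⟨_, ?_, rfl⟩
  rw [SetLike.mem_coe, Finsupp.mem_supported]
  intro p hp'
  have h1 : p ≠ (i, j) := by
    rintro rfl
    simp at hp'
  have h2 : p ∈ F.support := by
    rw [Finsupp.mem_support_iff]
    intro h0
    simp [Finsupp.single_eq_of_ne h1, h0] at hp'
  have h3 := hmax p h2
  rw [Prod.Lex.toLex_le_toLex] at h3
  simp only [Low, Set.mem_ofPred_eq]
  rcases h3 with h3 | ⟨h3, h4⟩
  · left; exact h3
  · right
    refine ⟨h3, lt_of_le_of_ne h4 ?_⟩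
    intro h5
    apply h1
    ext
    · exact h5
    · simp only at *; omega

theorem Tset_exhaust (hs : Function.Surjective (Phi ι U D)) (r : R) : ∃ m, r ∈ TT ι U D m := by
  obtain ⟨F, rfl⟩ := hs r
  refine ⟨F.support.sup (fun p => p.1 + p.2), F, ?_, rfl⟩
  rw [SetLike.mem_coe, Finsupp.mem_supported]
  intro p hp
  rw [Finset.mem_coe, mem_Tset]
  exact Finset.le_sup (f := fun p : ℕ × ℕ => p.1 + p.2) hp

end Fil
end DUP

namespace DUP

structure EDat {L E : Type} [Field L] [CommRing E] [Algebra L E] (σ : E →ₐ[L] E) (w : E) (μ : L)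
    (n : ℕ) (ζ : L) : Prop where
  npos : 0 < n
  prim : IsPrimitiveRoot μ n
  sw : σ w = μ • w
  wn : w ^ n = algebraMap L E ζ
  z0 : ζ ≠ 0
  adj : Algebra.adjoin L {w} = ⊤
  fr : Module.finrank L E = n

section Growth
variable {L E : Type} [Field L] [CommRing E] [Algebra L E]
variable {R : Type} [Ring R] [Algebra L R]
variable {σ : E →ₐ[L] E} {w : E} {μ ε : L} {ι : E →ₐ[L] R} {U D : R} {n : ℕ} {ζ : L}

namespace EDat
variable (he : EDat σ w μ n ζ)
include he

theorem fin : FiniteDimensional L E :=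
  Module.finite_of_finrank_pos (by rw [he.fr]; exact he.npos)

theorem nontriv : Nontrivial E :=
  Module.nontrivial_of_finrank_pos (R := L) (by rw [he.fr]; exact he.npos)

theorem hom_ext {A : Type} [Semiring A] [Algebra L A] {f g : E →ₐ[L] A} (h : f w = g w) : f = g :=
  AlgHom.ext_of_adjoin_eq_top he.adj (by simpa using h)

theorem sig_n : σ ^ n = 1 := by
  apply he.hom_ext
  rw [pow_map_w he.sw, he.prim.pow_eq_one]; simp

theorem sig_inj : Function.Injective σ := by
  have h := he.sig_n
  obtain ⟨m, hm⟩ := Nat.exists_eq_succ_of_ne_zero he.npos.ne'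
  rw [hm, pow_succ] at h
  intro x y hxy
  have := DFunLike.congr_fun h x
  rw [AlgHom.mul_apply, hxy, ← AlgHom.mul_apply, h] at this
  simpa using this.symm

theorem sig_surj : Function.Surjective σ := by
  have h := he.sig_n
  obtain ⟨m, hm⟩ := Nat.exists_eq_succ_of_ne_zero he.npos.ne'
  rw [hm, pow_succ'] at h
  intro x
  exact ⟨(σ ^ m) x, by rw [← AlgHom.mul_apply, h]; rfl⟩

theorem sig_pow_ne (k : ℕ) {f : E} (hf : f ≠ 0) : (σ ^ k) f ≠ 0 := by
  induction k with
  | zero => simpa using hf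
  | succ k ih =>
    rw [pow_succ', AlgHom.mul_apply]
    intro h0
    exact ih (he.sig_inj (by rw [h0, map_zero]))

theorem w_unit : IsUnit w := by
  have : IsUnit (w ^ n) := by
    rw [he.wn]; exact (IsUnit.mk0 _ he.z0).map _
  exact (isUnit_pow_iff he.npos.ne').1 this

theorem mu_ne : μ ≠ 0 := he.prim.ne_zero he.npos.ne'

end EDat

/-- monomials with scalar coefficients -/
def PhiL (L : Type) [Field L] {R : Type} [Ring R] [Algebra L R] (U D : R) : (ℕ × ℕ →₀ L) →ₗ[L] R :=
  Phi (Algebra.ofId L R) U D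

theorem PhiL_eq (F : ℕ × ℕ →₀ L) :
    PhiL L U D F = Phi ι U D (F.mapRange (algebraMap L E) (map_zero _)) := by
  have : PhiL L U D = Phi ι U D ∘ₗ Finsupp.mapRange.linearMap (Algebra.linearMap L E) := by
    refine Finsupp.lhom_ext fun ⟨i, j⟩ g => ?_
    simp [PhiL, Algebra.ofId_apply]
  exact LinearMap.congr_fun this F

/-- elements of degree `≤ m` with scalar coefficients -/
def TL (L : Type) [Field L] {R : Type} [Ring R] [Algebra L R] (U D : R) (m : ℕ) : Submodule L R :=
  (Finsupp.supported L L (Tset m : Set (ℕ × ℕ))).map (PhiL L U D)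

theorem TL_le (m : ℕ) : TL L U D m ≤ TT ι U D m := by
  rintro _ ⟨F, hF, rfl⟩
  rw [PhiL_eq (ι := ι)]
  refine ⟨_, ?_, rfl⟩
  rw [SetLike.mem_coe, Finsupp.mem_supported] at *
  exact fun p hp => hF (Finsupp.support_mapRange hp)

theorem mul_TL_ne (hp : PBW σ w μ ε ι U D) (he : EDat σ w μ n ζ) {q x : R} {m : ℕ} (hq : q ≠ 0)
    (hx : x ∈ TL L U D m) (hx0 : x ≠ 0) : q * x ≠ 0 := by
  have := he.nontriv
  obtain ⟨F, rfl⟩ := hp.surj q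
  obtain ⟨i, j, h1, h2⟩ := exists_lead (ι := ι) (U := U) (D := D) F (by rintro rfl; simp at hq)
  obtain ⟨G, hG, rfl⟩ := hx
  rw [PhiL_eq (ι := ι)] at hx0 ⊢
  obtain ⟨a, b, h3, h4⟩ := exists_lead (ι := ι) (U := U) (D := D)
    (G.mapRange (algebraMap L E) (map_zero _)) (by rintro h0; apply hx0; rw [h0, map_zero])
  refine (h2.mul hp.toDURel h4).ne_zero hp.inj ?_
  rw [Finsupp.mapRange_apply] at h3 ⊢
  rw [AlgHom.commutes, mul_comm ((σ ^ a) _), ← Algebra.smul_def, smul_smul]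
  refine smul_ne_zero (mul_ne_zero (pow_ne_zero _ he.mu_ne) ?_) (he.sig_pow_ne _ h1)
  rintro h0; rw [h0] at h3; simp at h3

theorem lead_unit_reg (hp : PBW σ w μ ε ι U D) (he : EDat σ w μ n ζ) {q : R} {i j : ℕ} {f : E}
    (hq : HasLead ι U D q i j f) (hf : IsUnit f) {x : R} (hx : q * x = 0) : x = 0 := by
  by_contra hx0
  obtain ⟨F, rfl⟩ := hp.surj x
  obtain ⟨a, b, h3, h4⟩ := exists_lead (ι := ι) (U := U) (D := D) F
    (by intro h0; rw [h0] at hx0; simp at hx0)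
  refine (hq.mul hp.toDURel h4).ne_zero hp.inj ?_ hx
  refine smul_ne_zero (pow_ne_zero _ he.mu_ne) ?_
  rw [Ne, (hf.map (σ ^ a)).mul_right_eq_zero]
  exact he.sig_pow_ne _ h3

theorem finrank_supp (M : Type) [AddCommGroup M] [Module L M] [FiniteDimensional L M]
    (s : Finset (ℕ × ℕ)) : FiniteDimensional L (Finsupp.supported M L (s : Set (ℕ × ℕ))) ∧
    Module.finrank L (Finsupp.supported M L (s : Set (ℕ × ℕ))) = s.card * Module.finrank L M := by
  let e := Finsupp.supportedEquivFinsupp (M := M) (R := L) (s : Set (ℕ × ℕ))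
  have : Finite (s : Set (ℕ × ℕ)) := inferInstance
  constructor
  · exact Module.Finite.equiv e.symm
  · rw [e.finrank_eq, Module.finrank_finsupp]; simp

theorem TT_fin (he : EDat σ w μ n ζ) (m : ℕ) : FiniteDimensional L (TT ι U D m) := by
  have := he.fin
  have := (finrank_supp (L := L) E (Tset m)).1
  unfold TT Fil
  infer_instance

theorem TT_finrank (hp : PBW σ w μ ε ι U D) (he : EDat σ w μ n ζ) (m : ℕ) :
    Module.finrank L (TT ι U D m) = n * tri m := by
  have := he.fin
  rw [TT, Fil, ← (Submodule.equivMapOfInjective _ hp.inj _).finrank_eq, (finrank_supp E _).2, he.fr, card_Tset, mul_comm]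

theorem TL_finrank (hp : PBW σ w μ ε ι U D) (he : EDat σ w μ n ζ) (m : ℕ) :
    Module.finrank L (TL L U D m) = 1 * tri m := by
  have := he.nontriv
  have hi : Function.Injective (PhiL L U D) := by
    intro F G h
    rw [PhiL_eq (ι := ι), PhiL_eq (ι := ι)] at h
    exact Finsupp.mapRange_injective _ _ (algebraMap L E).injective (hp.inj h)
  rw [TL, ← (Submodule.equivMapOfInjective _ hi _).finrank_eq, (finrank_supp L _).2, card_Tset]; simp

/-- growth of `Q` relative to `P` -/
def Grow (ι : E →ₐ[L] R) (U D : R) (P Q : Submodule L R) (k : ℕ) : Prop :=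
  ∃ c : ℕ, ∀ m, Module.finrank L ↥(P ⊓ TT ι U D m) + k * tri m
    ≤ Module.finrank L ↥(Q ⊓ TT ι U D m) + c * (m + 1)

theorem finrank_mono (he : EDat σ w μ n ζ) {P Q : Submodule L R} (h : P ≤ Q) (m : ℕ) :
    Module.finrank L ↥(P ⊓ TT ι U D m) ≤ Module.finrank L ↥(Q ⊓ TT ι U D m) := by
  have := TT_fin (ι := ι) (U := U) (D := D) he m
  have : FiniteDimensional L ↥(Q ⊓ TT ι U D m) := Submodule.finiteDimensional_inf_right _ _
  exact Submodule.finrank_mono (inf_le_inf_right _ h)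

theorem Grow.trans {P Q S : Submodule L R} {k l : ℕ} (h1 : Grow ι U D P Q k)
    (h2 : Grow ι U D Q S l) : Grow ι U D P S (k + l) := by
  obtain ⟨c, hc⟩ := h1
  obtain ⟨d, hd⟩ := h2
  refine ⟨c + d, fun m => ?_⟩
  have := hc m
  have := hd m
  nlinarith

theorem Grow.mono (he : EDat σ w μ n ζ) {P P' Q Q' : Submodule L R} {k : ℕ}
    (h : Grow ι U D P' Q k) (h1 : P ≤ P') (h2 : Q ≤ Q') : Grow ι U D P Q' k := by
  obtain ⟨c, hc⟩ := h
  refine ⟨c, fun m => ?_⟩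
  have := hc m
  have := finrank_mono (ι := ι) (U := U) (D := D) he h1 m
  have := finrank_mono (ι := ι) (U := U) (D := D) he h2 m
  omega

theorem gain (hp : PBW σ w μ ε ι U D) (he : EDat σ w μ n ζ) {P Q X : Submodule L R} {v : R}
    {m e : ℕ} (hPQ : P ≤ Q) (hX : X ≤ TT ι U D m) (hv : v ∈ TT ι U D e)
    (hXP : ∀ x ∈ X, v * x ∈ P → x = 0) (hXQ : ∀ x ∈ X, v * x ∈ Q) :
    Module.finrank L X + Module.finrank L ↥(P ⊓ TT ι U D (e + m))
      ≤ Module.finrank L ↥(Q ⊓ TT ι U D (e + m)) := by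
  have := TT_fin (ι := ι) (U := U) (D := D) he
  have i1 : ∀ Q : Submodule L R, FiniteDimensional L ↥(Q ⊓ TT ι U D (e + m)) :=
    fun Q => Submodule.finiteDimensional_inf_right _ _
  have i2 : FiniteDimensional L X := Submodule.finiteDimensional_of_le hX
  set Y := X.map (LinearMap.mulLeft L v) with hY
  have e1 : Module.finrank L Y = Module.finrank L X := by
    have : Function.Injective ((LinearMap.mulLeft L v).domRestrict X) := by
      rw [← LinearMap.ker_eq_bot, LinearMap.ker_eq_bot']
      intro x hx
      apply Subtype.ext
      exact hXP x x.2 (by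
        have : v * (x : R) = 0 := hx
        rw [this]; exact zero_mem _)
    rw [hY, ← LinearMap.range_domRestrict]
    exact LinearMap.finrank_range_of_inj this
  have e2 : Y ⊓ (P ⊓ TT ι U D (e + m)) = ⊥ := by
    rw [eq_bot_iff]
    rintro _ ⟨⟨x, hx, rfl⟩, h2, _⟩
    rw [hXP x hx h2]; simp
  have e3 : Y ⊔ (P ⊓ TT ι U D (e + m)) ≤ Q ⊓ TT ι U D (e + m) := by
    refine sup_le ?_ (inf_le_inf_right _ hPQ)
    rintro _ ⟨x, hx, rfl⟩
    exact ⟨hXQ x hx, hp.toDURel.TT_mul hv (hX hx)⟩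
  have e4 := Submodule.finrank_sup_add_finrank_inf_eq Y (P ⊓ TT ι U D (e + m))
  rw [e2, finrank_bot, add_zero, e1] at e4
  rw [← e4]
  exact Submodule.finrank_mono e3

theorem grow_of (hp : PBW σ w μ ε ι U D) (he : EDat σ w μ n ζ) {P Q : Submodule L R} {v : R}
    {k : ℕ} (X : ℕ → Submodule L R) (hX : ∀ m, X m ≤ TT ι U D m)
    (hXk : ∀ m, Module.finrank L (X m) = k * tri m)
    (hPQ : P ≤ Q)
    (hXP : ∀ m, ∀ x ∈ X m, v * x ∈ P → x = 0) (hXQ : ∀ m, ∀ x ∈ X m, v * x ∈ Q) :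
    Grow ι U D P Q k := by
  obtain ⟨e, he'⟩ := Tset_exhaust hp.surj v
  refine ⟨k * e, fun m => ?_⟩
  rcases lt_or_ge m e with h | h
  · have := tri_small h
    have := finrank_mono (ι := ι) (U := U) (D := D) he hPQ m
    nlinarith
  · obtain ⟨m', rfl⟩ := Nat.exists_eq_add_of_le h
    have h1 := gain hp he hPQ (hX m') he' (hXP m') (hXQ m')
    have h2 := tri_shift m' e
    rw [hXk] at h1
    have h3 : k * tri (e + m') ≤ k * (tri m' + e * (m' + e + 1)) := by
      rw [add_comm e m']; exact Nat.mul_le_mul_left k h2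
    have h4 : k * (tri m' + e * (m' + e + 1)) = k * tri m' + k * e * (e + m' + 1) := by ring
    omega

theorem grow_one (hp : PBW σ w μ ε ι U D) (he : EDat σ w μ n ζ) {P Q : Submodule L R} {v : R}
    (hPQ : P ≤ Q) (hXP : ∀ m, ∀ x ∈ TL L U D m, v * x ∈ P → x = 0) (hXQ : ∀ x, v * x ∈ Q) :
    Grow ι U D P Q 1 :=
  grow_of hp he (TL L U D) TL_le (TL_finrank hp he) hPQ hXP (fun _ x _ => hXQ x)

theorem grow_reg (hp : PBW σ w μ ε ι U D) (he : EDat σ w μ n ζ) {Q : Submodule L R} {v : R}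
    (hv : ∀ x, v * x = 0 → x = 0) (hXQ : ∀ x, v * x ∈ Q) :
    Grow ι U D ⊥ Q n :=
  grow_of hp he (TT ι U D) (fun _ => le_rfl) (TT_finrank hp he) bot_le
    (fun _ x _ h => hv x (by simpa using h)) (fun _ x _ => hXQ x)

theorem Grow.le (hp : PBW σ w μ ε ι U D) (he : EDat σ w μ n ζ) {P Q : Submodule L R} {k : ℕ}
    (h : Grow ι U D P Q k) : k ≤ n := by
  by_contra! hk
  obtain ⟨c, hc⟩ := h
  have h1 := hc (2 * c)
  have h2 : Module.finrank L ↥(Q ⊓ TT ι U D (2 * c)) ≤ n * tri (2 * c) := by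
    rw [← TT_finrank hp he]
    have := TT_fin (ι := ι) (U := U) (D := D) he (2 * c)
    exact Submodule.finrank_mono inf_le_right
  have h3 := two_tri (2 * c)
  have h4 : (n + 1) * tri (2 * c) ≤ k * tri (2 * c) := Nat.mul_le_mul_right _ hk
  nlinarith

end Growth
end DUP

namespace DUP
open MulOpposite

section RIdeal
variable {R : Type} [Ring R]

/-- left multiplication as a map of right modules -/
def lm (v : R) : R →ₗ[Rᵐᵒᵖ] R where
  toFun x := v * x
  map_add' := mul_add v
  map_smul' r x := by simp [mul_assoc]

@[simp] theorem lm_apply (v x : R) : lm v x = v * x := rfl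

theorem rmul {I : Submodule Rᵐᵒᵖ R} {x : R} (h : x ∈ I) (r : R) : x * r ∈ I :=
  I.smul_mem (op r) h

/-- principal right ideal -/
def prin (v : R) : Submodule Rᵐᵒᵖ R := LinearMap.range (lm v)

theorem mem_prin {v x : R} : x ∈ prin v ↔ ∃ r, v * r = x := Iff.rfl

theorem self_mem_prin (v : R) : v ∈ prin v := ⟨1, mul_one v⟩

theorem prin_le {v : R} {I : Submodule Rᵐᵒᵖ R} : prin v ≤ I ↔ v ∈ I :=
  ⟨fun h => h (self_mem_prin v), fun h => by rintro _ ⟨r, rfl⟩; exact rmul h r⟩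

/-- closed under left multiplication -/
def Lcl (I : Submodule Rᵐᵒᵖ R) : Prop := ∀ r x : R, x ∈ I → r * x ∈ I

/-- the intersection of all nonzero two-sided ideals -/
def JJ (R : Type) [Ring R] : Submodule Rᵐᵒᵖ R := sInf {I | Lcl I ∧ I ≠ ⊥}

theorem JJ_le {I : Submodule Rᵐᵒᵖ R} (h : Lcl I) (h0 : I ≠ ⊥) : JJ R ≤ I := sInf_le ⟨h, h0⟩

theorem JJ_lcl : Lcl (JJ R) := by
  intro r x hx
  rw [JJ, Submodule.mem_sInf] at *
  exact fun I hI => hI.1 r x (hx I hI)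

/-- two-sided ideal generated by a right ideal -/
def gen2 (I : Submodule Rᵐᵒᵖ R) : Submodule Rᵐᵒᵖ R := ⨆ s : R, I.map (lm s)

theorem gen2_lcl (I : Submodule Rᵐᵒᵖ R) : Lcl (gen2 I) := by
  intro r x hx
  have : gen2 I ≤ (gen2 I).comap (lm r) := by
    refine iSup_le fun s => ?_
    rintro _ ⟨y, hy, rfl⟩
    refine Submodule.mem_iSup_of_mem (r * s) ⟨y, hy, ?_⟩
    simp [mul_assoc]
  exact this hx

theorem mul_mem_gen2 {I : Submodule Rᵐᵒᵖ R} {x : R} (s : R) (h : x ∈ I) : s * x ∈ gen2 I :=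
  Submodule.mem_iSup_of_mem s ⟨x, h, rfl⟩

theorem le_gen2 (I : Submodule Rᵐᵒᵖ R) : I ≤ gen2 I := fun x hx => by
  simpa using mul_mem_gen2 1 hx

theorem gen2_le {I X : Submodule Rᵐᵒᵖ R} (h : ∀ s, ∀ x ∈ I, s * x ∈ X) : gen2 I ≤ X := by
  refine iSup_le fun s => ?_
  rintro _ ⟨y, hy, rfl⟩
  exact h s y hy

end RIdeal

/-- the main hypothesis -/
def HH {R : Type} [Ring R] (U D : R) : Prop :=
  ∃ N, ∀ I : Submodule Rᵐᵒᵖ R, Lcl I → I ≠ ⊥ → U ^ N ∈ I ∧ D ^ N ∈ I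

section Main
variable {L E : Type} [Field L] [CommRing E] [Algebra L E]
variable {R : Type} [Ring R] [Algebra L R]
variable {σ : E →ₐ[L] E} {w : E} {μ ε : L} {ι : E →ₐ[L] R} {U D : R} {n : ℕ} {ζ : L}

theorem Upow_TL (N : ℕ) : U ^ N ∈ TL L U D N := by
  refine ⟨Finsupp.single (N, 0) 1, ?_, ?_⟩
  · rw [SetLike.mem_coe, Finsupp.mem_supported]
    refine (Finset.coe_subset.2 Finsupp.support_single_subset).trans ?_
    simp [mem_Tset]
  · simp [PhiL]

theorem R_nontriv (hp : PBW σ w μ ε ι U D) (he : EDat σ w μ n ζ) : Nontrivial R := by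
  have := he.nontriv
  exact (hp.inj).nontrivial

theorem Upow_ne (hp : PBW σ w μ ε ι U D) (he : EDat σ w μ n ζ) (N : ℕ) : U ^ N ≠ 0 := by
  have := he.nontriv
  have h : U ^ N = Phi ι U D (Finsupp.single (N, 0) 1) := by simp
  rw [h]
  intro h0
  rw [← map_zero (Phi ι U D)] at h0
  have := hp.inj h0
  simp at this

theorem not_fin (hp : PBW σ w μ ε ι U D) (he : EDat σ w μ n ζ) : ¬ FiniteDimensional L R := by
  intro hf
  have h1 := TT_finrank hp he (2 * Module.finrank L R)
  have h2 := Submodule.finrank_le (TT ι U D (2 * Module.finrank L R))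
  have h3 := two_tri (2 * Module.finrank L R)
  have := he.npos
  nlinarith

variable (hp : PBW σ w μ ε ι U D) (he : EDat σ w μ n ζ) (hH : HH U D)
include hp he hH

theorem Upow_JJ : ∃ N, U ^ N ∈ JJ R ∧ D ^ N ∈ JJ R := by
  obtain ⟨N, hN⟩ := hH
  refine ⟨N, ?_, ?_⟩ <;> rw [JJ, Submodule.mem_sInf]
  · exact fun I hI => (hN I hI.1 hI.2).1
  · exact fun I hI => (hN I hI.1 hI.2).2

theorem JJ_idem {I : Submodule Rᵐᵒᵖ R} (h : ∀ x ∈ JJ R, ∀ y ∈ JJ R, x * y ∈ I) : JJ R ≤ I := by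
  obtain ⟨N, hN, -⟩ := Upow_JJ hp he hH
  let P : Submodule Rᵐᵒᵖ R := ⨆ x : JJ R, (JJ R).map (lm (x : R))
  have h1 : P ≤ I := by
    refine iSup_le fun x => ?_
    rintro _ ⟨y, hy, rfl⟩
    exact h x x.2 y hy
  refine (JJ_le (I := P) ?_ ?_).trans h1
  · intro r x hx
    have : P ≤ P.comap (lm r) := by
      refine iSup_le fun s => ?_
      rintro _ ⟨y, hy, rfl⟩
      refine Submodule.mem_iSup_of_mem ⟨r * s, JJ_lcl r _ s.2⟩ ⟨y, hy, ?_⟩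
      simp [mul_assoc]
    exact this hx
  · intro h0
    have : U ^ N * U ^ N ∈ P := Submodule.mem_iSup_of_mem ⟨_, hN⟩ ⟨_, hN, rfl⟩
    rw [h0, Submodule.mem_bot, ← pow_add] at this
    exact Upow_ne hp he _ this

theorem prime_aux {ν : R} (hν : ν ≠ 0) {I : Submodule Rᵐᵒᵖ R} (hI : I ≠ ⊥) :
    ∃ s, ∃ x ∈ I, ν * s * x ≠ 0 := by
  by_contra! h
  obtain ⟨N, hN, -⟩ := Upow_JJ hp he hH
  have h1 : gen2 I ≤ (⊥ : Submodule Rᵐᵒᵖ R).comap (lm ν) := gen2_le fun s x hx => by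
    simpa [mul_assoc] using h s x hx
  have h2 : gen2 I ≠ ⊥ := fun h0 => hI (by rw [eq_bot_iff, ← h0]; exact le_gen2 I)
  have h3 := h1 (JJ_le (gen2_lcl I) h2 hN)
  exact mul_TL_ne hp he hν (Upow_TL N) (Upow_ne hp he N) (by simpa using h3)

/-- right ideals of finite codimension contain `JJ` -/
theorem fincodim {I : Submodule Rᵐᵒᵖ R} {m : ℕ}
    (h : ∀ x : R, ∃ y ∈ TT ι U D m, x - y ∈ I) : JJ R ≤ I := by
  let I' : Submodule Rᵐᵒᵖ R := ⨅ x : R, I.comap (lm x)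
  have hI' : ∀ {r}, r ∈ I' ↔ ∀ x, x * r ∈ I := by
    intro r; simp [I', Submodule.mem_iInf]
  have h1 : I' ≤ I := fun x hx => by simpa using hI'.1 hx 1
  refine (JJ_le (I := I') ?_ ?_).trans h1
  · intro r x hx
    rw [hI'] at *
    intro y; rw [← mul_assoc]; exact hx _
  · intro h0
    have i1 := TT_fin (ι := ι) (U := U) (D := D) he m
    let V := R ⧸ (I.restrictScalars L)
    have i2 : FiniteDimensional L V := by
      refine Module.Finite.of_surjective (((I.restrictScalars L).mkQ).domRestrict (TT ι U D m)) ?_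
      intro v
      obtain ⟨x, rfl⟩ := Submodule.mkQ_surjective _ v
      obtain ⟨y, hy, hxy⟩ := h x
      refine ⟨⟨y, hy⟩, ?_⟩
      symm
      exact (Submodule.Quotient.eq _).2 hxy
    let f : R →ₗ[L] (TT ι U D m →ₗ[L] V) :=
      (((LinearMap.mul L R).compr₂ (I.restrictScalars L).mkQ).domRestrict (TT ι U D m)).flip
    have hf : Function.Injective f := by
      rw [← LinearMap.ker_eq_bot, LinearMap.ker_eq_bot']
      intro r hr
      have : r ∈ I' := by
        rw [hI']
        intro x
        obtain ⟨y, hy, hxy⟩ := h x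
        have h2 : f r ⟨y, hy⟩ = 0 := by rw [hr]; rfl
        have h3 : y * r ∈ I := (Submodule.Quotient.mk_eq_zero (I.restrictScalars L)).1 h2
        have h4 := rmul hxy r
        have := I.add_mem h4 h3
        rwa [sub_mul, sub_add_cancel] at this
      rw [h0] at this
      simpa using this
    exact not_fin hp he (Module.Finite.of_injective f hf)

theorem colin {I : Submodule Rᵐᵒᵖ R} (h : ¬ JJ R ≤ I) (m : ℕ) :
    Module.finrank L ↥(I.restrictScalars L ⊓ TT ι U D m) + (m + 1) ≤
      Module.finrank L (TT ι U D m) := by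
  have i1 := TT_fin (ι := ι) (U := U) (D := D) he
  let q := (I.restrictScalars L).mkQ
  let V := fun m => (TT ι U D m).map q
  have i2 : ∀ m, FiniteDimensional L (V m) := fun m => inferInstance
  have hone : (1 : R) ∈ TT ι U D 0 := by
    have := TL_le (ι := ι) _ (Upow_TL (L := L) (U := U) (D := D) 0)
    simpa using this
  have hmono : ∀ m, TT ι U D m ≤ TT ι U D (m + 1) := fun m => by
    apply Fil_mono
    intro p; simp only [Finset.mem_coe, mem_Tset]; omega
  have hle : ∀ m, V m ≤ V (m + 1) := fun m => Submodule.map_mono (hmono m)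
  have hone' : ∀ m, (1 : R) ∈ TT ι U D m := by
    intro m
    induction m with
    | zero => exact hone
    | succ m ih => exact hmono m ih
  have hU : U ∈ TT ι U D 1 := by
    have := TL_le (ι := ι) _ (Upow_TL (L := L) (U := U) (D := D) 1)
    simpa using this
  have hD : D ∈ TT ι U D 1 := by
    refine ⟨Finsupp.single (0, 1) 1, ?_, by simp⟩
    rw [SetLike.mem_coe, Finsupp.mem_supported]
    refine (Finset.coe_subset.2 Finsupp.support_single_subset).trans ?_
    simp [mem_Tset]
  have hmemV : ∀ m x, q x ∈ V m ↔ ∃ y ∈ TT ι U D m, x - y ∈ I := by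
    intro m x
    constructor
    · rintro ⟨y, hy, hxy⟩
      exact ⟨y, hy, (Submodule.Quotient.eq (I.restrictScalars L)).1 hxy.symm⟩
    · rintro ⟨y, hy, hxy⟩
      exact ⟨y, hy, ((Submodule.Quotient.eq (I.restrictScalars L)).2 hxy).symm⟩
  have hne : ∀ m, V m ≠ V (m + 1) := by
    intro m hV
    apply h
    apply fincodim hp he hH (m := m)
    let W : Submodule L R := (V m).comap q
    have hW : ∀ t ∈ TT ι U D 1, ∀ x ∈ W, x * t ∈ W := by
      intro t ht x hx
      obtain ⟨y, hy, hxy⟩ := (hmemV m x).1 hx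
      change q (x * t) ∈ V m
      rw [hV, hmemV]
      exact ⟨y * t, hp.toDURel.TT_mul hy ht, by rw [← sub_mul]; exact rmul hxy t⟩
    let S : Subalgebra L R :=
      { carrier := {t | ∀ x ∈ W, x * t ∈ W}
        mul_mem' := fun {a b} ha hb x hx => by
          rw [← mul_assoc]; exact hb _ (ha x hx)
        add_mem' := fun {a b} ha hb x hx => by
          rw [mul_add]; exact W.add_mem (ha x hx) (hb x hx)
        algebraMap_mem' := fun r x hx => by
          rw [← Algebra.commutes, ← Algebra.smul_def]; exact W.smul_mem r hx }
    have hS : S = ⊤ := by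
      rw [eq_top_iff, ← hp.gen]
      refine Algebra.adjoin_le ?_
      rintro t (rfl | rfl)
      · exact hW _ hU
      · exact hW _ hD
    intro x
    have hx : x ∈ S := by rw [hS]; trivial
    have : 1 * x ∈ W := hx 1 ((hmemV m 1).2 ⟨1, hone' m, by simp⟩)
    rw [one_mul] at this
    exact (hmemV m x).1 this
  have hV0 : V 0 ≠ ⊥ := by
    intro hV
    apply h
    have : q 1 ∈ V 0 := (hmemV 0 1).2 ⟨1, hone, by simp⟩
    rw [hV, Submodule.mem_bot] at this
    have h1 : (1 : R) ∈ I := (Submodule.Quotient.mk_eq_zero (I.restrictScalars L)).1 this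
    intro x _
    simpa using rmul h1 x
  have hrank : ∀ m, m + 1 ≤ Module.finrank L (V m) := by
    intro m
    induction m with
    | zero =>
      have : Nontrivial (V 0) := Submodule.nontrivial_iff_ne_bot.2 hV0
      exact Module.finrank_pos
    | succ m ih =>
      have := Submodule.finrank_lt_finrank_of_lt (lt_of_le_of_ne (hle m) (hne m))
      omega
  have h5 := LinearMap.finrank_range_add_finrank_ker (q.domRestrict (TT ι U D m))
  rw [LinearMap.range_domRestrict] at h5
  have h6 : Module.finrank L (LinearMap.ker (q.domRestrict (TT ι U D m))) =
      Module.finrank L ↥(I.restrictScalars L ⊓ TT ι U D m) := by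
    rw [LinearMap.ker_domRestrict, Submodule.ker_mkQ, inf_comm, ← Submodule.map_comap_subtype]
    exact (Submodule.equivMapOfInjective _ (Submodule.injective_subtype _) _).finrank_eq
  have := hrank m
  have h7 : Module.finrank L ↥(Submodule.map q (TT ι U D m)) = Module.finrank L (V m) := rfl
  omega

omit hp he hH in
/-- linear depth -/
def Dep (ι : E →ₐ[L] R) (U D : R) (P : Submodule Rᵐᵒᵖ R) (k : ℕ) : Prop :=
  ∃ e : ℕ, ∀ m, Module.finrank L ↥(P.restrictScalars L ⊓ TT ι U D m) + k * (m + 1) ≤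
    Module.finrank L (TT ι U D m) + e

theorem Dep_succ {P Q : Submodule Rᵐᵒᵖ R} (hPQ : P ≤ Q) {v : R} (hv : v ∈ Q)
    (hvP : ¬ JJ R ≤ P.comap (lm v)) {k : ℕ} (h : Dep ι U D Q k) : Dep ι U D P (k + 1) := by
  have i1 := TT_fin (ι := ι) (U := U) (D := D) he
  obtain ⟨e, hv'⟩ := Tset_exhaust hp.surj v
  obtain ⟨c, hc⟩ := h
  refine ⟨c + e, fun m => ?_⟩
  have hPQ' : P.restrictScalars L ≤ Q.restrictScalars L := hPQ
  rcases lt_or_ge m e with hm | hm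
  · have h1 := finrank_mono (ι := ι) (U := U) (D := D) he hPQ' m
    have h2 := hc m
    nlinarith
  · obtain ⟨m', rfl⟩ := Nat.exists_eq_add_of_le hm
    set K := (P.comap (lm v)).restrictScalars L ⊓ TT ι U D m' with hK
    have h1 : Module.finrank L K + (m' + 1) ≤ _ := colin hp he hH hvP m'
    obtain ⟨X0, hX0⟩ := Submodule.exists_isCompl (K.comap (TT ι U D m').subtype)
    have hd := Submodule.finrank_add_eq_of_isCompl hX0
    have hd1 : Module.finrank L (K.comap (TT ι U D m').subtype) = Module.finrank L K := by
      have : K = (K.comap (TT ι U D m').subtype).map (TT ι U D m').subtype := by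
        rw [Submodule.map_comap_subtype, hK]; simp
      conv_rhs => rw [this]
      exact (Submodule.equivMapOfInjective _ (Submodule.injective_subtype _) _).finrank_eq
    have hd2 : Module.finrank L (X0.map (TT ι U D m').subtype) = Module.finrank L X0 :=
      (Submodule.equivMapOfInjective _ (Submodule.injective_subtype _) _).finrank_eq.symm
    have h3 := gain hp he hPQ' (X := X0.map (TT ι U D m').subtype) (m := m')
      (Submodule.map_subtype_le _ _) hv' (by
        rintro _ ⟨x, hx, rfl⟩ hvx
        have : x ∈ K.comap (TT ι U D m').subtype := ⟨hvx, x.2⟩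
        have h0 := (Submodule.disjoint_def.1 hX0.disjoint) x this hx
        rw [h0]; simp) (by
        rintro _ ⟨x, hx, rfl⟩
        exact rmul hv _)
    have h4 := hc (e + m')
    nlinarith

end Main
end DUP

namespace DUP
open MulOpposite

section Main
variable {L E : Type} [Field L] [CommRing E] [Algebra L E]
variable {R : Type} [Ring R] [Algebra L R]
variable {σ : E →ₐ[L] E} {w : E} {μ ε : L} {ι : E →ₐ[L] R} {U D : R} {n : ℕ} {ζ : L}

/-- large right ideals -/
def LG (ι : E →ₐ[L] R) (U D : R) (n : ℕ) (P : Submodule Rᵐᵒᵖ R) : Prop :=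
  Grow ι U D ⊥ (P.restrictScalars L) n

theorem LG.mono (he : EDat σ w μ n ζ) {P Q : Submodule Rᵐᵒᵖ R} (h : LG ι U D n P) (hPQ : P ≤ Q) :
    LG ι U D n Q := Grow.mono he h le_rfl hPQ

theorem LG.dep (hp : PBW σ w μ ε ι U D) (he : EDat σ w μ n ζ) {P : Submodule Rᵐᵒᵖ R}
    (h : LG ι U D n P) : ∃ c, ∀ k, Dep ι U D P k → k ≤ c := by
  obtain ⟨c, hc⟩ := h
  refine ⟨c, fun k ⟨e, hk⟩ => ?_⟩
  by_contra! hlt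
  have h1 := hc e
  have h2 := hk e
  rw [TT_finrank hp he] at h2
  nlinarith

variable (hp : PBW σ w μ ε ι U D) (he : EDat σ w μ n ζ) (hH : HH U D)
include hp he

theorem LG.comap_ne {P : Submodule Rᵐᵒᵖ R} (h : LG ι U D n P) (b : R) : P.comap (lm b) ≠ ⊥ := by
  intro h0
  have h1 : Grow ι U D (P.restrictScalars L) ⊤ n := by
    refine grow_of hp he (v := b) (TT ι U D) (fun _ => le_rfl) (TT_finrank hp he) le_top ?_
      (fun _ _ _ => trivial)
    intro m x _ hx
    have : x ∈ P.comap (lm b) := hx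
    rw [h0] at this
    simpa using this
  have := Grow.le hp he (Grow.trans h h1)
  have := he.npos
  omega

include hH

theorem LT_aux (d : R) (𝒥 : AddSubgroup R) (h𝒥 : ∀ j ∈ 𝒥, j ∈ JJ R)
    (hsc : ∀ j ∈ JJ R, ∃ l : L, l ≠ 0 ∧ l • j ∈ 𝒥) (c : ℕ) :
    ∀ (I0 : Submodule Rᵐᵒᵖ R) (b : R), LG ι U D n I0 → (∀ k, Dep ι U D I0 k → k ≤ c) →
    ∃ j ∈ 𝒥, ∀ x ∈ I0 ⊔ prin b ⊔ (JJ R).map (lm d), ∀ y ∈ JJ R, x * y ∈ I0 ⊔ prin (b + d * j) := by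
  induction c using Nat.strong_induction_on with
  | _ c IH =>
  intro I0 b hI0 hc
  by_cases hd : (JJ R).map (lm d) ≤ I0
  · refine ⟨0, 𝒥.zero_mem, fun x hx y _ => ?_⟩
    rw [mul_zero, add_zero]
    have : I0 ⊔ prin b ⊔ (JJ R).map (lm d) ≤ I0 ⊔ prin b := sup_le le_rfl (hd.trans le_sup_left)
    exact rmul (this hx) y
  have hdJ : ∃ v ∈ I0 ⊔ (JJ R).map (lm d), ¬ JJ R ≤ I0.comap (lm v) := by
    by_contra! h
    apply hd
    rw [Submodule.map_le_iff_le_comap]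
    refine JJ_idem hp he hH fun x hx y hy => ?_
    have := h (d * x) (Submodule.mem_sup_right ⟨x, hx, rfl⟩) hy
    simpa [mul_assoc] using this
  -- critical N
  let S : Set ℕ := {k | ∃ N : Submodule Rᵐᵒᵖ R, I0 ≤ N ∧ N ≤ I0 ⊔ (JJ R).map (lm d) ∧
    (∃ v ∈ N, ¬ JJ R ≤ I0.comap (lm v)) ∧ Dep ι U D N k}
  have hdep0 : ∀ N, Dep ι U D N 0 := fun N => ⟨0, fun m => by
    have i1 := TT_fin (ι := ι) (U := U) (D := D) he m
    simpa using Submodule.finrank_mono (inf_le_right)⟩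
  have hS1 : S.Nonempty := ⟨0, _, le_sup_left, le_rfl, hdJ, hdep0 _⟩
  have hS2 : ∀ k ∈ S, k + 1 ≤ c := by
    rintro k ⟨N, h1, h2, ⟨v, hv, hv'⟩, h4⟩
    exact hc _ (Dep_succ hp he hH h1 hv hv' h4)
  have hSb : BddAbove S := ⟨c, fun k hk => by have := hS2 k hk; omega⟩
  obtain ⟨N, hN1, hN2, hN3, hN4⟩ := Nat.sSup_mem hS1 hSb
  have hcpos := hS2 _ (Nat.sSup_mem hS1 hSb)
  have hcrit : ∀ X : Submodule Rᵐᵒᵖ R, I0 ≤ X → X ≤ N → (∃ v ∈ X, ¬ JJ R ≤ I0.comap (lm v)) →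
      ∀ v ∈ N, JJ R ≤ X.comap (lm v) := by
    intro X h1 h2 h3 v hv
    by_contra hv'
    have h4 := Dep_succ hp he hH h2 hv hv' hN4
    have : sSup S + 1 ∈ S := ⟨X, h1, h2.trans hN2, h3, h4⟩
    have := le_csSup hSb this
    omega
  obtain ⟨v0, hv0, hv0'⟩ := hN3
  obtain ⟨j1, hj1, hN⟩ := IH (c - 1) (by omega) N b (hI0.mono he hN1) (by
    intro k hk
    have := hc _ (Dep_succ hp he hH hN1 hv0 hv0' hk)
    omega)
  set b' := b + d * j1 with hb'
  obtain ⟨i0, hi0, dj, ⟨j, hj, rfl⟩, hv0e⟩ := Submodule.mem_sup.1 (hN2 hv0)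
  rw [lm_apply] at hv0e
  have hdjN : d * j ∈ N := by
    have : d * j = v0 - i0 := by rw [← hv0e]; abel
    rw [this]; exact N.sub_mem hv0 (hN1 hi0)
  have hdj : ¬ JJ R ≤ I0.comap (lm (d * j)) := by
    intro h
    apply hv0'
    intro y hy
    have h1 : d * j * y ∈ I0 := h hy
    change v0 * y ∈ I0
    rw [← hv0e, add_mul]
    exact I0.add_mem (rmul hi0 y) h1
  obtain ⟨s, r, hr, hsr⟩ : ∃ s r, r ∈ I0.comap (lm b') ∧ ¬ JJ R ≤ I0.comap (lm (d * j * s * r)) := by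
    by_contra! h
    apply hdj
    let Z : Submodule Rᵐᵒᵖ R :=
      { carrier := {x | ∀ y ∈ JJ R, d * j * x * y ∈ I0}
        add_mem' := fun {a b} ha hb y hy => by
          rw [mul_add, add_mul]; exact I0.add_mem (ha y hy) (hb y hy)
        zero_mem' := fun y _ => by simp
        smul_mem' := fun r x hx y hy => by
          have := hx (r.unop * y) (JJ_lcl _ _ hy)
          simpa [mul_assoc] using this }
    have hZ : gen2 (I0.comap (lm b')) ≤ Z := gen2_le fun s x hx y hy => by
      have := h s x hx hy
      simpa [mul_assoc] using this
    have hne : gen2 (I0.comap (lm b')) ≠ ⊥ := fun h0 =>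
      hI0.comap_ne hp he b' (by rw [eq_bot_iff, ← h0]; exact le_gen2 _)
    have hJZ : JJ R ≤ Z := (JJ_le (gen2_lcl _) hne).trans hZ
    refine JJ_idem hp he hH fun x hx y hy => ?_
    have := hJZ hx y hy
    simpa [mul_assoc] using this
  have hjs : j * s ∈ JJ R := rmul hj s
  obtain ⟨l, hl, hj2⟩ := hsc _ hjs
  set j2 := l • (j * s) with hj2e
  set ν := d * j2 with hν
  have hνe : ν = l • (d * j * s) := by rw [hν, hj2e, mul_smul_comm, mul_assoc]
  have hνN : ν ∈ N := by
    rw [hνe]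
    exact (N.restrictScalars L).smul_mem l (rmul hdjN s)
  have hνr : ¬ JJ R ≤ I0.comap (lm (ν * r)) := by
    intro h
    apply hsr
    intro y hy
    have h1 : ν * r * y ∈ I0 := h hy
    have h2 := (I0.restrictScalars L).smul_mem l⁻¹ h1
    rw [hνe, smul_mul_assoc, smul_mul_assoc, smul_smul, inv_mul_cancel₀ hl, one_smul] at h2
    exact h2
  have hX := hcrit (I0 ⊔ prin (ν * r)) le_sup_left
    (sup_le hN1 (prin_le.2 (rmul hνN r))) ⟨ν * r, Submodule.mem_sup_right (self_mem_prin _), hνr⟩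
  have hbj : b + d * (j1 + j2) = b' + ν := by rw [mul_add, ← add_assoc]
  set Z := I0 ⊔ prin (b' + ν) with hZ
  have hXZ : I0 ⊔ prin (ν * r) ≤ Z := by
    refine sup_le le_sup_left (prin_le.2 ?_)
    have : ν * r = (b' + ν) * r - b' * r := by rw [add_mul]; abel
    rw [this]
    refine Z.sub_mem (Submodule.mem_sup_right ⟨r, rfl⟩) (Submodule.mem_sup_left hr)
  refine ⟨j1 + j2, 𝒥.add_mem hj1 hj2, fun x hx => ?_⟩
  rw [hbj]
  have : JJ R ≤ Z.comap (lm x) := by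
    refine JJ_idem hp he hH fun y hy y' hy' => ?_
    have hx' : x ∈ N ⊔ prin b ⊔ (JJ R).map (lm d) :=
      sup_le_sup_right (sup_le_sup_right hN1 _) _ hx
    obtain ⟨v, hv, _, ⟨r', rfl⟩, hvr⟩ := Submodule.mem_sup.1 (hN x hx' y hy)
    change x * (y * y') ∈ Z
    rw [← mul_assoc, ← hvr, lm_apply, add_mul]
    have e1 : b' * r' * y' = (b' + ν) * (r' * y') - ν * r' * y' := by
      rw [add_mul b' ν, mul_assoc b', mul_assoc ν, add_sub_cancel_right]
    rw [e1]
    refine Z.add_mem (hXZ (hX v hv hy')) (Z.sub_mem (Submodule.mem_sup_right ⟨_, rfl⟩) ?_)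
    exact hXZ (hX (ν * r') (rmul hνN r') hy')
  exact fun y hy => this hy

theorem LT (b d : R) (𝒥 : AddSubgroup R) (h𝒥 : ∀ j ∈ 𝒥, j ∈ JJ R)
    (hsc : ∀ j ∈ JJ R, ∃ l : L, l ≠ 0 ∧ l • j ∈ 𝒥) (I0 : Submodule Rᵐᵒᵖ R) (h : LG ι U D n I0) :
    ∃ j ∈ 𝒥, ∀ x ∈ I0 ⊔ prin b ⊔ (JJ R).map (lm d), ∀ y ∈ JJ R, x * y ∈ I0 ⊔ prin (b + d * j) := by
  obtain ⟨c, hc⟩ := h.dep hp he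
  exact LT_aux hp he hH d 𝒥 h𝒥 hsc c I0 b h hc

theorem FR_aux (e : ℕ → R) (he0 : ∀ p < n, e p ≠ 0) (hee : ∀ p < n, e p * e p = e p)
    (heo : ∀ p < n, ∀ q < n, p ≠ q → e p * e q = 0)
    {b s y0 : R} (Y : Submodule Rᵐᵒᵖ R) (hy0 : y0 ∈ Y) (hb : b * s + y0 = 1)
    (hY : ∀ ν ∈ Y, ν ≠ 0 → prin ν ⊓ prin b ≠ ⊥) : LG ι U D n (prin b) := by
  have h1 : ∀ p, ∃ t ∈ prin b, p < n → t ≠ 0 ∧ ∃ r, t = e p * r := by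
    intro p
    by_cases hpn : p < n
    swap
    · exact ⟨0, Submodule.zero_mem _, fun h => absurd h hpn⟩
    by_cases h0 : y0 * e p = 0
    · refine ⟨e p, ⟨s * e p, ?_⟩, fun _ => ⟨he0 p hpn, 1, by simp⟩⟩
      rw [lm_apply, ← mul_assoc, eq_sub_of_add_eq hb, sub_mul, h0]; simp
    · obtain ⟨x, ⟨⟨r, hr⟩, hx⟩, hx0⟩ := Submodule.exists_mem_ne_zero_of_ne_bot
        (hY _ (rmul hy0 (e p)) h0)
      refine ⟨e p * r, ?_, fun _ => ⟨?_, r, rfl⟩⟩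
      · have : e p * r = b * (s * (e p * r)) + x := by
          rw [← hr, lm_apply, ← mul_assoc b s, mul_assoc y0 (e p) r, ← add_mul (b * s) y0, hb, one_mul]
        rw [this]
        exact Submodule.add_mem _ ⟨_, rfl⟩ hx
      · intro h00
        apply hx0
        rw [← hr, lm_apply, mul_assoc, h00, mul_zero]
  choose t ht ht' using h1
  have key : ∀ k ≤ n, Grow ι U D ⊥
      ((⨆ p ∈ Finset.range k, prin (t p)).restrictScalars L) k := by
    intro k
    induction k with
    | zero => exact fun _ => ⟨0, fun m => by
      rw [zero_mul, zero_mul]; exact finrank_mono (ι := ι) (U := U) (D := D) he bot_le m⟩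
    | succ k ih =>
      intro hk
      refine (ih (by omega)).trans (grow_one hp he (v := t k) ?_ ?_ ?_)
      · intro x hx
        refine (?_ : (⨆ p ∈ Finset.range k, prin (t p)) ≤ ⨆ p ∈ Finset.range (k + 1), prin (t p)) hx
        exact biSup_mono fun p hp => by simp at hp ⊢; omega
      · intro m x hx hxk
        by_contra hx0
        obtain ⟨htk, r, hr⟩ := ht' k (by omega)
        refine mul_TL_ne hp he htk hx hx0 ?_
        have h2 : (⨆ p ∈ Finset.range k, prin (t p)) ≤
            (⊥ : Submodule Rᵐᵒᵖ R).comap (lm (e k)) := by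
          refine iSup₂_le fun p hp => prin_le.2 ?_
          rw [Finset.mem_range] at hp
          obtain ⟨-, r', hr'⟩ := ht' p (by omega)
          change e k * t p = 0
          rw [hr', ← mul_assoc, heo k (by omega) p (by omega) (by omega), zero_mul]
        have h3 : e k * (t k * x) = 0 := h2 hxk
        rwa [hr, ← mul_assoc, ← mul_assoc, hee k (by omega), ← hr] at h3
      · intro x
        have : t k ∈ ⨆ p ∈ Finset.range (k + 1), prin (t p) :=
          Submodule.mem_iSup_of_mem k (Submodule.mem_iSup_of_mem (by simp) (self_mem_prin _))
        exact rmul this x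
  refine Grow.mono he (key n le_rfl) le_rfl ?_
  intro x hx
  exact (iSup₂_le fun p _ => prin_le.2 (ht p) : (⨆ p ∈ Finset.range n, prin (t p)) ≤ prin b) hx

theorem FR (e : ℕ → R) (he0 : ∀ p < n, e p ≠ 0) (hee : ∀ p < n, e p * e p = e p)
    (heo : ∀ p < n, ∀ q < n, p ≠ q → e p * e q = 0)
    {b s y0 : R} (Y : Submodule Rᵐᵒᵖ R) (hy0 : y0 ∈ Y) (hb : b * s + y0 = 1) :
    ∃ y ∈ Y, LG ι U D n (prin (b + y)) := by
  by_contra! hno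
  have key : ∀ k, ∃ y ∈ Y, Grow ι U D
      (((⊥ : Submodule Rᵐᵒᵖ R).comap (lm (b + y))).restrictScalars L) ⊤ k := by
    intro k
    induction k with
    | zero =>
      exact ⟨0, Y.zero_mem, 0, fun m => by
        rw [zero_mul, zero_mul]; exact finrank_mono (ι := ι) (U := U) (D := D) he le_top m⟩
    | succ k ih =>
      obtain ⟨y, hy, hk⟩ := ih
      set b' := b + y with hb'
      have hb1 : b' * s + (y0 - y * s) = 1 := by rw [hb', add_mul, ← hb]; abel
      have hy1 : y0 - y * s ∈ Y := Y.sub_mem hy0 (rmul hy s)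
      have hann : (⊥ : Submodule Rᵐᵒᵖ R).comap (lm b') ≠ ⊥ := by
        intro h0
        refine hno y hy (grow_reg hp he (v := b') ?_ ?_)
        · intro x hx
          have : x ∈ (⊥ : Submodule Rᵐᵒᵖ R).comap (lm b') := by simpa using hx
          rw [h0] at this
          simpa using this
        · exact fun x => ⟨x, rfl⟩
      obtain ⟨ν, hν, hν0, hνb⟩ : ∃ ν ∈ Y, ν ≠ 0 ∧ prin ν ⊓ prin b' = ⊥ := by
        by_contra! hY
        exact hno y hy (FR_aux hp he hH e he0 hee heo Y hy1 hb1 hY)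
      obtain ⟨c, i, hi, hci⟩ := prime_aux hp he hH hν0 hann
      have hi0 : b' * i = 0 := by simpa using hi
      refine ⟨y + ν * c, Y.add_mem hy (rmul hν c), ?_⟩
      have hbb : b + (y + ν * c) = b' + ν * c := by rw [hb', add_assoc]
      rw [hbb, add_comm k 1]
      refine Grow.trans (grow_one hp he (v := i) ?_ ?_ ?_) hk
      · intro r hr
        have hr' : (b' + ν * c) * r = 0 := by simpa using hr
        have h1 : b' * r = ν * (-(c * r)) := by
          rw [add_mul] at hr'
          rw [eq_neg_of_add_eq_zero_left hr', mul_neg, mul_assoc]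
        have h2 : b' * r ∈ prin ν ⊓ prin b' := ⟨⟨_, h1.symm⟩, ⟨r, rfl⟩⟩
        rw [hνb] at h2
        simpa using h2
      · intro m x hx hix
        by_contra hx0
        have h1 : (b' + ν * c) * (i * x) = 0 := by simpa using hix
        rw [← mul_assoc, add_mul, hi0, zero_add] at h1
        exact mul_TL_ne hp he hci hx hx0 h1
      · intro x
        exact rmul hi x
  obtain ⟨y, hy, hk⟩ := key (n + 1)
  have := hk.le hp he
  omega

end Main
end DUP

namespace DUP
open MulOpposite

section H1
variable {L E : Type} [Field L] [CommRing E] [Algebra L E]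
variable {R : Type} [Ring R] [Algebra L R]
variable {σ : E →ₐ[L] E} {w : E} {μ ε : L} {ι : E →ₐ[L] R} {U D : R} {n : ℕ} {ζ : L}

theorem EDat.mu_ne_one (he : EDat σ w μ n ζ) (hn : 2 ≤ n) : μ ≠ 1 := by
  rintro rfl
  have := he.prim.eq_orderOf
  rw [orderOf_one] at this
  omega

theorem cc_form (he : EDat σ w μ n ζ) (hn : 2 ≤ n) (m : ℕ) :
    cc w μ ε m = ((m : L) * μ⁻¹ * μ ^ m) • w + algebraMap L E (ε * ((μ ^ m - 1) / (μ - 1))) := by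
  have h1 := he.mu_ne_one hn
  have h2 := he.mu_ne
  cases m with
  | zero => simp [cc]
  | succ m =>
    rw [cc_closed, geom_sum_eq h1]
    congr 2
    rw [pow_succ']
    field_simp

theorem cc_n (he : EDat σ w μ n ζ) (hn : 2 ≤ n) : cc w μ ε n = ((n : L) * μ⁻¹) • w := by
  rw [cc_form he hn, he.prim.pow_eq_one]; simp

/-- small `D`-degree -/
def DS (k : ℕ) : Set (ℕ × ℕ) := {p | p.2 < k}

theorem U_DS (ι : E →ₐ[L] R) {U D : R} {k : ℕ} {x : R} (hx : x ∈ Fil ι U D (DS k)) : U * x ∈ Fil ι U D (DS k) := by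
  suffices H : Fil ι U D (DS k) ≤ (Fil ι U D (DS k)).comap (LinearMap.mulLeft L U) from H hx
  refine Fil_le _ _ _ fun i j f hij => ?_
  simp only [Submodule.mem_comap, LinearMap.mulLeft_apply]
  rw [← mul_assoc, ← pow_succ']
  exact mem_Fil ι U D (i := i + 1) (j := j) (s := DS k) hij f

theorem Upow_DS (ι : E →ₐ[L] R) {U D : R} {k : ℕ} {x : R} (a : ℕ) (hx : x ∈ Fil ι U D (DS k)) :
    U ^ a * x ∈ Fil ι U D (DS k) := by
  induction a with
  | zero => simpa using hx
  | succ a ih => rw [pow_succ', mul_assoc]; exact U_DS ι ih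

theorem D_DS (h : DURel σ w μ ε ι U D) {k : ℕ} {x : R} (hx : x ∈ Fil ι U D (DS k)) :
    D * x ∈ Fil ι U D (DS (k + 1)) := by
  suffices H : Fil ι U D (DS k) ≤ (Fil ι U D (DS (k + 1))).comap (LinearMap.mulLeft L D) from H hx
  refine Fil_le _ _ _ fun i j f hij => ?_
  simp only [Submodule.mem_comap, LinearMap.mulLeft_apply]
  rw [h.D_mon]
  simp only [DS, Set.mem_ofPred_eq] at hij
  exact add_mem (mem_Fil _ _ _ (by simp only [DS, Set.mem_ofPred_eq] at *; omega) _)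
    (mem_Fil _ _ _ (by simp only [DS, Set.mem_ofPred_eq] at *; omega) _)

theorem comm1 (h : DURel σ w μ ε ι U D) (he : EDat σ w μ n ζ) (hn : 2 ≤ n) (j : ℕ) :
    D ^ (j + 1) * U ^ n - U ^ n * D ^ (j + 1)
      - U ^ (n - 1) * (ι (((j + 1 : ℕ) * (n * μ⁻¹) : L) • w) * D ^ j) ∈ Fil ι U D (DS j) := by
  induction j with
  | zero =>
    have : D ^ (0 + 1) * U ^ n - U ^ n * D ^ (0 + 1)
      - U ^ (n - 1) * (ι (((0 + 1 : ℕ) * (n * μ⁻¹) : L) • w) * D ^ 0) = 0 := by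
      rw [zero_add, pow_one, h.DUpow, cc_n he hn, he.prim.pow_eq_one]; simp
    rw [this]; exact zero_mem _
  | succ j ih =>
    have h1 := D_DS h ih
    have h2 := h.D_mon n (j + 1) 1
    have h3 := h.D_mon (n - 1) j (((j + 1 : ℕ) * (n * μ⁻¹) : L) • w)
    have h4 : U ^ (n - 1 - 1) * (ι (cc w μ ε (n - 1) * (((j + 1 : ℕ) * (n * μ⁻¹) : L) • w)) * D ^ j)
      ∈ Fil ι U D (DS (j + 1)) := mem_Fil _ _ _ (by simp [DS]) _
    convert add_mem h1 h4 using 1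
    rw [mul_sub, mul_sub, h3]
    rw [map_one, one_mul] at h2
    rw [h2, cc_n he hn, he.prim.pow_eq_one, map_smul σ, h.sw, smul_smul, smul_smul]
    have h5 : μ ^ (n - 1) * (((j + 1 : ℕ) : L) * (n * μ⁻¹)) * μ = ((j + 1 : ℕ) : L) * (n * μ⁻¹) := by
      have : μ ^ (n - 1) * μ = 1 := by
        rw [← pow_succ, Nat.sub_add_cancel (by omega), he.prim.pow_eq_one]
      linear_combination (((j + 1 : ℕ) : L) * (n * μ⁻¹)) * this
    rw [h5]
    have h6 : ((j + 1 + 1 : ℕ) * (n * μ⁻¹) : L) = ((j + 1 : ℕ) * (n * μ⁻¹) : L) + n * μ⁻¹ := by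
      push_cast; ring
    rw [h6, add_smul, map_add ι, add_mul, mul_add, mul_one, pow_succ' D (j + 1)]
    simp only [one_smul, map_one, one_mul, mul_assoc]
    abel

theorem comm2 (h : DURel σ w μ ε ι U D) (he : EDat σ w μ n ζ) (hn : 2 ≤ n) (i j : ℕ) (f : E) :
    U ^ i * (ι f * D ^ j) * U ^ n - U ^ n * (U ^ i * (ι f * D ^ j))
      - U ^ (i + (n - 1)) * (ι (((j : ℕ) * (n * μ⁻¹) : L) • ((σ ^ (n - 1)) f * w)) * D ^ (j - 1))
      ∈ Fil ι U D (DS (j - 1)) := by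
  have hfU : ι f * U ^ n = U ^ n * ι f := by rw [h.fUpow, he.sig_n]; rfl
  have hUU : U ^ n * U ^ i = U ^ i * U ^ n := by rw [← pow_add, ← pow_add, add_comm]
  cases j with
  | zero =>
    have : U ^ i * (ι f * D ^ 0) * U ^ n - U ^ n * (U ^ i * (ι f * D ^ 0))
      - U ^ (i + (n - 1)) * (ι (((0 : ℕ) * (n * μ⁻¹) : L) • ((σ ^ (n - 1)) f * w)) * D ^ (0 - 1))
        = 0 := by
      simp only [pow_zero, mul_one, Nat.cast_zero, zero_mul, zero_smul, map_zero, mul_zero, sub_zero]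
      rw [mul_assoc, hfU, ← mul_assoc, ← mul_assoc, hUU, sub_self]
    rw [this]; exact zero_mem _
  | succ j =>
    have h1 := Upow_DS ι i (h.i_Fil f (comm1 h he hn j))
    rw [Nat.add_sub_cancel]
    convert h1 using 1
    rw [mul_sub, mul_sub, mul_sub, mul_sub]
    congr 1
    · congr 1
      · simp only [mul_assoc]
      · rw [← mul_assoc, hUU, mul_assoc, ← mul_assoc (U ^ n), ← hfU, mul_assoc]
    · rw [pow_add, mul_assoc]
      congr 1
      rw [← mul_assoc (ι f), h.fUpow, mul_assoc]
      congr 1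
      rw [← mul_assoc (ι _), ← map_mul, mul_smul_comm]

/-- leading part of the commutator with `U ^ n` -/
def Psi (σ : E →ₐ[L] E) (w : E) (κ : L) (a : ℕ) : (ℕ × ℕ →₀ E) →ₗ[L] (ℕ × ℕ →₀ E) :=
  Finsupp.lsum L fun p =>
    (Finsupp.lsingle (p.1 + a, p.2 - 1)) ∘ₗ
      (((p.2 : L) * κ) • (LinearMap.mulRight L w ∘ₗ (σ ^ a).toLinearMap))

theorem Psi_single (κ : L) (a i j : ℕ) (f : E) :
    Psi σ w κ a (Finsupp.single (i, j) f) =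
      Finsupp.single (i + a, j - 1) (((j : L) * κ) • ((σ ^ a) f * w)) := by
  simp only [Psi, Finsupp.coe_lsum]
  rw [Finsupp.sum_single_index (by simp)]
  rfl

theorem Psi_apply (κ : L) (a i j : ℕ) (F : ℕ × ℕ →₀ E) :
    Psi σ w κ a F (i + a, j) = (((j + 1 : ℕ) : L) * κ) • ((σ ^ a) (F (i, j + 1)) * w) := by
  induction F using Finsupp.induction_linear with
  | zero => simp
  | add F G hF hG => rw [map_add, Finsupp.add_apply, hF, hG, Finsupp.add_apply, map_add, add_mul, smul_add]
  | single p f =>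
    obtain ⟨i', j'⟩ := p
    rw [Psi_single, Finsupp.single_apply, Finsupp.single_apply]
    by_cases h : i' = i ∧ j' = j + 1
    · obtain ⟨rfl, rfl⟩ := h; simp
    · rw [if_neg (c := (i', j') = (i, j + 1)) (by simpa using h), map_zero, zero_mul, smul_zero]
      split_ifs with h2
      · simp only [Prod.mk.injEq] at h2
        have : j' = 0 := by omega
        rw [this]; simp
      · rfl

theorem comm3 (h : DURel σ w μ ε ι U D) (he : EDat σ w μ n ζ) (hn : 2 ≤ n) {J : ℕ}
    {F : ℕ × ℕ →₀ E} (hF : F ∈ Finsupp.supported E L (DS (J + 2))) :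
    Phi ι U D F * U ^ n - U ^ n * Phi ι U D F - Phi ι U D (Psi σ w (n * μ⁻¹) (n - 1) F)
      ∈ Fil ι U D (DS J) := by
  let T : (ℕ × ℕ →₀ E) →ₗ[L] R := LinearMap.mulRight L (U ^ n) ∘ₗ Phi ι U D
    - LinearMap.mulLeft L (U ^ n) ∘ₗ Phi ι U D - Phi ι U D ∘ₗ Psi σ w (n * μ⁻¹) (n - 1)
  have hT : T F ∈ Fil ι U D (DS J) := by
    rw [← Finsupp.sum_single F, Finsupp.sum, map_sum]
    refine sum_mem fun p hp => ?_
    obtain ⟨i, j⟩ := p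
    have hj : j < J + 2 := hF hp
    have h1 := comm2 h he hn i j (F (i, j))
    have h2 : T (Finsupp.single (i, j) (F (i, j))) ∈ Fil ι U D (DS (j - 1)) := by
      simpa [T, Psi_single, -Finsupp.single_mul] using h1
    exact Fil_mono _ _ _ (by intro p; simp only [DS, Set.mem_ofPred_eq]; omega) h2
  exact hT

variable [CharZero L]

/-- Step A -/
theorem stepA (h : DURel σ w μ ε ι U D) (he : EDat σ w μ n ζ) (hn : 2 ≤ n)
    (hinj : Function.Injective (Phi ι U D)) (P : Submodule L R)
    (hl : ∀ r x, x ∈ P → r * x ∈ P) (hr : ∀ r x, x ∈ P → x * r ∈ P) (J : ℕ) :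
    (∃ F : ℕ × ℕ →₀ E, F ≠ 0 ∧ F ∈ Finsupp.supported E L (DS (J + 1)) ∧ Phi ι U D F ∈ P) →
    ∃ F : ℕ × ℕ →₀ E, F ≠ 0 ∧ F ∈ Finsupp.supported E L (DS 1) ∧ Phi ι U D F ∈ P := by
  induction J with
  | zero => exact id
  | succ J ih =>
    rintro ⟨F, hF0, hF, hFP⟩
    by_cases hex : ∃ i, F (i, J + 1) ≠ 0
    · obtain ⟨i, hi⟩ := hex
      apply ih
      obtain ⟨G, hG, hGe⟩ := comm3 h he hn hF
      refine ⟨Psi σ w (n * μ⁻¹) (n - 1) F + G, ?_, ?_, ?_⟩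
      · intro h0
        have h1 := DFunLike.congr_fun h0 (i + (n - 1), J)
        rw [Finsupp.add_apply, Psi_apply] at h1
        have h2 : G (i + (n - 1), J) = 0 := by
          by_contra h3
          have : (i + (n - 1), J) ∈ DS J := hG (by simpa using h3)
          simp [DS] at this
        rw [h2, add_zero] at h1
        refine smul_ne_zero ?_ ?_ h1
        · refine mul_ne_zero (Nat.cast_ne_zero.2 (by omega)) (mul_ne_zero (Nat.cast_ne_zero.2 (by omega)) (inv_ne_zero he.mu_ne))
        · rw [Ne, he.w_unit.mul_left_eq_zero]
          exact he.sig_pow_ne _ hi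
      · refine add_mem ?_ (Finsupp.supported_mono (by intro p; simp only [DS, Set.mem_ofPred_eq]; omega) hG)
        rw [← Finsupp.sum_single F, Finsupp.sum, map_sum]
        refine sum_mem fun p hp => ?_
        obtain ⟨i, j⟩ := p
        have hj : j < J + 2 := hF hp
        rw [Psi_single]
        exact Finsupp.single_mem_supported _ _ (by simp only [DS, Set.mem_ofPred_eq]; omega)
      · rw [map_add, hGe, add_sub_cancel]
        exact P.sub_mem (hr _ _ hFP) (hl _ _ hFP)
    · push Not at hex
      refine ih ⟨F, hF0, ?_, hFP⟩
      intro p hp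
      have h1 := hF hp
      obtain ⟨i, j⟩ := p
      simp only [DS, Set.mem_ofPred_eq] at *
      have : j ≠ J + 1 := by rintro rfl; exact (by simpa using hp : F (i, J + 1) ≠ 0) (hex i)
      omega

end H1
end DUP

namespace DUP
open MulOpposite Polynomial

section H1
variable {L E : Type} [Field L] [CommRing E] [Algebra L E]
variable {R : Type} [Ring R] [Algebra L R]
variable {σ : E →ₐ[L] E} {w : E} {μ ε : L} {ι : E →ₐ[L] R} {U D : R} {n : ℕ} {ζ : L}

/-- trace -/
def trE (σ : E →ₐ[L] E) (n : ℕ) : E →ₗ[L] E := ∑ s ∈ Finset.range n, (σ ^ s).toLinearMap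

theorem trE_apply (f : E) : trE σ n f = ∑ s ∈ Finset.range n, (σ ^ s) f := by
  simp [trE]

theorem sum_mu (he : EDat σ w μ n ζ) {k : ℕ} (hk : μ ^ k ≠ 1) :
    ∑ s ∈ Finset.range n, (μ ^ k) ^ s = 0 := by
  rw [geom_sum_eq hk, ← pow_mul, mul_comm, pow_mul, he.prim.pow_eq_one]; simp

theorem trE_wpow (he : EDat σ w μ n ζ) (k : ℕ) : trE σ n (w ^ k) ∈ (⊥ : Subalgebra L E) := by
  rw [trE_apply]
  have h1 : ∀ s, (σ ^ s) (w ^ k) = ((μ ^ k) ^ s) • w ^ k := by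
    intro s; rw [map_pow, pow_map_w he.sw, _root_.smul_pow, ← pow_mul, ← pow_mul, mul_comm]
  simp only [h1]
  rw [← Finset.sum_smul]
  by_cases hk : μ ^ k = 1
  · obtain ⟨m, rfl⟩ := (he.prim.pow_eq_one_iff_dvd k).1 hk
    rw [pow_mul w, he.wn]
    exact Subalgebra.smul_mem _ (Subalgebra.pow_mem _ (Subalgebra.algebraMap_mem _ _) _) _
  · rw [sum_mu he hk, zero_smul]; exact Subalgebra.zero_mem _

theorem trE_mem (he : EDat σ w μ n ζ) (f : E) : ∃ t : L, trE σ n f = algebraMap L E t := by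
  have hf : f ∈ Algebra.adjoin L {w} := by rw [he.adj]; trivial
  rw [Algebra.adjoin_singleton_eq_range_aeval] at hf
  obtain ⟨p, rfl⟩ := hf
  have : trE σ n (aeval w p) ∈ (⊥ : Subalgebra L E) := by
    rw [aeval_eq_sum_range, map_sum]
    refine Subalgebra.sum_mem _ fun k _ => ?_
    rw [map_smul]
    exact Subalgebra.smul_mem _ (trE_wpow he k) _
  obtain ⟨t, ht⟩ := Algebra.mem_bot.1 this
  exact ⟨t, ht.symm⟩

variable [CharZero L]

theorem trE_nondeg (he : EDat σ w μ n ζ) {g : E} (hg : g ≠ 0) : ∃ k : ℕ, trE σ n (g * w ^ k) ≠ 0 := by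
  by_contra! h
  have h1 : ∀ k, ∑ s ∈ Finset.range n, (μ ^ s) ^ k • (σ ^ s) g = 0 := by
    intro k
    have h2 := h k
    rw [trE_apply] at h2
    have : ∀ s, (σ ^ s) (g * w ^ k) = ((μ ^ s) ^ k • (σ ^ s) g) * w ^ k := by
      intro s
      rw [map_mul, map_pow, pow_map_w he.sw, _root_.smul_pow, mul_smul_comm, smul_mul_assoc]
    simp only [this] at h2
    rw [← Finset.sum_mul] at h2
    exact ((he.w_unit.pow k).mul_left_eq_zero).1 h2
  have h2 : ∑ k ∈ Finset.range n, ∑ s ∈ Finset.range n, (μ ^ s) ^ k • (σ ^ s) g = 0 :=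
    Finset.sum_eq_zero fun k _ => h1 k
  rw [Finset.sum_comm, Finset.sum_eq_single 0] at h2
  · simp only [pow_zero, one_pow, one_smul, AlgHom.one_apply, Finset.sum_const, Finset.card_range] at h2
    rw [← Nat.cast_smul_eq_nsmul L] at h2
    exact smul_ne_zero (Nat.cast_ne_zero.2 he.npos.ne') hg h2
  · intro s hs hs0
    rw [← Finset.sum_smul, sum_mu he, zero_smul]
    intro h3
    have := Nat.le_of_dvd (by omega) ((he.prim.pow_eq_one_iff_dvd s).1 h3)
    rw [Finset.mem_range] at hs
    omega
  · intro h0; exact absurd (Finset.mem_range.2 he.npos) h0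

theorem stepB (h : DURel σ w μ ε ι U D) (he : EDat σ w μ n ζ) (P : Submodule L R)
    (hl : ∀ r x, x ∈ P → r * x ∈ P) (hr : ∀ r x, x ∈ P → x * r ∈ P)
    (hex : ∃ F : ℕ × ℕ →₀ E, F ≠ 0 ∧ F ∈ Finsupp.supported E L (DS 1) ∧ Phi ι U D F ∈ P) :
    ∃ f : L[X], f ≠ 0 ∧ aeval U f ∈ P := by
  have := he.nontriv
  obtain ⟨F, hF0, hF, hFP⟩ := hex
  obtain ⟨⟨i0, j0⟩, hi0⟩ : ∃ p, F p ≠ 0 := by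
    by_contra! h0; exact hF0 (Finsupp.ext h0)
  have hj0 : j0 = 0 := by
    have : (i0, j0) ∈ DS 1 := hF (by simpa using hi0)
    simpa [DS] using this
  subst hj0
  obtain ⟨k, hk⟩ := trE_nondeg he hi0
  choose t ht using fun g => trE_mem he (g * w ^ k)
  let f : L[X] := ∑ p ∈ F.support, monomial (p.1 + n) (t (F p))
  refine ⟨f, ?_, ?_⟩
  · intro h0
    have h1 : f.coeff (i0 + n) = t (F (i0, 0)) := by
      rw [finset_sum_coeff, Finset.sum_eq_single (i0, 0)]
      · simp
      · rintro ⟨i, j⟩ hp hne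
        have : (i, j) ∈ DS 1 := hF hp
        have hj : j = 0 := by simpa [DS] using this
        subst hj
        rw [coeff_monomial, if_neg]
        intro h2; apply hne; simp only [Prod.mk.injEq, and_true]; omega
      · intro h2
        have : F (i0, 0) = 0 := by simpa using h2
        exact absurd this hi0
    rw [h0, coeff_zero] at h1
    rw [ht, ← h1] at hk
    simp at hk
  · have h1 : ∑ s ∈ Finset.range n, U ^ (n - s) * (Phi ι U D F * ι (w ^ k)) * U ^ s = aeval U f := by
      have h2 : Phi ι U D F = ∑ p ∈ F.support, U ^ p.1 * ι (F p) := by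
        conv_lhs => rw [← Finsupp.sum_single F, Finsupp.sum, map_sum]
        refine Finset.sum_congr rfl ?_
        rintro ⟨i, j⟩ hp
        have : (i, j) ∈ DS 1 := hF hp
        have hj : j = 0 := by simpa [DS] using this
        subst hj
        simp
      rw [h2]
      simp only [f, map_sum, Finset.sum_mul, Finset.mul_sum]
      rw [Finset.sum_comm]
      refine Finset.sum_congr rfl fun p hp => ?_
      have h3 : ∀ s ∈ Finset.range n, U ^ (n - s) * (U ^ p.1 * ι (F p) * ι (w ^ k)) * U ^ s
          = U ^ (p.1 + n) * ι ((σ ^ s) (F p * w ^ k)) := by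
        intro s hs
        rw [Finset.mem_range] at hs
        rw [mul_assoc (U ^ p.1), ← map_mul, ← mul_assoc, ← pow_add, mul_assoc, h.fUpow, ← mul_assoc, ← pow_add]
        congr 2; omega
      rw [Finset.sum_congr rfl h3, ← Finset.mul_sum, ← map_sum, ← trE_apply, ht, AlgHom.commutes,
        aeval_monomial, Algebra.commutes]
    rw [← h1]
    exact sum_mem fun s _ => hr _ _ (hl _ _ (hr _ _ hFP))

theorem stepC (h : DURel σ w μ ε ι U D) (he : EDat σ w μ n ζ) (hn : 2 ≤ n) (P : Submodule L R)
    (hl : ∀ r x, x ∈ P → r * x ∈ P) (hr : ∀ r x, x ∈ P → x * r ∈ P) (c : ℕ) :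
    ∀ f : L[X], f.support.card ≤ c → f ≠ 0 → aeval U f ∈ P → ∃ t, U ^ t ∈ P := by
  induction c with
  | zero =>
    intro f hf hf0
    simp at hf
    exact absurd hf hf0
  | succ c ih =>
    intro f hf hf0 hfP
    have hsm : ∀ (l : ℕ → L) (i : ℕ), i ∈ f.support → l i = 0 → ∀ g : L[X],
        (∀ k, g.coeff k = l k * f.coeff k) → g.support.card ≤ c := by
      intro l i hi hli g hg
      have : g.support ⊆ f.support.erase i := by
        intro k hk
        rw [mem_support_iff, hg] at hk
        rw [Finset.mem_erase, mem_support_iff]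
        refine ⟨?_, right_ne_zero_of_mul hk⟩
        rintro rfl; rw [hli] at hk; simp at hk
      have := Finset.card_le_card this
      rw [Finset.card_erase_of_mem hi] at this
      omega
    have haev : aeval U f = ∑ m ∈ f.support, f.coeff m • U ^ m := by
      rw [aeval_eq_sum_range, ← Finset.sum_subset (s₁ := f.support)]
      · intro m hm; rw [Finset.mem_range]; exact Nat.lt_succ_of_le (le_natDegree_of_mem_supp m hm)
      · intro m _ hm; rw [notMem_support_iff.1 hm, zero_smul]
    obtain ⟨wi, hwi⟩ := he.w_unit.exists_right_inv
    by_cases h1 : ∃ i ∈ f.support, ∃ j ∈ f.support, i ≠ j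
    swap
    · -- single monomial
      push Not at h1
      obtain ⟨i, hi⟩ := nonempty_support_iff.2 hf0
      refine ⟨i, ?_⟩
      have h2 : f.support = {i} := Finset.eq_singleton_iff_unique_mem.2 ⟨hi, fun j hj => h1 j hj i hi⟩
      rw [haev, h2, Finset.sum_singleton] at hfP
      have := P.smul_mem (f.coeff i)⁻¹ hfP
      rwa [smul_smul, inv_mul_cancel₀ (mem_support_iff.1 hi), one_smul] at this
    · by_cases h2 : ∃ i ∈ f.support, ∃ j ∈ f.support, μ ^ i ≠ μ ^ j
      · obtain ⟨i, hi, j, hj, hij⟩ := h2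
        let g : L[X] := f.comp (C μ * X) - C (μ ^ i) * f
        have hg : ∀ k : ℕ, g.coeff k = (μ ^ k - μ ^ i) * f.coeff k := by
          intro k
          simp only [g, coeff_sub, coeff_C_mul, comp_C_mul_X_coeff]; ring
        refine ih g (hsm _ i hi (by simp) g hg) ?_ ?_
        · intro h0
          have := hg j
          rw [h0, coeff_zero] at this
          exact mul_ne_zero (sub_ne_zero.2 (Ne.symm hij)) (mem_support_iff.1 hj) this.symm
        · have h3 : aeval U (f.comp (C μ * X)) = ι w * aeval U f * ι wi := by
            rw [aeval_comp, haev, map_mul, aeval_C, aeval_X, ← Algebra.smul_def, Finset.mul_sum,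
              Finset.sum_mul]
            have : aeval (μ • U) f = ∑ m ∈ f.support, f.coeff m • (μ • U) ^ m := by
              rw [aeval_eq_sum_range, ← Finset.sum_subset (s₁ := f.support)]
              · intro m hm; rw [Finset.mem_range]
                exact Nat.lt_succ_of_le (le_natDegree_of_mem_supp m hm)
              · intro m _ hm; rw [notMem_support_iff.1 hm, zero_smul]
            rw [this]
            refine Finset.sum_congr rfl fun m _ => ?_
            rw [mul_smul_comm, smul_mul_assoc, h.fUpow, pow_map_w he.sw, map_smul, mul_smul_comm,
              smul_mul_assoc, mul_assoc, ← map_mul, hwi, map_one, mul_one, _root_.smul_pow]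
          simp only [g, map_sub, map_mul, aeval_C]
          refine P.sub_mem ?_ (hl _ _ hfP)
          rw [h3]
          exact hr _ _ (hl _ _ hfP)
      · push Not at h2
        obtain ⟨i, hi, j, hj, hij⟩ := h1
        let g : L[X] := X * derivative f - C (i : L) * f
        have hXd : ∀ k : ℕ, (X * derivative f).coeff k = (k : L) * f.coeff k := by
          intro k
          cases k with
          | zero => simp
          | succ k => rw [coeff_X_mul, coeff_derivative]; push_cast; ring
        have hg : ∀ k : ℕ, g.coeff k = ((k : L) - i) * f.coeff k := by
          intro k
          simp only [g, coeff_sub, coeff_C_mul, hXd]; ring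
        refine ih g (hsm _ i hi (by simp) g hg) ?_ ?_
        · intro h0
          have := hg j
          rw [h0, coeff_zero] at this
          exact mul_ne_zero (sub_ne_zero.2 (fun h => hij (Nat.cast_injective h).symm))
            (mem_support_iff.1 hj) this.symm
        · have hXf : aeval U (X * derivative f) = ∑ m ∈ f.support, ((m : L) * f.coeff m) • U ^ m := by
            rw [aeval_eq_sum_range' (n := (X * derivative f).natDegree + f.natDegree + 1) (by omega),
              ← Finset.sum_subset (s₁ := f.support)]
            · exact Finset.sum_congr rfl fun m _ => by rw [hXd]
            · intro m hm; rw [Finset.mem_range]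
              have := le_natDegree_of_mem_supp m hm
              omega
            · intro m _ hm; rw [hXd, notMem_support_iff.1 hm, mul_zero, zero_smul]
          set ρ := μ ^ i with hρ
          set δ := ε * ((ρ - 1) / (μ - 1)) with hδ
          have key : U * (D * aeval U f) - ρ • (U * (aeval U f * D)) =
              (μ⁻¹ * ρ) • (aeval U (X * derivative f) * ι w) + δ • aeval U f := by
            rw [hXf, haev]
            simp only [Finset.mul_sum, Finset.sum_mul, Finset.smul_sum]
            rw [← Finset.sum_sub_distrib, ← Finset.sum_add_distrib]
            refine Finset.sum_congr rfl fun m hm => ?_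
            have hm' : μ ^ m = ρ := h2 m hm i hi
            have e1 : U * (U ^ (m - 1) * ι (cc w μ ε m)) = U ^ m * ι (cc w μ ε m) := by
              cases m with
              | zero => simp [cc]
              | succ m => rw [← mul_assoc, Nat.add_sub_cancel, ← pow_succ']
            rw [mul_smul_comm, h.DUpow, mul_smul_comm, mul_add, e1, hm', cc_form he hn, hm', ← hδ,
              map_add, map_smul, AlgHom.commutes, mul_add, mul_smul_comm, mul_smul_comm, ← Algebra.commutes,
              ← Algebra.smul_def, smul_mul_assoc, mul_smul_comm, smul_mul_assoc]
            module
          have h3 : aeval U (X * derivative f) * ι w ∈ P := by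
            have h4 : (μ⁻¹ * ρ) • (aeval U (X * derivative f) * ι w) ∈ P := by
              rw [← sub_eq_iff_eq_add] at key
              rw [← key]
              exact P.sub_mem (P.sub_mem (hl _ _ (hl _ _ hfP)) (P.smul_mem _ (hl _ _ (hr _ _ hfP))))
                (P.smul_mem _ hfP)
            have hne : μ⁻¹ * ρ ≠ 0 := mul_ne_zero (inv_ne_zero he.mu_ne) (pow_ne_zero _ he.mu_ne)
            have := P.smul_mem (μ⁻¹ * ρ)⁻¹ h4
            rwa [smul_smul, inv_mul_cancel₀ hne, one_smul] at this
          have h5 := hr (ι wi) _ h3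
          rw [mul_assoc, ← map_mul, hwi, map_one, mul_one] at h5
          simp only [g, map_sub, map_mul (aeval U) (C _)]
          exact P.sub_mem h5 (hl _ _ hfP)

theorem H1 (h : DURel σ w μ ε ι U D) (he : EDat σ w μ n ζ) (hn : 2 ≤ n)
    (hinj : Function.Injective (Phi ι U D)) (hsurj : Function.Surjective (Phi ι U D)) {N : ℕ}
    (hN : ∀ m, N < m → IsUnit (cc w μ ε m)) (P : Submodule L R)
    (hl : ∀ r x, x ∈ P → r * x ∈ P) (hr : ∀ r x, x ∈ P → x * r ∈ P) (hP : P ≠ ⊥) : U ^ N ∈ P := by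
  obtain ⟨x, hx, hx0⟩ := Submodule.exists_mem_ne_zero_of_ne_bot hP
  obtain ⟨F, rfl⟩ := hsurj x
  obtain ⟨J, hJ⟩ : ∃ J, F ∈ Finsupp.supported E L (DS (J + 1)) := by
    refine ⟨F.support.sup Prod.snd, fun p hp => ?_⟩
    have : p.2 ≤ F.support.sup Prod.snd := Finset.le_sup (f := Prod.snd) hp
    simp only [DS, Set.mem_ofPred_eq]; omega
  have hA := stepA h he hn hinj P hl hr J ⟨F, by rintro rfl; simp at hx0, hJ, hx⟩
  obtain ⟨f, hf0, hf⟩ := stepB h he P hl hr hA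
  obtain ⟨t, ht⟩ := stepC h he hn P hl hr _ f le_rfl hf0 hf
  have desc : ∀ s, U ^ (N + s) ∈ P → U ^ N ∈ P := by
    intro s
    induction s with
    | zero => exact id
    | succ s ih =>
      intro hs
      apply ih
      obtain ⟨v, hv⟩ := (hN (N + (s + 1)) (by omega)).exists_right_inv
      have h1 := h.DUpow (N + (s + 1))
      have h2 : U ^ (N + (s + 1) - 1) * ι (cc w μ ε (N + (s + 1))) ∈ P := by
        rw [← sub_eq_iff_eq_add'] at h1
        rw [← h1]
        exact P.sub_mem (hl _ _ hs) (P.smul_mem _ (hr _ _ hs))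
      have h3 := hr (ι v) _ h2
      rwa [mul_assoc, ← map_mul, hv, map_one, mul_one] at h3
  refine desc t ?_
  rw [pow_add]
  exact hl _ _ ht

/-- opposite data -/
def iotaOp (ι : E →ₐ[L] R) : E →ₐ[L] Rᵐᵒᵖ where
  toFun f := op (ι f)
  map_one' := by simp
  map_mul' f g := by rw [← op_mul, ← map_mul, mul_comm]
  map_zero' := by simp
  map_add' f g := by simp
  commutes' r := by rw [AlgHom.commutes]; rfl

omit [CharZero L] in
theorem DURel.op (h : DURel σ w μ ε ι U D) :
    DURel σ w μ ε (iotaOp ι) (MulOpposite.op D) (MulOpposite.op U) where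
  sw := h.sw
  fU f := by
    change MulOpposite.op (ι f) * _ = _ * MulOpposite.op (ι (σ f))
    rw [← op_mul, h.Df, op_mul]
  Df f := by
    change _ * MulOpposite.op (ι f) = MulOpposite.op (ι (σ f)) * _
    rw [← op_mul, h.fU, op_mul]
  DU := by
    change _ = _ + MulOpposite.op (ι w) + _
    rw [← op_mul, h.DU]; simp

omit [CharZero L] in
theorem Phi_op (F : ℕ × ℕ →₀ E) : Phi (iotaOp ι) (op D) (op U) F =
    op (Phi ι U D (Finsupp.domLCongr (R := L) (Equiv.prodComm ℕ ℕ) F)) := by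
  have : Phi (iotaOp ι) (op D) (op U) = (opLinearEquiv L).toLinearMap ∘ₗ Phi ι U D ∘ₗ
      (Finsupp.domLCongr (R := L) (Equiv.prodComm ℕ ℕ)).toLinearMap := by
    refine Finsupp.lhom_ext fun ⟨i, j⟩ f => ?_
    simp [iotaOp, mul_assoc]
  exact LinearMap.congr_fun this F

theorem HH_of (hp : PBW σ w μ ε ι U D) (he : EDat σ w μ n ζ) (hn : 2 ≤ n) {N : ℕ}
    (hN : ∀ m, N < m → IsUnit (cc w μ ε m)) (I : Submodule Rᵐᵒᵖ R) (hI : Lcl I) (hI0 : I ≠ ⊥) :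
    U ^ N ∈ I ∧ D ^ N ∈ I := by
  obtain ⟨x, hx, hx0⟩ := Submodule.exists_mem_ne_zero_of_ne_bot hI0
  constructor
  · refine H1 hp.toDURel he hn hp.inj hp.surj hN (I.restrictScalars L) hI (fun r x hx => rmul hx r) ?_
    rw [Submodule.ne_bot_iff]
    exact ⟨x, hx, hx0⟩
  · have := H1 (P := (I.restrictScalars L).comap (opLinearEquiv L).symm.toLinearMap)
      hp.toDURel.op he hn ?_ ?_ hN ?_ ?_ ?_
    · simpa using this
    · intro F G h
      rw [Phi_op, Phi_op] at h
      exact (Finsupp.domLCongr (R := L) (Equiv.prodComm ℕ ℕ)).injective (hp.inj (op_injective h))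
    · intro y
      obtain ⟨F, hF⟩ := hp.surj y.unop
      refine ⟨(Finsupp.domLCongr (R := L) (Equiv.prodComm ℕ ℕ)).symm F, ?_⟩
      rw [Phi_op, LinearEquiv.apply_symm_apply, hF, op_unop]
    · intro r x hx
      exact rmul (I := I) hx r.unop
    · intro r x hx
      exact hI r.unop _ hx
    · rw [Submodule.ne_bot_iff]
      exact ⟨op x, hx, by simpa using hx0⟩

end H1
end DUP

namespace DUP
open MulOpposite

section H2
variable {L E : Type} [Field L] [CommRing E] [Algebra L E]
variable {R : Type} [Ring R] [Algebra L R]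
variable {σ : E →ₐ[L] E} {w : E} {μ ε : L} {ι : E →ₐ[L] R} {U D : R} {n : ℕ} {ζ : L}

theorem unit_lin (he : EDat σ w μ n ζ) (a b : L) (h : (-b) ^ n ≠ a ^ n * ζ) :
    IsUnit (a • w + algebraMap L E b) := by
  have h1 := sub_dvd_pow_sub_pow (a • w) (algebraMap L E (-b)) n
  have h2 : (a • w) ^ n - (algebraMap L E (-b)) ^ n = algebraMap L E (a ^ n * ζ - (-b) ^ n) := by
    rw [_root_.smul_pow, he.wn, map_sub, map_mul, ← map_pow, Algebra.smul_def]
  rw [h2] at h1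
  have h3 := isUnit_of_dvd_unit h1 ((IsUnit.mk0 _ (sub_ne_zero.2 h.symm)).map (algebraMap L E))
  simpa using h3

theorem cc_unit (he : EDat σ w μ n ζ) (hn : 2 ≤ n) (m : ℕ)
    (h : (-(ε * ((μ ^ m - 1) / (μ - 1)))) ^ n ≠ (m : L) ^ n * ζ) : IsUnit (cc w μ ε m) := by
  rw [cc_form he hn]
  apply unit_lin he
  rw [mul_pow, mul_pow, inv_pow, ← pow_mul, mul_comm m n, pow_mul, he.prim.pow_eq_one]
  simpa using h

variable [CharZero L]

theorem exists_N (he : EDat σ w μ n ζ) (hn : 2 ≤ n) :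
    ∃ N, ∀ m, N < m → IsUnit (cc w μ ε m) := by
  classical
  let V : Finset L := (Finset.range n).image fun r => (-(ε * ((μ ^ r - 1) / (μ - 1)))) ^ n
  have hinj : Function.Injective (fun m : ℕ => (m : L) ^ n * ζ) := by
    intro a b hab
    have h1 := mul_right_cancel₀ he.z0 hab
    have h2 : a ^ n = b ^ n := by exact_mod_cast h1
    exact Nat.pow_left_injective he.npos.ne' h2
  have hfin : ((fun m : ℕ => (m : L) ^ n * ζ) ⁻¹' (V : Set L)).Finite :=
    V.finite_toSet.preimage hinj.injOn
  obtain ⟨N, hN⟩ := hfin.bddAbove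
  refine ⟨N, fun m hm => cc_unit he hn m fun h => ?_⟩
  refine absurd (hN (a := m) ?_) (by omega)
  simp only [Set.mem_preimage, V, Finset.coe_image, Set.mem_image, Finset.coe_range, Set.mem_Iio]
  refine ⟨m % n, Nat.mod_lt _ he.npos, ?_⟩
  rw [← h, ← pow_eq_pow_mod m he.prim.pow_eq_one]

theorem HH_C (hp : PBW σ w μ ε ι U D) (he : EDat σ w μ n ζ) (hn : 2 ≤ n) : HH U D := by
  obtain ⟨N, hN⟩ := exists_N (ε := ε) he hn
  exact ⟨N, fun I hI hI0 => HH_of hp he hn hN I hI hI0⟩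

theorem HH_S (hp : PBW σ w μ ε ι U D) (he : EDat σ w μ n ζ) (hn : 2 ≤ n)
    (h : ∀ m : ℕ, 0 < m → (-(ε * ((μ ^ m - 1) / (μ - 1)))) ^ n ≠ (m : L) ^ n * ζ) :
    HH U D ∧ JJ R = ⊤ := by
  have h1 := HH_of hp he hn (N := 0) (fun m hm => cc_unit he hn m (h m hm))
  refine ⟨⟨0, h1⟩, ?_⟩
  rw [JJ, sInf_eq_top]
  rintro I ⟨hI, hI0⟩
  have := (h1 I hI hI0).1
  rw [pow_zero] at this
  exact (Submodule.eq_top_iff'.2 fun x => by simpa using rmul this x)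

/-- idempotents -/
theorem idem (hp : PBW σ w μ ε ι U D) (he : EDat σ w μ n ζ) {ω : L} (hω : ω ^ n = ζ) :
    ∃ e : ℕ → R, (∀ p < n, e p ≠ 0) ∧ (∀ p < n, e p * e p = e p) ∧
      (∀ p < n, ∀ q < n, p ≠ q → e p * e q = 0) := by
  have hι : Function.Injective ι := by
    intro x y hxy
    have : Phi ι U D (Finsupp.single (0, 0) x) = Phi ι U D (Finsupp.single (0, 0) y) := by
      simp [hxy]
    exact Finsupp.single_injective _ (hp.inj this)
  have hnE := he.nontriv
  have hn0 : (n : L) ≠ 0 := by exact_mod_cast he.npos.ne'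
  have hμ := he.mu_ne
  have hω0 : ω ≠ 0 := by
    rintro rfl; exact he.z0 (by rw [← hω, zero_pow he.npos.ne'])
  let om : ℕ → L := fun p => ω * μ ^ p
  have hom : ∀ p, om p ≠ 0 := fun p => mul_ne_zero hω0 (pow_ne_zero _ hμ)
  let v : ℕ → E := fun p => (om p)⁻¹ • w
  have hvn : ∀ p, v p ^ n = 1 := by
    intro p
    have : om p ^ n = ζ := by
      simp only [om]
      rw [mul_pow, hω, ← pow_mul, mul_comm p n, pow_mul, he.prim.pow_eq_one]; simp
    simp only [v]
    rw [_root_.smul_pow, he.wn, inv_pow, this, Algebra.smul_def, ← map_mul, inv_mul_cancel₀ he.z0, map_one]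
  let g : ℕ → E := fun p => ∑ s ∈ Finset.range n, v p ^ s
  have hvg : ∀ p, v p * g p = g p := by
    intro p
    have h1 := mul_geom_sum (v p) n
    rw [hvn, sub_self, sub_mul, one_mul, sub_eq_zero] at h1
    exact h1
  have hvsg : ∀ p s, v p ^ s * g p = g p := by
    intro p s
    induction s with
    | zero => simp
    | succ s ih => rw [pow_succ, mul_assoc, hvg, ih]
  have hgg : ∀ p, g p * g p = (n : L) • g p := by
    intro p
    conv_lhs => lhs; simp only [g]
    rw [Finset.sum_mul, Finset.sum_congr rfl fun s _ => hvsg p s]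
    simp [Algebra.smul_def]
  have hwg : ∀ p, w * g p = om p • g p := by
    intro p
    conv_rhs => rw [← hvg p]
    simp only [v]
    rw [← smul_mul_assoc, smul_smul, mul_inv_cancel₀ (hom p), one_smul]
  have hg0 : ∀ p, g p ≠ 0 := by
    intro p h0
    have h1 : trE σ n (g p) = algebraMap L E n := by
      simp only [g, v]
      rw [map_sum, Finset.sum_eq_single 0]
      · simp [trE_apply]
      · intro s hs hs0
        rw [_root_.smul_pow, map_smul, trE_apply]
        have h1 : ∀ k, (σ ^ k) (w ^ s) = ((μ ^ s) ^ k) • w ^ s := by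
          intro k; rw [map_pow, pow_map_w he.sw, _root_.smul_pow, ← pow_mul, ← pow_mul, mul_comm]
        simp only [h1]
        rw [← Finset.sum_smul, sum_mu he, zero_smul, smul_zero]
        exact he.prim.pow_ne_one_of_pos_of_lt hs0 (Finset.mem_range.1 hs)
      · intro h; exact absurd (Finset.mem_range.2 he.npos) h
    rw [h0, map_zero] at h1
    exact hn0 ((algebraMap L E).injective (by rw [← h1, map_zero]))
  refine ⟨fun p => ι ((n : L)⁻¹ • g p), ?_, ?_, ?_⟩
  · intro p _ h
    rw [← map_zero ι] at h
    have := hι h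
    rw [smul_eq_zero] at this
    exact this.elim (inv_ne_zero hn0) (hg0 p)
  · intro p _
    simp only []
    rw [← map_mul, smul_mul_smul_comm, hgg, smul_smul, mul_assoc, inv_mul_cancel₀ hn0, mul_one]
  · intro p hp' q hq hpq
    simp only []
    rw [← map_mul, smul_mul_smul_comm]
    have h1 : g p * g q = 0 := by
      have h2 : om p • (g p * g q) = om q • (g p * g q) := by
        rw [← smul_mul_assoc, ← hwg, mul_comm w, mul_assoc, hwg, mul_smul_comm]
      have h3 : om p - om q ≠ 0 := by
        rw [sub_ne_zero]
        intro h
        exact hpq (he.prim.pow_inj hp' hq (mul_left_cancel₀ hω0 h))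
      rw [← sub_eq_zero, ← sub_smul, smul_eq_zero] at h2
      exact h2.resolve_left h3
    rw [h1, smul_zero, map_zero]

omit [CharZero L] in
/-- finite-dimensionality of `R / JJ` -/
theorem fin_of_JJ (hp : PBW σ w μ ε ι U D) (he : EDat σ w μ n ζ) (hH : HH U D)
    {Q : Type} [Ring Q] [Algebra L Q] (π : R →ₐ[L] Q) (hπ : Function.Surjective π)
    (hJ : ∀ x ∈ JJ R, π x = 0) : Module.Finite L Q := by
  obtain ⟨N, hU, hD⟩ := Upow_JJ hp he hH
  have := TT_fin (ι := ι) (U := U) (D := D) he (2 * N)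
  have hsurj : Function.Surjective (π.toLinearMap ∘ₗ (TT ι U D (2 * N)).subtype) := by
    rw [← LinearMap.range_eq_top, LinearMap.range_comp, Submodule.range_subtype, eq_top_iff]
    rintro q -
    obtain ⟨r, rfl⟩ := hπ q
    obtain ⟨F, rfl⟩ := hp.surj r
    induction F using Finsupp.induction_linear with
    | zero => simp
    | add f g hf hg => rw [map_add, map_add]; exact Submodule.add_mem _ hf hg
    | single a f =>
      obtain ⟨i, j⟩ := a
      rw [Phi_single]
      by_cases hi : N ≤ i
      · rw [hJ]
        · exact Submodule.zero_mem _
        · obtain ⟨k, rfl⟩ := Nat.exists_eq_add_of_le hi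
          rw [pow_add, mul_assoc]
          exact rmul hU _
      by_cases hj : N ≤ j
      · rw [hJ]
        · exact Submodule.zero_mem _
        · obtain ⟨k, rfl⟩ := Nat.exists_eq_add_of_le hj
          rw [pow_add, ← mul_assoc, ← mul_assoc]
          exact rmul (JJ_lcl _ _ hD) _
      · refine ⟨_, ?_, rfl⟩
        exact mem_Fil ι U D (by rw [Finset.mem_coe, mem_Tset]; simp; omega) f
  exact Module.Finite.of_surjective _ hsurj

end H2
end DUP

namespace DUP
open Polynomial

section GU
variable {R0 Q : Type} [CommRing R0] [IsDomain R0] [Infinite R0] [Ring Q] [Algebra R0 Q]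

open Classical in
omit [Infinite R0] in
theorem homog_fin {F : Type} [Field F] (φ : R0 →+* F) {χ : R0[X]} (hχ : χ.Monic) (P T : R0[X]) (e0 : F)
    (hP : P.eval₂ φ e0 = 0) (hT : T.eval₂ φ e0 ≠ 0) :
    {e : R0 | (scaleRoots χ (P.eval e)).eval (T.eval e) = 0}.Finite := by
  let G : R0[X] := ∑ i ∈ Finset.range (χ.natDegree + 1), C (χ.coeff i) * P ^ (χ.natDegree - i) * T ^ i
  have hG : ∀ e, G.eval e = (scaleRoots χ (P.eval e)).eval (T.eval e) := by
    intro e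
    rw [eval_eq_sum_range (p := scaleRoots χ (P.eval e)), natDegree_scaleRoots]
    simp [G, eval_finsetSum, coeff_scaleRoots]
  have hG0 : G ≠ 0 := by
    intro h0
    have : G.eval₂ φ e0 = (T.eval₂ φ e0) ^ χ.natDegree := by
      simp only [G, eval₂_finsetSum, eval₂_mul, eval₂_pow, eval₂_C, hP]
      rw [Finset.sum_eq_single χ.natDegree]
      · simp [hχ.coeff_natDegree]
      · intro i hi hne
        rw [zero_pow, mul_zero, zero_mul]
        have := Finset.mem_range.1 hi
        omega
      · simp
    rw [h0, eval₂_zero] at this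
    exact pow_ne_zero _ hT this.symm
  refine (G.roots.toFinset.finite_toSet).subset fun e he => ?_
  simp only [Set.mem_ofPred_eq] at he
  simp [hG0, hG, he]

omit [IsDomain R0] [Infinite R0] in
theorem HL {m : Q} {χ : R0[X]} (hm : aeval m χ = 0) (a b : R0) :
    ∃ v, (a • m + algebraMap R0 Q b) * v = algebraMap R0 Q ((scaleRoots χ a).eval (-b)) ∧
      v * (a • m + algebraMap R0 Q b) = algebraMap R0 Q ((scaleRoots χ a).eval (-b)) := by
  have h0 : aeval (a • m) (scaleRoots χ a) = 0 := by
    have h1 : aeval (a • m) (scaleRoots χ a) = algebraMap R0 Q (a ^ χ.natDegree) * aeval m χ := by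
      rw [aeval_eq_sum_range, aeval_eq_sum_range, natDegree_scaleRoots, Finset.mul_sum]
      refine Finset.sum_congr rfl fun i hi => ?_
      have : i ≤ χ.natDegree := by have := Finset.mem_range.1 hi; omega
      rw [coeff_scaleRoots, _root_.smul_pow, smul_smul, ← Algebra.smul_def, smul_smul, mul_assoc,
        ← pow_add, Nat.sub_add_cancel this, mul_comm]
    rw [h1, hm, mul_zero]
  obtain ⟨q, hq⟩ := X_sub_C_dvd_sub_C_eval (a := -b) (p := scaleRoots χ a)
  have h2 := congrArg (aeval (a • m)) hq
  simp only [map_neg, sub_neg_eq_add, map_sub, map_add, map_mul, aeval_X, aeval_C, h0, zero_sub] at h2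
  have h3 := congrArg (aeval (a • m)) ((mul_comm (X - C (-b)) q))
  simp only [map_sub, map_add, map_mul, aeval_X, aeval_C, zero_sub, map_neg, sub_neg_eq_add] at h3
  refine ⟨-aeval (a • m) q, ?_, ?_⟩
  · rw [mul_neg, ← h2, neg_neg]
  · rw [neg_mul, ← h3, ← h2, neg_neg]

open Classical in
theorem GU_aux (F : Type) [Field F] [Algebra R0 F] [FaithfulSMul R0 F] (hint : ∀ x : Q, IsIntegral R0 x) {b s y0 : Q} (h : b * s + y0 = 1) :
    ∃ (t u : Q) (p : R0), p ≠ 0 ∧ (b + y0 * t) * u = algebraMap R0 Q p := by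
  obtain ⟨χs, hχs, hs⟩ := hint s
  obtain ⟨χb, hχb, hb⟩ := hint b
  have f1 := homog_fin (algebraMap R0 F) hχb X (C (-1)) 0 (by simp) (by simp)
  have f2 : {e : R0 | (scaleRoots χs 1).eval (-e) = 0}.Finite := by
    have h0 : (scaleRoots χs 1).comp (-X) ≠ 0 := by
      intro h
      have h1 := congrArg (fun q => q.comp (-X)) h
      simp [comp_assoc] at h1
      exact hχs.ne_zero h1
    refine (((scaleRoots χs 1).comp (-X)).roots.toFinset.finite_toSet).subset fun e he => ?_
    simp only [Set.mem_ofPred_eq] at he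
    simp only [Finset.mem_coe, Multiset.mem_toFinset, mem_roots h0, IsRoot.def, eval_comp]
    simpa using he
  obtain ⟨τ, hτ⟩ := (f1.union f2).exists_notMem
  simp only [Set.mem_union, Set.mem_ofPred_eq, not_or, eval_X, eval_C] at hτ
  obtain ⟨v, hv1, hv2⟩ := HL (Q := Q) hs 1 τ
  obtain ⟨v2, hw1, -⟩ := HL (Q := Q) hb τ 1
  set f0 := (scaleRoots χs 1).eval (-τ) with hf0
  set p2 := (scaleRoots χb τ).eval (-1) with hp2
  set u := (s + algebraMap R0 Q τ) * v2 with hu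
  rw [one_smul] at hv1 hv2
  have e1 : b * u + y0 * v2 = algebraMap R0 Q p2 := by
    rw [← hw1, hu, ← mul_assoc, ← add_mul, mul_add, add_right_comm, h, map_one, Algebra.smul_def,
      ← Algebra.commutes, add_comm]
  have e2 : v * u = algebraMap R0 Q f0 * v2 := by
    rw [hu, ← mul_assoc, hv2]
  obtain ⟨χ, hχ, hm⟩ := hint (b * u)
  have hφ : algebraMap R0 F f0 ≠ 0 := by
    rw [Ne, FaithfulSMul.algebraMap_eq_zero_iff]; exact hτ.2
  have hφ2 : algebraMap R0 F p2 ≠ 0 := by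
    rw [Ne, FaithfulSMul.algebraMap_eq_zero_iff]; exact hτ.1
  have f3 := homog_fin (algebraMap R0 F) hχ (1 - C f0 * X) (- (C (f0 * p2) * X)) (algebraMap R0 F f0)⁻¹
    (by simp [mul_inv_cancel₀ hφ]) (by simpa using ⟨⟨hτ.2, hτ.1⟩, hτ.2⟩)
  obtain ⟨e, he⟩ := f3.exists_notMem
  simp only [Set.mem_ofPred_eq, eval_sub, eval_one, eval_mul, eval_C, eval_X, eval_neg] at he
  obtain ⟨v3, h3, -⟩ := HL (Q := Q) hm (1 - f0 * e) (f0 * p2 * e)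
  refine ⟨algebraMap R0 Q e * v, u * v3, _, he, ?_⟩
  rw [← h3, ← mul_assoc]
  congr 1
  have e3 : y0 * v2 = algebraMap R0 Q p2 - b * u := by rw [← e1]; abel
  calc (b + y0 * (algebraMap R0 Q e * v)) * u
      = b * u + y0 * (algebraMap R0 Q e * (v * u)) := by noncomm_ring
    _ = b * u + algebraMap R0 Q (e * f0) * (y0 * v2) := by
        have e4 := Algebra.commutes (e * f0) y0
        rw [e2, ← mul_assoc (algebraMap R0 Q e), ← map_mul, ← mul_assoc y0, ← e4, mul_assoc]
    _ = _ := by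
        rw [e3, mul_sub, ← map_mul, sub_smul, one_smul, Algebra.smul_def]
        rw [show f0 * p2 * e = e * f0 * p2 by ring, mul_comm f0 e]
        abel

theorem GU (hint : ∀ x : Q, IsIntegral R0 x) {b s y0 : Q} (h : b * s + y0 = 1) :
    ∃ (t u : Q) (p : R0), p ≠ 0 ∧ (b + y0 * t) * u = algebraMap R0 Q p :=
  GU_aux (FractionRing R0) hint h

end GU
end DUP

namespace DUP
open Polynomial

section GUc
variable {K : Type} [Field K]

theorem fin_ud {R0 Q : Type} [CommRing R0] [Algebra K R0] [Ring Q] [Algebra K Q] [Algebra R0 Q]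
    [IsScalarTower K R0 Q] {u d : Q} (hu : IsIntegral R0 u) (hd : IsIntegral R0 d)
    (hspan : ∀ q, q ∈ Submodule.span K (Set.range fun a : ℕ × ℕ => u ^ a.1 * d ^ a.2)) :
    Module.Finite R0 Q := by
  have h1 := hu.fg_adjoin_singleton.mul hd.fg_adjoin_singleton
  set M := (Subalgebra.toSubmodule (Algebra.adjoin R0 {u})) *
        (Subalgebra.toSubmodule (Algebra.adjoin R0 {d})) with hM
  have h3 : ∀ a : ℕ × ℕ, u ^ a.1 * d ^ a.2 ∈ M := fun a =>
    Submodule.mul_mem_mul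
      ((Subalgebra.mem_toSubmodule _).2 (Subalgebra.pow_mem _ (Algebra.self_mem_adjoin_singleton _ _) _))
      ((Subalgebra.mem_toSubmodule _).2 (Subalgebra.pow_mem _ (Algebra.self_mem_adjoin_singleton _ _) _))
  clear_value M
  have h2 : Submodule.span K (Set.range fun a : ℕ × ℕ => u ^ a.1 * d ^ a.2) ≤
      M.restrictScalars K := by
    rw [Submodule.span_le]
    rintro _ ⟨a, rfl⟩
    exact h3 a
  refine ⟨?_⟩
  have h4 : M = ⊤ := Submodule.eq_top_iff'.2 fun q => h2 (hspan q)
  rw [← h4]; exact h1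

theorem GUc {R0 Z Q : Type} [CommRing R0] [IsDomain R0] [Infinite R0] [Algebra K R0]
    [CommRing Z] [Algebra K Z] [Algebra R0 Z] [IsScalarTower K R0 Z] [Ring Q] [Algebra K Q]
    (j : Z →ₐ[K] Q) (hj : ∀ z x, j z * x = x * j z) {x y : Z} (hx : IsIntegral R0 x)
    (hy : IsIntegral R0 y) {u d : Q} {n : ℕ} (hn : 0 < n) (hu : u ^ n = j x) (hd : d ^ n = j y)
    (hspan : ∀ q, q ∈ Submodule.span K (Set.range fun a : ℕ × ℕ => u ^ a.1 * d ^ a.2))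
    {b s y0 : Q} (h : b * s + y0 = 1) :
    ∃ (t v : Q) (p : R0), p ≠ 0 ∧ (b + y0 * t) * v = j (algebraMap R0 Z p) := by
  letI : Algebra R0 Q := RingHom.toAlgebra' ((j : Z →+* Q).comp (algebraMap R0 Z))
    (fun c x => hj _ _)
  have hmap : ∀ r : R0, algebraMap R0 Q r = j (algebraMap R0 Z r) := fun _ => rfl
  haveI : IsScalarTower K R0 Q := IsScalarTower.of_algebraMap_eq fun k => by
    rw [hmap, ← IsScalarTower.algebraMap_apply, AlgHom.commutes]
  let j' : Z →ₐ[R0] Q := { (j : Z →+* Q) with commutes' := fun _ => rfl }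
  have hu' : IsIntegral R0 u := IsIntegral.of_pow hn (by rw [hu]; exact hx.map j')
  have hd' : IsIntegral R0 d := IsIntegral.of_pow hn (by rw [hd]; exact hy.map j')
  have hfin := fin_ud hu' hd' hspan
  exact GU (fun x => IsIntegral.of_finite R0 x) h

/-- exponent for Noether normalisation -/
def nnE (p : MvPolynomial (Fin 2) K) : ℕ := p.support.sup (fun d => d 1) + 1

theorem NN (p : MvPolynomial (Fin 2) K) (hp : p ≠ 0) {B Z : Type} [CommRing B] [Algebra K B]
    [CommRing Z] [Algebra K Z] [Algebra B Z] [IsScalarTower K B Z] (T : B) (x y : Z)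
    (hx : x = algebraMap B Z T + y ^ nnE p) (h : MvPolynomial.aeval ![x, y] p = 0) :
    IsIntegral B y := by
  nontriviality B
  set N := nnE p with hN
  have hN0 : 0 < N := Nat.succ_pos _
  let m : (Fin 2 →₀ ℕ) → B[X] := fun d => (X ^ N + C T) ^ d 0 * X ^ d 1
  have hm0 : (X ^ N + C T : B[X]).Monic := monic_X_pow_add_C T hN0.ne'
  have hm : ∀ d, (m d).Monic := fun d => (hm0.pow _).mul (monic_X_pow _)
  have hdeg : ∀ d, (m d).natDegree = N * d 0 + d 1 := by
    intro d
    rw [Monic.natDegree_mul (hm0.pow _) (monic_X_pow _), hm0.natDegree_pow, natDegree_X_pow,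
      natDegree_X_pow_add_C, mul_comm]
  have hlt : ∀ d ∈ p.support, d 1 < N := fun d hd =>
    Nat.lt_succ_of_le (Finset.le_sup (f := fun d : Fin 2 →₀ ℕ => d 1) hd)
  have hinj : ∀ d ∈ p.support, ∀ d' ∈ p.support, (m d).natDegree = (m d').natDegree → d = d' := by
    intro d hd d' hd' e
    rw [hdeg, hdeg] at e
    have h1 := hlt d hd
    have h2 := hlt d' hd'
    have e1 : d 1 = d' 1 := by
      have := congrArg (· % N) e
      simpa [Nat.mod_eq_of_lt h1, Nat.mod_eq_of_lt h2] using this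
    have e0 : d 0 = d' 0 := by
      rw [e1] at e
      exact Nat.eq_of_mul_eq_mul_left hN0 (Nat.add_right_cancel e)
    ext i; fin_cases i <;> assumption
  have hne : p.support.Nonempty := by
    rw [Finset.nonempty_iff_ne_empty, Ne, MvPolynomial.support_eq_empty]; exact hp
  obtain ⟨d0, hd0, hmax⟩ := Finset.exists_max_image p.support (fun d => (m d).natDegree) hne
  let k : K := (p.coeff d0)⁻¹
  have hc0 : p.coeff d0 ≠ 0 := MvPolynomial.mem_support_iff.1 hd0
  let G : B[X] := ∑ d ∈ p.support, C (algebraMap K B (k * p.coeff d)) * m d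
  have hG : G.Monic := by
    classical
    have : G = m d0 + ∑ d ∈ p.support.erase d0, C (algebraMap K B (k * p.coeff d)) * m d := by
      simp only [G]
      rw [← Finset.add_sum_erase _ _ hd0]
      simp [k, hc0]
    rw [this]
    refine Monic.add_of_left (hm d0) ?_
    rw [degree_eq_natDegree (hm d0).ne_zero, ← mem_degreeLT]
    refine Submodule.sum_mem _ fun d hd => ?_
    rw [mem_degreeLT]
    have hd1 := Finset.mem_of_mem_erase hd
    rw [← smul_eq_C_mul]
    refine lt_of_le_of_lt (degree_smul_le _ _) ?_
    rw [degree_eq_natDegree (hm d).ne_zero]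
    have h3 := hmax d hd1
    have h4 : (m d).natDegree ≠ (m d0).natDegree := fun e => Finset.ne_of_mem_erase hd (hinj d hd1 d0 hd0 e)
    exact_mod_cast lt_of_le_of_ne h3 h4
  refine ⟨G, hG, ?_⟩
  rw [MvPolynomial.aeval_def, MvPolynomial.eval₂_eq'] at h
  simp only [G, m, eval₂_finsetSum, eval₂_mul, eval₂_pow, eval₂_add, eval₂_C, eval₂_X]
  have h5 : ∀ d, algebraMap B Z (algebraMap K B (k * p.coeff d)) * ((y ^ N + algebraMap B Z T) ^ d 0 * y ^ d 1)
      = algebraMap K Z k * (algebraMap K Z (p.coeff d) * ∏ i, ![x, y] i ^ d i) := by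
    intro d
    rw [← IsScalarTower.algebraMap_apply, map_mul, Fin.prod_univ_two]
    simp only [Matrix.cons_val_zero, Matrix.cons_val_one]
    rw [hx, add_comm (y ^ N)]; ring
  simp only [h5]
  rw [← Finset.mul_sum, h, mul_zero]

end GUc

section Quot
variable {K A : Type} [Field K] [Ring A] [Algebra K A]

theorem quot_ex (K : Type) [Field K] [Algebra K A] (I : Submodule Aᵐᵒᵖ A) (hI : Lcl I) :
    ∃ (Q : Type) (_ : Ring Q) (_ : Algebra K Q) (π : A →ₐ[K] Q), Function.Surjective π ∧
      ∀ x, π x = 0 ↔ x ∈ I := by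
  let J : Ideal A := { I.toAddSubmonoid with smul_mem' := fun r x hx => hI r x hx }
  haveI : J.IsTwoSided := ⟨fun {a} b ha => (rmul (I := I) ha b : a * b ∈ I)⟩
  refine ⟨A ⧸ J, inferInstance, inferInstance, Ideal.Quotient.mkₐ K J,
    Ideal.Quotient.mkₐ_surjective K J, fun x => ?_⟩
  rw [Ideal.Quotient.mkₐ_eq_mk, Ideal.Quotient.eq_zero_iff_mem]
  rfl

theorem quot_c (K : Type) [Field K] [Algebra K A] (z : A) (hz : ∀ x, z * x = x * z) :
    ∃ (Q : Type) (_ : Ring Q) (_ : Algebra K Q) (π : A →ₐ[K] Q), Function.Surjective π ∧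
      ∀ x, π x = 0 ↔ ∃ r, z * r = x := by
  obtain ⟨Q, i1, i2, π, h1, h2⟩ := quot_ex K (prin z) (by
    rintro r _ ⟨x, rfl⟩
    exact ⟨r * x, by simp [← mul_assoc, hz r]⟩)
  exact ⟨Q, i1, i2, π, h1, fun x => (h2 x).trans mem_prin⟩

/-- CRT along a central element -/
theorem crt (z : A) (hz : ∀ x, z * x = x * z) (Pr : K → A → Prop)
    (hPr : ∀ l x r, Pr l x → Pr l (x + (z - algebraMap K A l) * r))
    (Y : Submodule Aᵐᵒᵖ A) (b : A) (S : Finset K) (hS : ∀ l ∈ S, ∃ y ∈ Y, Pr l (b + y)) :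
    ∃ y ∈ Y, ∀ l ∈ S, Pr l (b + y) := by
  classical
  have hcen : ∀ (f : K[X]) x, aeval z f * x = x * aeval z f := by
    intro f x
    have h1 : Commute x z := (hz x).symm
    rw [aeval_eq_sum_range]
    refine (Commute.sum_right _ _ _ fun i _ => ?_).symm
    exact (h1.pow_right i).smul_right _
  induction S using Finset.induction_on with
  | empty => exact ⟨0, Submodule.zero_mem _, by simp⟩
  | insert l S hl ih =>
    obtain ⟨y, hy, h1⟩ := ih fun m hm => hS m (Finset.mem_insert_of_mem hm)
    obtain ⟨y', hy', h2⟩ := hS l (Finset.mem_insert_self _ _)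
    let θ : K[X] := ∏ m ∈ S, (X - C m)
    have hθ : θ.eval l ≠ 0 := by
      simp only [θ, eval_prod, eval_sub, eval_X, eval_C]
      rw [Finset.prod_ne_zero_iff]
      intro m hm h0
      rw [sub_eq_zero] at h0
      exact hl (h0 ▸ hm)
    let φ : K[X] := C (θ.eval l)⁻¹ * θ
    have hφ : φ.eval l = 1 := by simp [φ, hθ]
    refine ⟨y + (y' - y) * aeval z φ, Submodule.add_mem _ hy (rmul (Submodule.sub_mem _ hy' hy) _), ?_⟩
    intro m hm
    rcases Finset.mem_insert.1 hm with rfl | hm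
    · obtain ⟨q, hq⟩ := X_sub_C_dvd_sub_C_eval (a := m) (p := φ)
      rw [hφ] at hq
      have h3 := hPr m (b + y') (aeval z q * (y' - y)) h2
      convert h3 using 1
      have h4 := congrArg (aeval z) hq
      simp only [map_sub, map_mul, aeval_X, aeval_C, map_one] at h4
      rw [← mul_assoc, ← h4, ← hcen φ]
      noncomm_ring
    · obtain ⟨q, hq⟩ : X - C m ∣ φ := Dvd.dvd.mul_left (Finset.dvd_prod_of_mem (fun m => X - C m) hm) _
      have h3 := hPr m (b + y) (aeval z q * (y' - y)) (h1 m hm)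
      convert h3 using 1
      rw [← hcen φ, ← mul_assoc, hq]
      simp only [map_sub, map_mul, aeval_X, aeval_C]
      abel

end Quot
end DUP

namespace DUP
open Polynomial

structure AD {K A : Type} [Field K] [Ring A] [Algebra K A] (μ ε : K) (n : ℕ) (U D w : A) : Prop where
  prim : IsPrimitiveRoot μ n
  hn : 2 ≤ n
  wU : w * U = μ • (U * w)
  Dw : D * w = μ • (w * D)
  DU : D * U = μ • (U * D) + w + algebraMap K A ε
  gen : Algebra.adjoin K {U, D} = ⊤
  univ : ∀ (Q : Type) [Ring Q] [Algebra K Q] (u d v : Q), v * u = μ • (u * v) → d * v = μ • (v * d) →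
    d * u = μ • (u * d) + v + algebraMap K Q ε → ∃ π : A →ₐ[K] Q, π U = u ∧ π D = d
  nontriv : Nontrivial A

section A
variable {K A : Type} [Field K] [Ring A] [Algebra K A] {μ ε : K} {n : ℕ} {U D w : A}

theorem AD.ind (hA : AD μ ε n U D w) (S : Subalgebra K A) (hU : U ∈ S) (hD : D ∈ S) (x : A) : x ∈ S := by
  have h : (⊤ : Subalgebra K A) ≤ S := by
    rw [← hA.gen, Algebra.adjoin_le_iff]
    rintro y (rfl | rfl) <;> assumption
  exact h trivial

theorem AD.mu0 (hA : AD μ ε n U D w) : μ ≠ 0 := hA.prim.ne_zero (by have := hA.hn; omega)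

theorem AD.mu1 (hA : AD μ ε n U D w) : μ ≠ 1 := hA.prim.ne_one (by have := hA.hn; omega)

theorem AD.wx (hA : AD μ ε n U D w) (x : A) : ∃ x', w * x = x' * w := by
  let S : Subalgebra K A :=
    { carrier := {x | ∃ x', w * x = x' * w}
      mul_mem' := by
        rintro a b ⟨a', ha⟩ ⟨b', hb⟩
        exact ⟨a' * b', by rw [← mul_assoc, ha, mul_assoc, hb, mul_assoc]⟩
      add_mem' := by
        rintro a b ⟨a', ha⟩ ⟨b', hb⟩
        exact ⟨a' + b', by rw [mul_add, ha, hb, add_mul]⟩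
      algebraMap_mem' := fun r => ⟨algebraMap K A r, (Algebra.commutes r w).symm⟩ }
  refine hA.ind S ⟨μ • U, by rw [hA.wU, smul_mul_assoc]⟩ ⟨μ⁻¹ • D, ?_⟩ x
  rw [smul_mul_assoc, hA.Dw, smul_smul, inv_mul_cancel₀ hA.mu0, one_smul]

theorem AD.wLcl (hA : AD μ ε n U D w) : Lcl (prin w) := by
  let S : Subalgebra K A :=
    { carrier := {x | ∃ x', x * w = w * x'}
      mul_mem' := by
        rintro a b ⟨a', ha⟩ ⟨b', hb⟩
        exact ⟨a' * b', by rw [mul_assoc, hb, ← mul_assoc, ha, mul_assoc]⟩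
      add_mem' := by
        rintro a b ⟨a', ha⟩ ⟨b', hb⟩
        exact ⟨a' + b', by rw [mul_add, ← ha, ← hb, add_mul]⟩
      algebraMap_mem' := fun r => ⟨algebraMap K A r, (Algebra.commutes r w)⟩ }
  rintro r _ ⟨x, rfl⟩
  obtain ⟨r', hr⟩ := hA.ind S ⟨μ⁻¹ • U, by
    rw [mul_smul_comm, hA.wU, smul_smul, inv_mul_cancel₀ hA.mu0, one_smul]⟩
    ⟨μ • D, by rw [hA.Dw, mul_smul_comm]⟩ r
  exact ⟨r' * x, by simp only [lm_apply]; rw [← mul_assoc, ← mul_assoc, hr]⟩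

theorem AD.wpowU (hA : AD μ ε n U D w) (k : ℕ) : w ^ k * U = μ ^ k • (U * w ^ k) := by
  induction k with
  | zero => simp
  | succ k ih =>
    rw [pow_succ w, mul_assoc, hA.wU, mul_smul_comm, ← mul_assoc, ih, smul_mul_assoc, smul_smul,
      mul_assoc, ← pow_succ']

theorem AD.Dwpow (hA : AD μ ε n U D w) (k : ℕ) : D * w ^ k = μ ^ k • (w ^ k * D) := by
  induction k with
  | zero => simp
  | succ k ih =>
    rw [pow_succ w, ← mul_assoc, ih, smul_mul_assoc, mul_assoc, hA.Dw, mul_smul_comm, smul_smul,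
      ← pow_succ, mul_assoc]

theorem AD.zc (hA : AD μ ε n U D w) (x : A) : w ^ n * x = x * w ^ n := by
  have h := hA.ind (Subalgebra.centralizer K {w ^ n}) (by
    rw [Subalgebra.mem_centralizer_iff]
    rintro _ rfl
    rw [hA.wpowU, hA.prim.pow_eq_one, one_smul]) (by
    rw [Subalgebra.mem_centralizer_iff]
    rintro _ rfl
    rw [hA.Dwpow, hA.prim.pow_eq_one, one_smul]) x
  rw [Subalgebra.mem_centralizer_iff] at h
  exact h _ rfl

/-- the twist of `K[X]` -/
def sX (μ : K) : K[X] →ₐ[K] K[X] := aeval (μ • X)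

theorem AD.rel (hA : AD μ ε n U D w) : DURel (sX μ) (X : K[X]) μ ε (aeval w) U D where
  sw := by simp [sX]
  fU f := by
    induction f using Polynomial.induction_on' with
    | add p q hp hq => rw [map_add, map_add, map_add, add_mul, mul_add, hp, hq]
    | monomial k a =>
      simp only [sX, aeval_monomial, map_mul, map_pow, AlgHom.commutes, map_smul, aeval_X]
      rw [mul_assoc, hA.wpowU, _root_.smul_pow, mul_smul_comm, mul_smul_comm, mul_smul_comm,
        ← mul_assoc, Algebra.commutes, mul_assoc]
  Df f := by
    induction f using Polynomial.induction_on' with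
    | add p q hp hq => rw [map_add, map_add, map_add, add_mul, mul_add, hp, hq]
    | monomial k a =>
      simp only [sX, aeval_monomial, map_mul, map_pow, AlgHom.commutes, map_smul, aeval_X]
      rw [← mul_assoc, ← Algebra.commutes, mul_assoc, hA.Dwpow, _root_.smul_pow, mul_smul_comm,
        mul_smul_comm, smul_mul_assoc, mul_assoc]
  DU := by rw [aeval_X]; exact hA.DU

theorem cenud {Q : Type} [Ring Q] [Algebra K Q] {u d : Q} (hp : IsPrimitiveRoot μ n) (hn : 2 ≤ n)
    (h : d * u = μ • (u * d) + algebraMap K Q ε) : d * u ^ n = u ^ n * d := by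
  have h1 : DURel (AlgHom.id K K) (0 : K) μ ε (Algebra.ofId K Q) u d :=
    { sw := by simp
      fU := fun f => Algebra.commutes _ _
      Df := fun f => (Algebra.commutes _ _).symm
      DU := by simp [h] }
  rw [h1.DUpow, hp.pow_eq_one, one_smul]
  obtain ⟨m, rfl⟩ : ∃ m, n = m + 1 := ⟨n - 1, by omega⟩
  rw [cc_closed, hp.geom_sum_eq_zero (by omega)]
  simp

/-- evaluation of a bivariate polynomial at `U^n, D^n` -/
def pev (n : ℕ) {Q : Type} [Ring Q] [Algebra K Q] (u d : Q) (p : MvPolynomial (Fin 2) K) : Q :=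
  ∑ s ∈ p.support, p.coeff s • ((u ^ n) ^ (s 0) * (d ^ n) ^ (s 1))

theorem pev_map {Q : Type} [Ring Q] [Algebra K Q] (π : A →ₐ[K] Q) (p : MvPolynomial (Fin 2) K) :
    π (pev n U D p) = pev n (π U) (π D) p := by
  simp [pev]

theorem AD.preQ (hA : AD μ ε n U D w) (N : Submodule Aᵐᵒᵖ A) (hN : Lcl N) (hw : w ∈ N) :
    ∃ (Q : Type) (_ : Ring Q) (_ : Algebra K Q) (π : A →ₐ[K] Q) (x y : Subalgebra.center K Q),
      Function.Surjective π ∧ (∀ x, π x = 0 ↔ x ∈ N) ∧ (π U) ^ n = x ∧ (π D) ^ n = y ∧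
      (∀ p : MvPolynomial (Fin 2) K, π (pev n U D p) = (MvPolynomial.aeval ![x, y] p : Subalgebra.center K Q)) ∧
      (∀ q, q ∈ Submodule.span K (Set.range fun a : ℕ × ℕ => (π U) ^ a.1 * (π D) ^ a.2)) := by
  obtain ⟨Q, i1, i2, π, hs, hk⟩ := quot_ex K N hN
  have hw0 : π w = 0 := (hk w).2 hw
  have hdu : π D * π U = μ • (π U * π D) + algebraMap K Q ε := by
    rw [← map_mul, hA.DU]; simp [hw0]
  have hc1 := cenud hA.prim hA.hn hdu
  have hc2 : π D ^ n * π U = π U * π D ^ n := by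
    have h1 : MulOpposite.op (π U) * MulOpposite.op (π D) = μ • (MulOpposite.op (π D) * MulOpposite.op (π U))
        + algebraMap K Qᵐᵒᵖ ε := by
      rw [← MulOpposite.op_mul, hdu]; simp
    have h2 := cenud hA.prim hA.hn h1
    exact MulOpposite.op_injective (by simpa using h2)
  have hcen : ∀ q : Q, Commute q (π U) → Commute q (π D) → q ∈ Subalgebra.center K Q := by
    intro q h1 h2
    rw [Subalgebra.mem_center_iff]
    intro b
    obtain ⟨a, rfl⟩ := hs b
    have h := hA.ind ((Subalgebra.centralizer K {q}).comap π) (by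
      rw [Subalgebra.mem_comap, Subalgebra.mem_centralizer_iff]
      rintro _ rfl; exact h1) (by
      rw [Subalgebra.mem_comap, Subalgebra.mem_centralizer_iff]
      rintro _ rfl; exact h2) a
    rw [Subalgebra.mem_comap, Subalgebra.mem_centralizer_iff] at h
    exact (h q rfl).symm
  let x : Subalgebra.center K Q := ⟨π U ^ n, hcen _ (Commute.pow_left (Commute.refl _) _) hc1.symm⟩
  let y : Subalgebra.center K Q := ⟨π D ^ n, hcen _ hc2 (Commute.pow_left (Commute.refl _) _)⟩
  refine ⟨Q, i1, i2, π, x, y, hs, hk, rfl, rfl, ?_, ?_⟩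
  · intro p
    rw [pev_map, MvPolynomial.aeval_def, MvPolynomial.eval₂_eq', pev]
    simp only [Fin.prod_univ_two, Matrix.cons_val_zero, Matrix.cons_val_one]
    push_cast
    refine Finset.sum_congr rfl fun s _ => ?_
    rw [Algebra.smul_def]
  · intro q
    obtain ⟨a, rfl⟩ := hs q
    obtain ⟨F, rfl⟩ := hA.rel.surj hA.gen a
    induction F using Finsupp.induction_linear with
    | zero => simp
    | add f g hf hg => rw [map_add, map_add]; exact Submodule.add_mem _ hf hg
    | single a f =>
      obtain ⟨i, j⟩ := a
      have h0 : aeval (0 : Q) f = algebraMap K Q (f.coeff 0) := by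
        rw [aeval_def, eval₂_at_zero]
      rw [Phi_single, map_mul, map_mul, ← aeval_algHom_apply, hw0, h0, ← Algebra.smul_def,
        mul_smul_comm, map_pow, map_pow]
      exact Submodule.smul_mem _ _ (Submodule.subset_span ⟨(i, j), rfl⟩)

theorem AD.postQ {N : Submodule Aᵐᵒᵖ A} {Q : Type} [Ring Q] [Algebra K Q] {π : A →ₐ[K] Q}
    (hs : Function.Surjective π) (hk : ∀ x, π x = 0 ↔ x ∈ N) {b y0 : A} {t v : Q}
    {c : Subalgebra.center K Q} (h : (π b + π y0 * t) * v = c) {Y : Submodule Aᵐᵒᵖ A} (hY : y0 ∈ Y) :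
    ∃ y ∈ Y, ∃ N', Lcl N' ∧ N ≤ N' ∧ N' ≤ prin (b + y) ⊔ N ∧ (∀ x, π x = c → x ∈ N') := by
  obtain ⟨t, rfl⟩ := hs t
  obtain ⟨v, rfl⟩ := hs v
  have hc : ∀ q : Q, q * c = c * q := fun q => (Subalgebra.mem_center_iff.1 c.2 q)
  refine ⟨y0 * t, rmul hY _,
    { carrier := {x | ∃ r : Q, π x = c * r}
      zero_mem' := ⟨0, by simp⟩
      add_mem' := ?_
      smul_mem' := ?_ }, ?_, ?_, ?_, ?_⟩
  · rintro a b ⟨r, hr⟩ ⟨s, hs⟩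
    exact ⟨r + s, by rw [map_add, hr, hs, mul_add]⟩
  · rintro a b ⟨r, hr⟩
    refine ⟨r * π a.unop, ?_⟩
    change π (b * a.unop) = _
    rw [map_mul, hr, mul_assoc]
  · rintro r x ⟨s, hs⟩
    exact ⟨π r * s, by rw [map_mul, hs, ← mul_assoc, hc, mul_assoc]⟩
  · intro x hx
    exact ⟨0, by rw [(hk x).2 hx, mul_zero]⟩
  · rintro x ⟨r, hr⟩
    obtain ⟨r, rfl⟩ := hs r
    have h1 : x - (b + y0 * t) * (v * r) ∈ N := by
      rw [← hk, map_sub, hr, ← h]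
      simp [mul_assoc]
    rw [← sub_add_cancel x ((b + y0 * t) * (v * r)), add_comm (_ - _)]
    exact Submodule.add_mem_sup ⟨_, rfl⟩ h1
  · intro x hx
    exact ⟨1, by rw [hx, mul_one]⟩

end A
end DUP

namespace DUP
open Polynomial

section A
variable {K A : Type} [Field K] [CharZero K] [Ring A] [Algebra K A] {μ ε : K} {n : ℕ} {U D w : A}

theorem AD.st1 (hA : AD μ ε n U D w) {a s y0 : A} {Y : Submodule Aᵐᵒᵖ A} (hy : y0 ∈ Y)
    (h : a * s + y0 = 1) :
    ∃ y ∈ Y, a + y ≠ 0 ∧ ∃ N1, Lcl N1 ∧ w ∈ N1 ∧ N1 ≤ prin (a + y) ⊔ prin w ∧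
      ∃ p : MvPolynomial (Fin 2) K, p ≠ 0 ∧ pev n U D p ∈ N1 := by
  obtain ⟨Q, i1, i2, π, x, y, hs, hk, hx, hy', hpe, hspan⟩ :=
    hA.preQ (prin w) hA.wLcl (self_mem_prin w)
  have hnp : 0 < n := by have := hA.hn; omega
  letI : Algebra (MvPolynomial (Fin 2) K) (Subalgebra.center K Q) :=
    (MvPolynomial.aeval ![x, y] : MvPolynomial (Fin 2) K →ₐ[K] Subalgebra.center K Q).toRingHom.toAlgebra
  have hmap : ∀ p : MvPolynomial (Fin 2) K, algebraMap _ (Subalgebra.center K Q) p =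
    MvPolynomial.aeval ![x, y] p := fun _ => rfl
  haveI : IsScalarTower K (MvPolynomial (Fin 2) K) (Subalgebra.center K Q) :=
    IsScalarTower.of_algebraMap_eq fun k => by
      rw [hmap, ← MvPolynomial.C_eq_algebraMap] <;> simp
  have hxi : IsIntegral (MvPolynomial (Fin 2) K) x := by
    have : x = algebraMap (MvPolynomial (Fin 2) K) _ (MvPolynomial.X 0) := by rw [hmap]; simp
    rw [this]; exact isIntegral_algebraMap
  have hyi : IsIntegral (MvPolynomial (Fin 2) K) y := by
    have : y = algebraMap (MvPolynomial (Fin 2) K) _ (MvPolynomial.X 1) := by rw [hmap]; simp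
    rw [this]; exact isIntegral_algebraMap
  obtain ⟨t, v, p, hp0, hp⟩ := GUc (R0 := MvPolynomial (Fin 2) K) (Subalgebra.center K Q).val
    (fun z x => (Subalgebra.mem_center_iff.1 z.2 x).symm) hxi hyi hnp hx hy' hspan
    (b := π a) (s := π s) (y0 := π y0) (by rw [← map_mul, ← map_add, h, map_one])
  obtain ⟨y1, hy1, N1, hN1, hN2, hN3, hN4⟩ := AD.postQ hs hk (c := algebraMap _ _ p) hp hy
  have hpm : pev n U D p ∈ N1 := hN4 _ (by rw [hpe, hmap])
  by_cases h0 : a + y1 = 0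
  · have hne : ∃ y2 ∈ Y, a + y2 ≠ 0 := by
      by_contra! hcon
      have ha : a = 0 := by simpa using hcon 0 (Submodule.zero_mem _)
      have h2 := hcon _ hy
      rw [ha, zero_add] at h2
      rw [ha, h2] at h
      have := hA.nontriv
      simp at h
    obtain ⟨y2, hy2, h2⟩ := hne
    refine ⟨y2, hy2, h2, N1, hN1, hN2 (self_mem_prin w), hN3.trans ?_, p, hp0, hpm⟩
    rw [h0, sup_le_iff, prin_le]
    exact ⟨Submodule.zero_mem _, le_sup_right⟩
  · exact ⟨y1, hy1, h0, N1, hN1, hN2 (self_mem_prin w), hN3, p, hp0, hpm⟩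

theorem AD.st2 (hA : AD μ ε n U D w) {N1 : Submodule Aᵐᵒᵖ A} (hN : Lcl N1) (hw : w ∈ N1)
    {p : MvPolynomial (Fin 2) K} (hp0 : p ≠ 0) (hpN : pev n U D p ∈ N1)
    {b s y0 : A} {Y : Submodule Aᵐᵒᵖ A} (hy : y0 ∈ Y)
    (h : b * s + y0 = 1) :
    ∃ y ∈ Y, ∃ N2, Lcl N2 ∧ N1 ≤ N2 ∧ N2 ≤ prin (b + y) ⊔ N1 ∧
      ∃ q : K[X], q ≠ 0 ∧ aeval (U ^ n - (D ^ n) ^ nnE p) q ∈ N2 := by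
  obtain ⟨Q, i1, i2, π, x, y, hs, hk, hx, hy', hpe, hspan⟩ := hA.preQ N1 hN hw
  have hnp : 0 < n := by have := hA.hn; omega
  letI : Algebra K[X] (Subalgebra.center K Q) :=
    (aeval (x - y ^ nnE p) : K[X] →ₐ[K] Subalgebra.center K Q).toRingHom.toAlgebra
  have hmap : ∀ q : K[X], algebraMap _ (Subalgebra.center K Q) q =
    aeval (x - y ^ nnE p) q := fun _ => rfl
  haveI : IsScalarTower K K[X] (Subalgebra.center K Q) :=
    IsScalarTower.of_algebraMap_eq fun k => by
      rw [hmap, ← C_eq_algebraMap]; simp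
  have hpz : MvPolynomial.aeval ![x, y] p = 0 := by
    have := hpe p
    rw [(hk _).2 hpN] at this
    exact Subtype.ext this.symm
  have hyi : IsIntegral K[X] y := NN p hp0 X x y (by rw [hmap]; simp) hpz
  have hxi : IsIntegral K[X] x := by
    have : x = algebraMap K[X] _ X + y ^ nnE p := by rw [hmap]; simp
    rw [this]; exact isIntegral_algebraMap.add (hyi.pow _)
  obtain ⟨t, v, q, hq0, hq⟩ := GUc (R0 := K[X]) (Subalgebra.center K Q).val
    (fun z x => (Subalgebra.mem_center_iff.1 z.2 x).symm) hxi hyi hnp hx hy' hspan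
    (b := π b) (s := π s) (y0 := π y0) (by rw [← map_mul, ← map_add, h, map_one])
  obtain ⟨y1, hy1, N2, h1, h2, h3, h4⟩ := AD.postQ hs hk (c := algebraMap _ _ q) hq hy
  refine ⟨y1, hy1, N2, h1, h2, h3, q, hq0, h4 _ ?_⟩
  have h5 := aeval_algHom_apply (Subalgebra.center K Q).val (x - y ^ nnE p) q
  rw [hmap, ← aeval_algHom_apply]
  rw [map_sub, map_pow, map_pow, map_pow, hx, hy']
  exact h5

theorem AD.st3 (hA : AD μ ε n U D w) {N2 : Submodule Aᵐᵒᵖ A} (hN : Lcl N2) (hw : w ∈ N2)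
    {p : MvPolynomial (Fin 2) K} (hp0 : p ≠ 0) (hpN : pev n U D p ∈ N2)
    {q : K[X]} (hq0 : q ≠ 0) (hqN : aeval (U ^ n - (D ^ n) ^ nnE p) q ∈ N2)
    {b s y0 : A} {Y : Submodule Aᵐᵒᵖ A} (hy : y0 ∈ Y)
    (h : b * s + y0 = 1) :
    ∃ y ∈ Y, (1 : A) ∈ prin (b + y) ⊔ N2 := by
  obtain ⟨Q, i1, i2, π, x, y, hs, hk, hx, hy', hpe, hspan⟩ := hA.preQ N2 hN hw
  have hnp : 0 < n := by have := hA.hn; omega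
  have hpz : MvPolynomial.aeval ![x, y] p = 0 := by
    have := hpe p
    rw [(hk _).2 hpN] at this
    exact Subtype.ext this.symm
  have hqz : aeval (x - y ^ nnE p) q = 0 := by
    have h5 := aeval_algHom_apply (Subalgebra.center K Q).val (x - y ^ nnE p) q
    have h6 := (hk _).2 hqN
    rw [← aeval_algHom_apply, map_sub, map_pow, map_pow, map_pow, hx, hy'] at h6
    exact Subtype.ext (h5.symm.trans h6)
  have hT : IsIntegral K (x - y ^ nnE p) := by
    rw [← isAlgebraic_iff_isIntegral]
    exact ⟨q, hq0, hqz⟩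
  let B := integralClosure K (Subalgebra.center K Q)
  have hyB : IsIntegral B y := NN p hp0 (⟨_, hT⟩ : B) x y (by
    change x = (x - y ^ nnE p) + y ^ nnE p
    abel) hpz
  have hyi : IsIntegral K y := isIntegral_trans y hyB
  have hxi : IsIntegral K x := by
    have : x = (x - y ^ nnE p) + y ^ nnE p := by abel
    rw [this]; exact hT.add (hyi.pow _)
  obtain ⟨t, v, k, hk0, hkk⟩ := GUc (R0 := K) (Subalgebra.center K Q).val
    (fun z x => (Subalgebra.mem_center_iff.1 z.2 x).symm) hxi hyi hnp hx hy' hspan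
    (b := π b) (s := π s) (y0 := π y0) (by rw [← map_mul, ← map_add, h, map_one])
  obtain ⟨y1, hy1, N3, h1, h2, h3, h4⟩ := AD.postQ hs hk (c := algebraMap _ _ k) hkk hy
  refine ⟨y1, hy1, h3 ?_⟩
  have h5 : algebraMap K A k ∈ N3 := h4 _ (by rw [AlgHom.commutes]; rfl)
  have h6 := rmul h5 (algebraMap K A k⁻¹)
  rwa [← map_mul, mul_inv_cancel₀ hk0, map_one] at h6

end A
end DUP

namespace DUP
open Polynomial

structure LD {K L A E R : Type} [Field K] [Field L] [Algebra K L] [Ring A] [Algebra K A]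
    [CommRing E] [Algebra L E] [Ring R] [Algebra L R] (μ ε : K) (n : ℕ) (U D w : A) (ζ : L)
    (σ : E →ₐ[L] E) (v : E) (ι : E →ₐ[L] R) (u d : R) (π : A →+* R) : Prop where
  pbw : PBW σ v (algebraMap K L μ) (algebraMap K L ε) ι u d
  ed : EDat σ v (algebraMap K L μ) n ζ
  pU : π U = u
  pD : π D = d
  pw : π w = ι v
  pk : ∀ k : K, π (algebraMap K A k) = algebraMap L R (algebraMap K L k)
  dv : ∀ f : L[X], aeval v f = 0 → X ^ n - C ζ ∣ f

section Ex
variable {K L A : Type} [Field K] [Field L] [Algebra K L] [Ring A] [Algebra K A]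
  {μ ε : K} {n : ℕ} {U D w : A}

theorem exists_LD (hA : AD μ ε n U D w) (ζ : L) (hζ : ζ ≠ 0) :
    ∃ (E R : Type) (_ : CommRing E) (_ : Algebra L E) (_ : Ring R) (_ : Algebra L R)
      (σ : E →ₐ[L] E) (v : E) (ι : E →ₐ[L] R) (u d : R) (π : A →+* R),
      LD μ ε n U D w ζ σ v ι u d π := by
  have hnp : 0 < n := by have := hA.hn; omega
  let μ' := algebraMap K L μ
  have hprim : IsPrimitiveRoot μ' n := hA.prim.map_of_injective (algebraMap K L).injective
  let P : L[X] := X ^ n - C ζ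
  have hP0 : P ≠ 0 := X_pow_sub_C_ne_zero hnp ζ
  let v : AdjoinRoot P := AdjoinRoot.root P
  have hwn : v ^ n = algebraMap L (AdjoinRoot P) ζ := by
    have h : aeval v P = 0 := by rw [AdjoinRoot.aeval_eq, AdjoinRoot.mk_self]
    simpa [P, sub_eq_zero] using h
  let σ : AdjoinRoot P →ₐ[L] AdjoinRoot P := AdjoinRoot.liftAlgHom P (Algebra.ofId L _) (μ' • v) (by
    change eval₂ (algebraMap L (AdjoinRoot P)) _ P = 0
    simp only [P, eval₂_sub, eval₂_pow, eval₂_X, eval₂_C]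
    rw [_root_.smul_pow, hprim.pow_eq_one, one_smul, hwn, sub_self])
  have hs : σ v = μ' • v := AdjoinRoot.liftAlgHom_root _ _ _ _
  have hadj : Algebra.adjoin L {v} = ⊤ := AdjoinRoot.adjoinRoot_eq_top
  obtain ⟨R, i1, i2, ι, u, d, hp⟩ := exists_PBW σ v μ' (algebraMap K L ε) hs hadj
  have hed : EDat σ v μ' n ζ := ⟨hnp, hprim, hs, hwn, hζ, hadj, by
    rw [(AdjoinRoot.powerBasis hP0).finrank, AdjoinRoot.powerBasis_dim, natDegree_X_pow_sub_C]⟩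
  letI : Algebra K R := Algebra.compHom R (algebraMap K L)
  have hsm : ∀ (k : K) (r : R), k • r = (algebraMap K L k) • r := fun _ _ => rfl
  have hal : ∀ (k : K), algebraMap K R k = algebraMap L R (algebraMap K L k) := fun _ => rfl
  have e1 : ι v * u = μ • (u * ι v) := by
    rw [hp.fU, hs, map_smul, mul_smul_comm, hsm]
  have e2 : d * ι v = μ • (ι v * d) := by
    rw [hp.Df, hs, map_smul, smul_mul_assoc, hsm]
  have e3 : d * u = μ • (u * d) + ι v + algebraMap K R ε := by
    rw [hp.DU, hsm, hal]
  obtain ⟨π, hU, hD⟩ := hA.univ R u d (ι v) e1 e2 e3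
  refine ⟨AdjoinRoot P, R, inferInstance, inferInstance, i1, i2, σ, v, ι, u, d, (π : A →+* R), hp, hed, hU, hD, ?_,
    fun k => π.commutes k, fun f hf => ?_⟩
  · have h : π (D * U) = π (μ • (U * D) + w + algebraMap K A ε) := by rw [hA.DU]
    rw [map_mul, hU, hD, e3, map_add, map_add, map_smul, map_mul, hU, hD, AlgHom.commutes] at h
    exact (add_left_cancel (add_right_cancel h)).symm
  · rwa [AdjoinRoot.aeval_eq, AdjoinRoot.mk_eq_zero] at hf
end Ex

section Loc
variable {K L A E R : Type} [Field K] [Field L] [Algebra K L] [Ring A] [Algebra K A]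
    [CommRing E] [Algebra L E] [Ring R] [Algebra L R] {μ ε : K} {n : ℕ} {U D w : A} {ζ : L}
    {σ : E →ₐ[L] E} {v : E} {ι : E →ₐ[L] R} {u d : R} {π : A →+* R}

/-- substitution -/
def sub (K : Type) {L E : Type} [Field K] [Field L] [Algebra K L] [CommRing E] [Algebra L E] (v : E) :
    K[X] →+* E := ((aeval v : L[X] →ₐ[L] E) : L[X] →+* E).comp (mapRingHom (algebraMap K L))

theorem sub_X : sub (L := L) K v X = v := by simp [sub]
theorem sub_C (k : K) : sub (L := L) K v (C k) = algebraMap L E (algebraMap K L k) := by simp [sub]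

theorem LD.aev (h : LD μ ε n U D w ζ σ v ι u d π) (f : K[X]) :
    π (aeval w f) = ι (sub (L := L) K v f) := by
  have : (π.comp ((aeval w : K[X] →ₐ[K] A) : K[X] →+* A)) = (ι : E →+* R).comp (sub (L := L) K v) := by
    ext k
    · simp [sub_C, h.pk]
    · simp [sub_X, h.pw]
  exact congrArg (fun g => g f) this

theorem LD.phi (h : LD μ ε n U D w ζ σ v ι u d π) (F : ℕ × ℕ →₀ K[X]) :
    π (Phi (aeval w) U D F) = Phi ι u d (F.mapRange (sub (L := L) K v) (map_zero _)) := by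
  induction F using Finsupp.induction_linear with
  | zero => simp
  | add f g hf hg => rw [map_add, map_add, hf, hg, ← map_add, Finsupp.mapRange_add (fun x y => map_add _ x y)]
  | single a f =>
    obtain ⟨i, j⟩ := a
    rw [Phi_single, Finsupp.mapRange_single, Phi_single, map_mul, map_mul, map_pow, map_pow, h.aev,
      h.pU, h.pD]

theorem LD.pz (h : LD μ ε n U D w ζ σ v ι u d π) (f : K[X]) :
    π (aeval (w ^ n) f) = algebraMap L R (aeval ζ f) := by
  have : (π.comp ((aeval (w ^ n) : K[X] →ₐ[K] A) : K[X] →+* A)) =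
      (algebraMap L R).comp ((aeval ζ : K[X] →ₐ[K] L) : K[X] →+* L) := by
    ext k
    · simp [h.pk]
    · have : π (w ^ n) = algebraMap L R ζ := by
        rw [map_pow, h.pw, ← map_pow, h.ed.wn, AlgHom.commutes]
      simpa using this
  exact congrArg (fun g => g f) this

theorem unit_poly [IsAlgClosed K] (h : EDat σ v (algebraMap K L μ) n ζ) (f : K[X]) (hf : f ≠ 0)
    (hr : ∀ ω, f.IsRoot ω → (algebraMap K L ω) ^ n ≠ ζ) : IsUnit (sub (L := L) K v f) := by
  have hsp := (IsAlgClosed.splits f).eq_prod_roots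
  rw [hsp, map_mul, sub_C]
  refine IsUnit.mul ((IsUnit.mk0 _ (by simpa using hf)).map _) ?_
  rw [map_multiset_prod, Multiset.map_map]
  refine Multiset.prod_induction IsUnit _ (fun _ _ => IsUnit.mul) isUnit_one ?_
  intro y hy
  obtain ⟨ω, hω, rfl⟩ := Multiset.mem_map.1 hy
  have h1 := unit_lin h 1 (-algebraMap K L ω) (by
    rw [neg_neg, one_pow, one_mul]; exact hr ω (isRoot_of_mem_roots hω))
  simpa [sub_X, sub_C, sub_eq_add_neg] using h1

/-- a nonzero element has nonzero test polynomial -/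
theorem AD.lead [IsAlgClosed K] (hA : AD μ ε n U D w) {a : A} (ha : a ≠ 0) : ∃ f : K[X], f ≠ 0 ∧
    ∀ {L E R : Type} [Field L] [Algebra K L] [CommRing E] [Algebra L E] [Ring R] [Algebra L R]
    {ζ : L} {σ : E →ₐ[L] E} {v : E} {ι : E →ₐ[L] R} {u d : R} {π : A →+* R},
    LD μ ε n U D w ζ σ v ι u d π → (∀ ω, f.IsRoot ω → (algebraMap K L ω) ^ n ≠ ζ) →
    ∀ x, π a * x = 0 → x = 0 := by
  obtain ⟨F, rfl⟩ := hA.rel.surj hA.gen a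
  have hF0 : F ≠ 0 := by rintro rfl; simp at ha
  refine ⟨∏ p ∈ F.support, F p, Finset.prod_ne_zero_iff.2 fun p hp => Finsupp.mem_support_iff.1 hp, ?_⟩
  intro L E R _ _ _ _ _ _ ζ σ v ι u d π h hr x hx
  rw [h.phi] at hx
  have hun : ∀ p, F p ≠ 0 → IsUnit (sub (L := L) K v (F p)) := by
    intro p hp
    refine unit_poly h.ed _ hp fun ω hω => hr ω ?_
    exact IsRoot.dvd hω (Finset.dvd_prod_of_mem _ (Finsupp.mem_support_iff.2 hp))
  have := h.ed.nontriv
  have hne : F.mapRange (sub (L := L) K v) (map_zero _) ≠ 0 := by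
    obtain ⟨p, hp⟩ := Finsupp.ne_iff.1 hF0
    intro h0
    have := congrArg (fun G => G p) h0
    simp only [Finsupp.mapRange_apply, Finsupp.coe_zero, Pi.zero_apply] at this
    exact (hun p hp).ne_zero this
  obtain ⟨i, j, h1, h2⟩ := exists_lead (ι := ι) (U := u) (D := d) _ hne
  refine lead_unit_reg h.pbw h.ed h2 ?_ hx
  rw [Finsupp.mapRange_apply] at h1 ⊢
  exact hun _ fun h0 => h1 (by rw [h0, map_zero])

theorem LD.lg (h : LD μ ε n U D w ζ σ v ι u d π) {a : R} (ha : ∀ x, a * x = 0 → x = 0) :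
    LG ι u d n (prin a) :=
  grow_reg h.pbw h.ed ha fun x => ⟨x, rfl⟩

/-- for the residue algebra: -/
theorem LD.ker {ζ : K} {E R : Type} [CommRing E] [Algebra K E] [Ring R] [Algebra K R]
    {σ : E →ₐ[K] E} {v : E} {ι : E →ₐ[K] R} {u d : R} {π : A →+* R}
    (hA : AD μ ε n U D w) (h : LD μ ε n U D w ζ σ v ι u d π) {a : A} (ha : π a = 0) :
    ∃ r, (w ^ n - algebraMap K A ζ) * r = a := by
  obtain ⟨F, rfl⟩ := hA.rel.surj hA.gen a
  rw [h.phi] at ha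
  have h1 := h.pbw.inj (ha.trans (map_zero _).symm)
  have hc : ∀ x, (w ^ n - algebraMap K A ζ) * x = x * (w ^ n - algebraMap K A ζ) := by
    intro x
    rw [sub_mul, mul_sub, hA.zc, Algebra.commutes]
  have h2 : ∀ p, ∃ q, F p = (X ^ n - C ζ) * q := by
    intro p
    have := congrArg (fun G => G p) h1
    simp only [Finsupp.mapRange_apply, Finsupp.coe_zero, Pi.zero_apply] at this
    refine h.dv _ ?_
    simpa [sub] using this
  have h3 : Phi (aeval w) U D F ∈ prin (w ^ n - algebraMap K A ζ) := by
    rw [← F.sum_single, Finsupp.sum, map_sum]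
    refine Submodule.sum_mem _ fun p _ => ?_
    obtain ⟨i, j⟩ := p
    obtain ⟨q, hq⟩ := h2 (i, j)
    rw [Phi_single, hq]
    refine ⟨U ^ i * (aeval w q * D ^ j), ?_⟩
    simp only [lm_apply, map_mul, map_sub, map_pow, aeval_X, aeval_C]
    rw [← mul_assoc, hc, mul_assoc, ← mul_assoc _ (aeval w q), ]
  exact h3

theorem LD.surjC {ζ : K} {E R : Type} [CommRing E] [Algebra K E] [Ring R] [Algebra K R]
    {σ : E →ₐ[K] E} {v : E} {ι : E →ₐ[K] R} {u d : R} {π : A →+* R}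
    (h : LD μ ε n U D w ζ σ v ι u d π) : Function.Surjective π := by
  let π' : A →ₐ[K] R := { π with commutes' := h.pk }
  have : π'.range = ⊤ := by
    rw [eq_top_iff, ← h.pbw.gen, Algebra.adjoin_le_iff]
    rintro _ (rfl | rfl)
    · exact ⟨U, h.pU⟩
    · exact ⟨D, h.pD⟩
  intro r
  have hr : r ∈ π'.range := by rw [this]; trivial
  exact hr

theorem AD.S [IsAlgClosed K] [CharZero K] (hA : AD μ ε n U D w) {a : A} (b d : A) (ha : a ≠ 0) {θ : K[X]}
    (hθ : θ ≠ 0) : ∃ (r : A) (g : K[X]), g ≠ 0 ∧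
      d * aeval (w ^ n) g ∈ prin a ⊔ prin (b + d * (aeval (w ^ n) θ * r)) := by
  let L := FractionRing K[X]
  let ζ : L := algebraMap K[X] L X
  have hinj : Function.Injective (algebraMap K[X] L) := IsFractionRing.injective _ _
  have hKL : ∀ k, algebraMap K L k = algebraMap K[X] L (C k) := fun k => by
    rw [IsScalarTower.algebraMap_apply K K[X] L]; rfl
  have hev : ∀ f : K[X], aeval ζ f = algebraMap K[X] L f := fun f => by
    rw [aeval_algebraMap_apply, aeval_X_left_apply]
  haveI : CharZero L := charZero_of_injective_algebraMap (algebraMap K L).injective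
  have hζ : ζ ≠ 0 := fun h => X_ne_zero (hinj (h.trans (map_zero _).symm))
  obtain ⟨E, R, i1, i2, i3, i4, σ, v, ι, u, d', π, h⟩ := exists_LD hA ζ hζ
  have htr : ∀ (c : K) (m : K), m ≠ 0 → algebraMap K L c ≠ algebraMap K L m * ζ := by
    intro c m hm hc
    rw [hKL, hKL, ← map_mul] at hc
    have := congrArg (fun f => coeff f 1) (hinj hc)
    simp [coeff_C] at this
    exact hm this.symm
  have hroot : ∀ (f : K[X]) (ω : K), f.IsRoot ω → (algebraMap K L ω) ^ n ≠ ζ := by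
    intro f ω _ h0
    refine htr (ω ^ n) 1 one_ne_zero ?_
    rw [map_pow, h0, map_one, one_mul]
  have hreg : ∀ a : A, a ≠ 0 → ∀ x, π a * x = 0 → x = 0 := by
    intro a ha
    obtain ⟨f, -, hf⟩ := hA.lead ha
    exact hf h (hroot f)
  have hnt : Nontrivial R := R_nontriv h.pbw h.ed
  have hpi : ∀ x y : A, π x = π y → x = y := by
    intro x y hxy
    by_contra hne
    refine one_ne_zero (α := R) (hreg (x - y) (sub_ne_zero.2 hne) 1 ?_)
    rw [map_sub, hxy, sub_self, zero_mul]
  obtain ⟨hH, hJ⟩ := HH_S h.pbw h.ed hA.hn (by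
    intro m hm
    have h1 := htr ((-(ε * ((μ ^ m - 1) / (μ - 1)))) ^ n) ((m : K) ^ n)
      (pow_ne_zero _ (by exact_mod_cast hm.ne'))
    simpa using h1)
  have hden : ∀ r : R, ∃ g : K[X], g ≠ 0 ∧ ∃ x : A, (algebraMap K[X] L g) • r = π x := by
    intro r
    have hr : r ∈ Algebra.adjoin L {u, d'} := by rw [h.pbw.gen]; trivial
    induction hr using Algebra.adjoin_induction with
    | mem x hx =>
      rcases hx with rfl | rfl
      · exact ⟨1, one_ne_zero, U, by rw [map_one, one_smul, h.pU]⟩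
      · exact ⟨1, one_ne_zero, D, by rw [map_one, one_smul, h.pD]⟩
    | algebraMap l =>
      obtain ⟨⟨p, q⟩, hpq⟩ := IsLocalization.surj (nonZeroDivisors K[X]) l
      refine ⟨q, nonZeroDivisors.coe_ne_zero q, aeval (w ^ n) p, ?_⟩
      rw [h.pz, hev, ← hpq, Algebra.smul_def, ← map_mul, mul_comm]
    | add x y _ _ hx hy =>
      obtain ⟨g1, h1, x1, e1⟩ := hx
      obtain ⟨g2, h2, x2, e2⟩ := hy
      refine ⟨g1 * g2, mul_ne_zero h1 h2, aeval (w ^ n) g2 * x1 + aeval (w ^ n) g1 * x2, ?_⟩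
      rw [map_add π, map_mul π, map_mul π, h.pz, h.pz, ← e1, ← e2, hev, hev, ← Algebra.smul_def,
        ← Algebra.smul_def, smul_smul, smul_smul, map_mul, smul_add, mul_comm (algebraMap K[X] L g2)]
    | mul x y _ _ hx hy =>
      obtain ⟨g1, h1, x1, e1⟩ := hx
      obtain ⟨g2, h2, x2, e2⟩ := hy
      refine ⟨g1 * g2, mul_ne_zero h1 h2, x1 * x2, ?_⟩
      rw [map_mul π, ← e1, ← e2, smul_mul_smul_comm, map_mul]
  let J : AddSubgroup R :=
    ((π : A →+ R).comp (AddMonoidHom.mulLeft (aeval (w ^ n) θ))).range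
  obtain ⟨j, ⟨r, hr⟩, hj⟩ := LT h.pbw h.ed hH (π b) (π d) J (fun j _ => by rw [hJ]; trivial)
    (by
      intro j _
      obtain ⟨g, hg, x, hx⟩ := hden j
      refine ⟨algebraMap K[X] L (θ * g), ?_, x, ?_⟩
      · intro h0
        exact mul_ne_zero hθ hg (hinj (h0.trans (map_zero _).symm))
      · change π (aeval (w ^ n) θ * x) = _
        rw [map_mul, h.pz, hev, ← hx, ← Algebra.smul_def, smul_smul, map_mul]) (prin (π a)) (h.lg (hreg a ha))
  have hj1 := hj (π d) (Submodule.mem_sup_right ⟨1, by rw [hJ]; trivial, by simp⟩) 1 (by rw [hJ]; trivial)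
  have hr' : π (aeval (w ^ n) θ * r) = j := hr
  rw [mul_one, ← hr', ← map_mul, ← map_add] at hj1
  obtain ⟨_, ⟨x, rfl⟩, _, ⟨y, rfl⟩, hxy⟩ := Submodule.mem_sup.1 hj1
  simp only [lm_apply] at hxy
  obtain ⟨g1, h1, x1, e1⟩ := hden x
  obtain ⟨g2, h2, x2, e2⟩ := hden y
  refine ⟨r, g1 * g2, mul_ne_zero h1 h2, ?_⟩
  have : d * aeval (w ^ n) (g1 * g2) = a * (aeval (w ^ n) g2 * x1)
      + (b + d * (aeval (w ^ n) θ * r)) * (aeval (w ^ n) g1 * x2) := by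
    apply hpi
    rw [map_mul, h.pz, map_add π, map_mul π a, map_mul π (_ + _), map_mul π (aeval _ g2),
      map_mul π (aeval _ g1), h.pz, h.pz, hev, hev, hev, ← e1, ← e2, ← Algebra.commutes,
      ← Algebra.smul_def, ← Algebra.smul_def, ← Algebra.smul_def, ← hxy]
    simp only [smul_smul, mul_smul_comm, smul_add, map_mul (algebraMap K[X] L)]
    rw [mul_comm (algebraMap K[X] L g2)]
  rw [this]
  exact Submodule.add_mem_sup ⟨_, rfl⟩ ⟨_, rfl⟩

end Loc
end DUP

namespace DUP
open Polynomial

section Stab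
variable {A : Type} [Ring A]

def Stab (a b c d : A) : Prop :=
  ∃ r1 r2 r3, (1 : A) ∈ prin (a + d * r1) ⊔ prin (b + d * r2) ⊔ prin (c + d * r3)

theorem mem3 {a b c x : A} : x ∈ prin a ⊔ prin b ⊔ prin c ↔ ∃ r s t, a * r + b * s + c * t = x := by
  constructor
  · intro h
    obtain ⟨_, h1, _, ⟨t, rfl⟩, rfl⟩ := Submodule.mem_sup.1 h
    obtain ⟨_, ⟨r, rfl⟩, _, ⟨s, rfl⟩, rfl⟩ := Submodule.mem_sup.1 h1
    exact ⟨r, s, t, rfl⟩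
  · rintro ⟨r, s, t, rfl⟩
    exact Submodule.add_mem_sup (Submodule.add_mem_sup ⟨r, rfl⟩ ⟨s, rfl⟩) ⟨t, rfl⟩

theorem Stab.red {a b c d y : A} (h : Stab (a + y) b c d) (hy : y ∈ prin b ⊔ prin c ⊔ prin d) :
    Stab a b c d := by
  obtain ⟨t, s, r, rfl⟩ := mem3.1 hy
  obtain ⟨r1, r2, r3, h⟩ := h
  refine ⟨r + r1 - r2 * t - r3 * s, r2, r3, ?_⟩
  refine (sup_le (sup_le ?_ ?_) ?_ : _ ≤ prin (a + d * (r + r1 - r2 * t - r3 * s)) ⊔ prin (b + d * r2)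
    ⊔ prin (c + d * r3)) h
  · rw [prin_le]
    refine mem3.2 ⟨1, t, s, ?_⟩
    noncomm_ring
  · exact le_sup_of_le_left le_sup_right
  · exact le_sup_right

theorem Stab.swap {a b c d : A} (h : Stab a b c d) : Stab b c a d := by
  obtain ⟨r1, r2, r3, h⟩ := h
  refine ⟨r2, r3, r1, ?_⟩
  rwa [sup_comm, ← sup_assoc]

theorem Stab.fin {a b c d y y' y'' : A} (hy : y ∈ prin b ⊔ prin c ⊔ prin d)
    (hy' : y' ∈ prin (a + y) ⊔ prin c ⊔ prin d)
    (hy'' : y'' ∈ prin (a + y) ⊔ prin (b + y') ⊔ prin d)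
    (h : (1 : A) ∈ prin (a + y) ⊔ prin (b + y') ⊔ prin (c + y'')) : Stab a b c d := by
  refine Stab.red (y := y) ?_ hy
  have h0 : Stab (a + y) (b + y') (c + y'') d := ⟨0, 0, 0, by simpa using h⟩
  have h1 : Stab (c + y'') (a + y) (b + y') d := h0.swap.swap
  have h2 := (h1.red hy'').swap.swap
  exact (h2.red (by rwa [sup_comm (prin c)])).swap.swap
end Stab

section A
variable {K A : Type} [Field K] [IsAlgClosed K] [CharZero K] [Ring A] [Algebra K A]
  {μ ε : K} {n : ℕ} {U D w : A}

def Gd (μ ε : K) (n : ℕ) (U D w : A) (l : K) (x y : A) : Prop :=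
  ∃ (E R : Type) (_ : CommRing E) (_ : Algebra K E) (_ : Ring R) (_ : Algebra K R)
      (σ : E →ₐ[K] E) (v : E) (ι : E →ₐ[K] R) (u d : R) (π : A →+* R),
      LD μ ε n U D w l σ v ι u d π ∧ LG ι u d n (prin (π x) ⊔ prin (π y))

omit [IsAlgClosed K] [CharZero K] in
theorem LD.pzl {l : K} {E R : Type} [CommRing E] [Algebra K E] [Ring R] [Algebra K R]
    {σ : E →ₐ[K] E} {v : E} {ι : E →ₐ[K] R} {u d : R} {π : A →+* R}
    (h : LD μ ε n U D w l σ v ι u d π) : π (w ^ n - algebraMap K A l) = 0 := by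
  have := h.pz (X - C l)
  simpa using this

omit [IsAlgClosed K] [CharZero K] in
theorem Gd.shift {l : K} {x y : A} (h : Gd μ ε n U D w l x y) (r : A) :
    Gd μ ε n U D w l x (y + (w ^ n - algebraMap K A l) * r) := by
  obtain ⟨E, R, i1, i2, i3, i4, σ, v, ι, u, d, π, h, h2⟩ := h
  refine ⟨E, R, i1, i2, i3, i4, σ, v, ι, u, d, π, h, ?_⟩
  rwa [map_add, map_mul, h.pzl, zero_mul, add_zero]

theorem AD.gdFR (hA : AD μ ε n U D w) {l : K} (hl : l ≠ 0) (a : A) {b s y0 : A}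
    {Y : Submodule Aᵐᵒᵖ A} (hy : y0 ∈ Y) (h : b * s + y0 = 1) :
    ∃ y ∈ Y, Gd μ ε n U D w l a (b + y) := by
  obtain ⟨E, R, i1, i2, i3, i4, σ, v, ι, u, d, π, hL⟩ := exists_LD hA l hl
  have hnp : 0 < n := hL.ed.npos
  obtain ⟨ω, hω⟩ := IsAlgClosed.exists_pow_nat_eq l hnp
  obtain ⟨e, e1, e2, e3⟩ := idem hL.pbw hL.ed hω
  have hH := HH_C hL.pbw hL.ed hA.hn
  obtain ⟨_, ⟨r, rfl⟩, hr⟩ := FR hL.pbw hL.ed hH e e1 e2 e3 (b := π b) (s := π s) (y0 := π y0)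
    (prin (π y0)) (self_mem_prin _) (by rw [← map_mul, ← map_add, h, map_one])
  obtain ⟨r, rfl⟩ := hL.surjC r
  refine ⟨y0 * r, rmul hy _, E, R, i1, i2, i3, i4, σ, v, ι, u, d, π, hL, ?_⟩
  rw [lm_apply, ← map_mul, ← map_add] at hr
  exact hr.mono hL.ed le_sup_right

/-- a finite set of exceptional values -/
theorem AD.gda (hA : AD μ ε n U D w) {a : A} (ha : a ≠ 0) : ∃ Λ : Finset K, ∀ l, l ≠ 0 → l ∉ Λ →
    ∀ b, Gd μ ε n U D w l a b := by
  classical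
  obtain ⟨f, hf, hf2⟩ := hA.lead ha
  refine ⟨f.roots.toFinset.image (fun ω => ω ^ n), fun l hl hlΛ b => ?_⟩
  obtain ⟨E, R, i1, i2, i3, i4, σ, v, ι, u, d, π, hL⟩ := exists_LD hA l hl
  refine ⟨E, R, i1, i2, i3, i4, σ, v, ι, u, d, π, hL, ?_⟩
  refine (hL.lg (hf2 hL ?_)).mono hL.ed le_sup_left
  intro ω hω h0
  refine hlΛ (Finset.mem_image.2 ⟨ω, ?_, h0⟩)
  rw [Multiset.mem_toFinset, mem_roots hf]
  exact hω

omit [IsAlgClosed K] [CharZero K] in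
theorem AD.zcf (hA : AD μ ε n U D w) (f : K[X]) (x : A) : aeval (w ^ n) f * x = x * aeval (w ^ n) f := by
  have h1 : Commute x (w ^ n) := (hA.zc x).symm
  rw [aeval_eq_sum_range]
  refine (Commute.sum_right _ _ _ fun i _ => ?_).symm
  exact (h1.pow_right i).smul_right _

theorem AD.stage2 (hA : AD μ ε n U D w) {a : A} (ha : a ≠ 0) {N1 : Submodule Aᵐᵒᵖ A} (hN : Lcl N1) (hw : w ∈ N1)
    {p : MvPolynomial (Fin 2) K} (hp0 : p ≠ 0) (hpN : pev n U D p ∈ N1)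
    {b s y0 d : A} {Y : Submodule Aᵐᵒᵖ A} (hd : d ∈ Y) (hy : y0 ∈ Y) (h : b * s + y0 = 1) :
    ∃ y ∈ Y, (∃ N2, Lcl N2 ∧ N1 ≤ N2 ∧ N2 ≤ prin (b + y) ⊔ N1 ∧
      ∃ q : K[X], q ≠ 0 ∧ aeval (U ^ n - (D ^ n) ^ nnE p) q ∈ N2) ∧
      (∀ l, l ≠ 0 → Gd μ ε n U D w l a (b + y)) ∧
      ∃ g : K[X], g ≠ 0 ∧ d * aeval (w ^ n) g ∈ prin a ⊔ prin (b + y) := by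
  classical
  obtain ⟨Λ, hΛ⟩ := hA.gda ha
  let Pr : K → A → Prop := fun l b' => (l = 0 → ∃ N2, Lcl N2 ∧ N1 ≤ N2 ∧ N2 ≤ prin b' ⊔ N1 ∧
      ∃ q : K[X], q ≠ 0 ∧ aeval (U ^ n - (D ^ n) ^ nnE p) q ∈ N2) ∧ (l ≠ 0 → Gd μ ε n U D w l a b')
  have hPr : ∀ l x r, Pr l x → Pr l (x + (w ^ n - algebraMap K A l) * r) := by
    rintro l x r ⟨h1, h2⟩
    refine ⟨?_, fun hl => (h2 hl).shift r⟩
    rintro rfl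
    obtain ⟨N2, e1, e2, e3, e4⟩ := h1 rfl
    refine ⟨N2, e1, e2, e3.trans (sup_le ?_ le_sup_right), e4⟩
    rw [prin_le]
    have hz : w ^ n * r ∈ N1 := by
      obtain ⟨m, rfl⟩ : ∃ m, n = m + 1 := ⟨n - 1, by have := hA.hn; omega⟩
      exact rmul (hN _ _ hw |> fun h => by rw [pow_succ]; exact h) r
    have := Submodule.add_mem_sup (self_mem_prin (x + (w ^ n - algebraMap K A 0) * r)) (N1.neg_mem hz)
    simpa using this
  obtain ⟨y, hyY, hyP⟩ := crt (w ^ n) hA.zc Pr hPr Y b (insert 0 Λ) (by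
    intro l _
    by_cases hl : l = 0
    · obtain ⟨y, hy1, hy2⟩ := hA.st2 hN hw hp0 hpN hy h
      exact ⟨y, hy1, fun _ => hy2, fun h => absurd hl h⟩
    · obtain ⟨y, hy1, hy2⟩ := hA.gdFR hl a hy h
      exact ⟨y, hy1, fun h => absurd h hl, fun _ => hy2⟩)
  let θ : K[X] := ∏ l ∈ insert 0 Λ, (X - C l)
  have hθ : θ ≠ 0 := Finset.prod_ne_zero_iff.2 fun l _ => X_sub_C_ne_zero l
  obtain ⟨r, g, hg, hg2⟩ := hA.S (b + y) d ha hθ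
  have hP : ∀ l ∈ insert 0 Λ, Pr l (b + y + d * (aeval (w ^ n) θ * r)) := by
    intro l hl
    obtain ⟨q, hq⟩ : (X - C l) ∣ θ := Finset.dvd_prod_of_mem _ hl
    have := hPr l _ (aeval (w ^ n) q * (d * r)) (hyP l hl)
    convert this using 2
    rw [← mul_assoc, ← mul_assoc, ← mul_assoc, ← hA.zcf, hq]
    simp [mul_assoc]
  refine ⟨y + d * (aeval (w ^ n) θ * r), Y.add_mem hyY (rmul hd _), ?_, ?_, g, hg, ?_⟩
  · rw [← add_assoc]
    exact (hP 0 (Finset.mem_insert_self _ _)).1 rfl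
  · intro l hl
    rw [← add_assoc]
    by_cases h1 : l ∈ Λ
    · exact (hP l (Finset.mem_insert_of_mem h1)).2 hl
    · exact hΛ l hl h1 _
  · rwa [← add_assoc]

theorem AD.gdC (hA : AD μ ε n U D w) {l : K} {a b c d s y0 : A} (hG : Gd μ ε n U D w l a b)
    (hy : y0 ∈ prin a ⊔ prin b ⊔ prin d) (h : c * s + y0 = 1) :
    ∃ y ∈ prin a ⊔ prin b ⊔ prin d,
      (1 : A) ∈ prin a ⊔ prin b ⊔ prin (c + y) ⊔ prin (w ^ n - algebraMap K A l) := by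
  obtain ⟨E, R, i1, i2, i3, i4, σ, v, ι, u, d', π, hL, hG⟩ := hG
  have hH := HH_C hL.pbw hL.ed hA.hn
  have hπ := hL.surjC
  obtain ⟨Q, j1, j2, ρ, hρ, hk⟩ := quot_ex K (JJ R) JJ_lcl
  have hfin : Module.Finite K Q := fin_of_JJ hL.pbw hL.ed hH ρ hρ (fun x hx => (hk x).2 hx)
  obtain ⟨t, x, p, hp, hpu⟩ := GU (R0 := K) (fun x : Q => IsIntegral.of_finite K x)
    (b := ρ (π c)) (s := ρ (π s)) (y0 := ρ (π y0))
    (by rw [← map_mul, ← map_mul, ← map_add, ← map_add, h, map_one, map_one])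
  obtain ⟨t, rfl⟩ := hρ t
  obtain ⟨t, rfl⟩ := hπ t
  obtain ⟨x, rfl⟩ := hρ x
  obtain ⟨x, rfl⟩ := hπ x
  have hJ1 : π ((c + y0 * t) * x) - algebraMap K R p ∈ JJ R := by
    rw [← hk, map_sub, AlgHom.commutes, ← hpu, sub_eq_zero]
    simp only [map_mul, map_add]
  have hrel : (c + y0 * t) * s + y0 * (1 - t * s) = 1 := by
    calc (c + y0 * t) * s + y0 * (1 - t * s) = c * s + y0 := by noncomm_ring
      _ = 1 := h
  obtain ⟨x1, x2, q, hq⟩ := mem3.1 (rmul hy (1 - t * s))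
  rw [← hq] at hrel
  obtain ⟨j0, hj0, hj⟩ := LT hL.pbw hL.ed hH (π (c + y0 * t)) (π d) (JJ R).toAddSubgroup (fun j hj => hj)
    (fun j hj => ⟨1, one_ne_zero, by rw [one_smul]; exact hj⟩) _ hG
  obtain ⟨r0, rfl⟩ := hπ j0
  replace hj0 : π r0 ∈ JJ R := hj0
  have hJI := JJ_idem hL.pbw hL.ed hH (I := prin (π a) ⊔ prin (π b) ⊔ prin (π (c + y0 * t) + π d * π r0)) (by
    intro j hjj j' hj'
    refine hj j ?_ j' hj'
    have e : j = (π a * (π x1 * j) + π b * (π x2 * j)) + π (c + y0 * t) * (π s * j) + π d * (π q * j) := by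
      have := congrArg π hrel
      simp only [map_add, map_mul, map_one] at this
      calc j = 1 * j := (one_mul j).symm
        _ = _ := by rw [← this]; simp only [map_add, map_mul]; noncomm_ring
    rw [e]
    refine Submodule.add_mem_sup (Submodule.add_mem_sup (Submodule.add_mem_sup ⟨_, rfl⟩ ⟨_, rfl⟩) ⟨_, rfl⟩) ?_
    exact ⟨_, JJ_lcl _ _ hjj, rfl⟩)
  have hc' : π (c + y0 * t) ∈ prin (π a) ⊔ prin (π b) ⊔ prin (π (c + y0 * t) + π d * π r0) := by
    have h1 := hJI (JJ_lcl (π d) _ hj0)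
    have h2 : π (c + y0 * t) + π d * π r0 ∈ prin (π a) ⊔ prin (π b) ⊔ prin (π (c + y0 * t) + π d * π r0) :=
      Submodule.mem_sup_right (self_mem_prin _)
    simpa using Submodule.sub_mem _ h2 h1
  have hpm : algebraMap K R p ∈ prin (π a) ⊔ prin (π b) ⊔ prin (π (c + y0 * t) + π d * π r0) := by
    have h1 := rmul hc' (π x)
    rw [← map_mul π (c + y0 * t)] at h1
    have h2 := Submodule.sub_mem _ h1 (hJI hJ1)
    rwa [sub_sub_cancel] at h2
  have h1m := rmul hpm (algebraMap K R p⁻¹)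
  rw [← map_mul (algebraMap K R), mul_inv_cancel₀ hp, map_one] at h1m
  obtain ⟨z1, z2, z3, hz⟩ := mem3.1 h1m
  obtain ⟨z1, rfl⟩ := hπ z1
  obtain ⟨z2, rfl⟩ := hπ z2
  obtain ⟨z3, rfl⟩ := hπ z3
  refine ⟨y0 * t + d * r0, Submodule.add_mem _ (rmul hy _)
    (Submodule.mem_sup_right (rmul (self_mem_prin d) _)), ?_⟩
  obtain ⟨r, hr⟩ := hL.ker hA (a := 1 - (a * z1 + b * z2 + (c + (y0 * t + d * r0)) * z3)) (by
    rw [map_sub, map_one, sub_eq_zero, ← hz]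
    simp only [map_add, map_mul, add_assoc])
  have e : (1 : A) = (a * z1 + b * z2 + (c + (y0 * t + d * r0)) * z3) + (w ^ n - algebraMap K A l) * r := by
    rw [hr]; abel
  rw [e]
  exact Submodule.add_mem_sup (mem3.2 ⟨_, _, _, rfl⟩) ⟨_, rfl⟩

omit [IsAlgClosed K] [CharZero K] in
theorem AD.wpow_sup (hA : AD μ ε n U D w) {I : Submodule Aᵐᵒᵖ A} (h : (1 : A) ∈ I ⊔ prin w) :
    (1 : A) ∈ I ⊔ prin (w ^ n - algebraMap K A 0) := by
  obtain ⟨i, hi, _, ⟨r, rfl⟩, hir⟩ := Submodule.mem_sup.1 h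
  have key : ∀ k : ℕ, ∃ i ∈ I, ∃ x, i + x * w ^ k = 1 := by
    intro k
    induction k with
    | zero => exact ⟨0, I.zero_mem, 1, by simp⟩
    | succ k ih =>
      obtain ⟨i', hi', x, hx⟩ := ih
      obtain ⟨y, hy⟩ := hA.wx (r * x)
      refine ⟨i' + i * (x * w ^ k), I.add_mem hi' (rmul hi _), y, ?_⟩
      rw [pow_succ', ← mul_assoc y, ← hy, ← hx, add_assoc]
      congr 1
      have : x * w ^ k = (i + w * r) * (x * w ^ k) := by
        have : i + w * r = 1 := hir
        rw [this, one_mul]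
      conv_rhs => rw [this]
      noncomm_ring
  obtain ⟨i', hi', x, hx⟩ := key n
  rw [← hx, ← hA.zc, map_zero, sub_zero]
  exact Submodule.add_mem_sup hi' ⟨_, rfl⟩

omit [CharZero K] in
theorem AD.collect (hA : AD μ ε n U D w) {I : Submodule Aᵐᵒᵖ A} {g : K[X]} (hg : g ≠ 0)
    (hgI : aeval (w ^ n) g ∈ I) (h : ∀ l ∈ g.roots, (1 : A) ∈ I ⊔ prin (w ^ n - algebraMap K A l)) :
    (1 : A) ∈ I := by
  have key : ∀ s : Multiset K, (∀ l ∈ s, (1 : A) ∈ I ⊔ prin (w ^ n - algebraMap K A l)) →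
      (1 : A) ∈ I ⊔ prin (aeval (w ^ n) (s.map fun l => X - C l).prod) := by
    intro s
    induction s using Multiset.induction_on with
    | empty => intro _; exact Submodule.mem_sup_right (by simpa using self_mem_prin (1 : A))
    | cons l s ih =>
      intro hs
      obtain ⟨i', hi', _, ⟨r', rfl⟩, e'⟩ := Submodule.mem_sup.1 (ih fun l hl => hs l (Multiset.mem_cons_of_mem hl))
      obtain ⟨i, hi, _, ⟨r, rfl⟩, e⟩ := Submodule.mem_sup.1 (hs l (Multiset.mem_cons_self l s))
      simp only [lm_apply] at e e'
      set P := aeval (w ^ n) (s.map fun l => X - C l).prod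
      have hz : w ^ n - algebraMap K A l = aeval (w ^ n) (X - C l) := by simp
      rw [Multiset.map_cons, Multiset.prod_cons, map_mul]
      rw [hz] at e
      have : (1 : A) = (i + i' * (aeval (w ^ n) (X - C l) * r)) + (aeval (w ^ n) (X - C l) * P) * (r' * r) := by
        calc (1 : A) = i + aeval (w ^ n) (X - C l) * ((i' + P * r') * r) := by rw [e', one_mul, e]
          _ = i + (aeval (w ^ n) (X - C l) * i') * r + (aeval (w ^ n) (X - C l) * P) * (r' * r) := by
            noncomm_ring
          _ = _ := by rw [hA.zcf, mul_assoc i']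
      rw [this]
      exact Submodule.add_mem_sup (I.add_mem hi (rmul hi' _)) ⟨_, rfl⟩
  have h1 := key g.roots h
  have hsp := (IsAlgClosed.splits g).eq_prod_roots
  have h2 : aeval (w ^ n) (g.roots.map fun l => X - C l).prod ∈ I := by
    have h3 := rmul hgI (algebraMap K A g.leadingCoeff⁻¹)
    rw [← Algebra.commutes] at h3
    convert h3 using 1
    have h4 := congrArg (aeval (w ^ n)) hsp
    rw [map_mul, aeval_C] at h4
    rw [h4, ← mul_assoc, ← map_mul, inv_mul_cancel₀ (by simpa using hg), map_one, one_mul]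
  have h3 : I ⊔ prin (aeval (w ^ n) (g.roots.map fun l => X - C l).prod) = I := by
    rw [sup_eq_left, prin_le]; exact h2
  rwa [h3] at h1

theorem AD.main (hA : AD μ ε n U D w) {a b c d : A}
    (h : ∃ r1 r2 r3 r4, a * r1 + b * r2 + c * r3 + d * r4 = 1) : Stab a b c d := by
  classical
  obtain ⟨r1, r2, r3, r4, h⟩ := h
  -- stage 1
  obtain ⟨y, hy, ha1, N1, hN1, hw, hN1a, p, hp0, hpN⟩ := hA.st1 (a := a) (s := r1)
    (y0 := b * r2 + c * r3 + d * r4) (Y := prin b ⊔ prin c ⊔ prin d) (mem3.2 ⟨_, _, _, rfl⟩)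
    (by rw [← h]; abel)
  obtain ⟨t1, t2, t3, ht⟩ := mem3.1 hy
  have h' : (a + y) * r1 + b * (r2 - t1 * r1) + c * (r3 - t2 * r1) + d * (r4 - t3 * r1) = 1 := by
    rw [← h, ← ht]; noncomm_ring
  generalize r2 - t1 * r1 = r2, r3 - t2 * r1 = r3, r4 - t3 * r1 = r4 at h'
  -- stage 2
  obtain ⟨y', hy', ⟨N2, hN2, hN12, hN2b, q, hq0, hqN⟩, hG, g, hg0, hg⟩ := hA.stage2 ha1 hN1 hw hp0 hpN
    (b := b) (s := r2) (d := d)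
    (y0 := (a + y) * r1 + c * r3 + d * r4) (Y := prin (a + y) ⊔ prin c ⊔ prin d)
    (Submodule.mem_sup_right (self_mem_prin d)) (mem3.2 ⟨_, _, _, rfl⟩)
    (by rw [← h']; abel)
  obtain ⟨t1, t2, t3, ht⟩ := mem3.1 hy'
  have h'' : (a + y) * (r1 - t1 * r2) + (b + y') * r2 + c * (r3 - t2 * r2) + d * (r4 - t3 * r2) = 1 := by
    rw [← h', ← ht]; noncomm_ring
  generalize r1 - t1 * r2 = r1, r3 - t2 * r2 = r3, r4 - t3 * r2 = r4 at h''
  -- stage 3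
  have hy0 : (a + y) * r1 + (b + y') * r2 + d * r4 ∈ prin (a + y) ⊔ prin (b + y') ⊔ prin d :=
    mem3.2 ⟨_, _, _, rfl⟩
  have hrel : c * r3 + ((a + y) * r1 + (b + y') * r2 + d * r4) = 1 := by rw [← h'']; abel
  let Pr : K → A → Prop := fun l c' => (1 : A) ∈ prin (a + y) ⊔ prin (b + y') ⊔ prin c'
    ⊔ prin (w ^ n - algebraMap K A l)
  have hPr : ∀ l x r, Pr l x → Pr l (x + (w ^ n - algebraMap K A l) * r) := by
    intro l x r hx
    suffices hle : prin (a + y) ⊔ prin (b + y') ⊔ prin x ⊔ prin (w ^ n - algebraMap K A l) ≤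
        prin (a + y) ⊔ prin (b + y') ⊔ prin (x + (w ^ n - algebraMap K A l) * r)
          ⊔ prin (w ^ n - algebraMap K A l) from hle hx
    refine sup_le (sup_le ?_ ?_) ?_
    · exact le_sup_of_le_left le_sup_left
    · rw [prin_le]
      have h1 := Submodule.add_mem_sup (S := prin (a + y) ⊔ prin (b + y') ⊔ prin (x + (w ^ n - algebraMap K A l) * r))
        (T := prin (w ^ n - algebraMap K A l)) (Submodule.mem_sup_right (self_mem_prin _))
        (rmul (self_mem_prin (w ^ n - algebraMap K A l)) (-r))
      simpa using h1
    · exact le_sup_right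
  obtain ⟨y'', hy'', hP⟩ := crt (w ^ n) hA.zc Pr hPr (prin (a + y) ⊔ prin (b + y') ⊔ prin d) c
    (g.roots.toFinset) (by
    intro l _
    by_cases hl : l = 0
    · subst hl
      obtain ⟨y3, hy3, h3⟩ := hA.st3 hN2 (hN12 hw) hp0 (hN12 hpN) hq0 hqN hy0 hrel
      refine ⟨y3, hy3, hA.wpow_sup ?_⟩
      suffices hle : prin (c + y3) ⊔ N2 ≤ prin (a + y) ⊔ prin (b + y') ⊔ prin (c + y3) ⊔ prin w from hle h3
      refine sup_le ?_ (hN2b.trans (sup_le ?_ (hN1a.trans (sup_le ?_ ?_))))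
      · exact le_sup_of_le_left le_sup_right
      · exact le_sup_of_le_left (le_sup_of_le_left le_sup_right)
      · exact le_sup_of_le_left (le_sup_of_le_left le_sup_left)
      · exact le_sup_right
    · exact hA.gdC (hG l hl) hy0 hrel)
  refine Stab.fin hy hy' hy'' ?_
  refine hA.collect hg0 ?_ (fun l hl => hP l (by simpa using hl))
  obtain ⟨s1, s2, s3, hs⟩ := mem3.1 hy''
  have e : (a + y) * (r1 - s1 * r3) + (b + y') * (r2 - s2 * r3) + (c + y'') * r3 + d * (r4 - s3 * r3) = 1 := by
    rw [← h'', ← hs]; noncomm_ring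
  have e2 := congrArg (fun x => x * aeval (w ^ n) g) e
  simp only [one_mul] at e2
  rw [← e2, add_mul]
  refine Submodule.add_mem _ (rmul (mem3.2 ⟨_, _, _, rfl⟩) _) ?_
  rw [mul_assoc, ← hA.zcf, ← mul_assoc]
  exact Submodule.mem_sup_left (rmul hg _)
end A
end DUP

namespace DUP
open Polynomial

section Fin
variable {K : Type} [Field K] {α β γ μ : K}

theorem du_lift {Q : Type} [Ring Q] [Algebra K Q] (u d : Q)
    (e1 : d * u * u = α • (u * d * u) + β • (u * u * d) + γ • u)
    (e2 : d * d * u = α • (d * u * d) + β • (u * d * d) + γ • d) :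
    ∃ π : DownUp K α β γ →ₐ[K] Q, π (DownUp.U K α β γ) = u ∧ π (DownUp.D K α β γ) = d := by
  let f : FreeAlgebra K (Fin 2) →ₐ[K] Q := FreeAlgebra.lift K ![d, u]
  have f0 : f (FreeAlgebra.ι K 0) = d := by simp [f]
  have f1 : f (FreeAlgebra.ι K 1) = u := by simp [f]
  let π : DownUp K α β γ →ₐ[K] Q := RingQuot.liftAlgHom K ⟨f, by
    intro x y h
    cases h with
    | rel1 => simp only [map_mul, map_add, map_smul, f0, f1, e1]
    | rel2 => simp only [map_mul, map_add, map_smul, f0, f1, e2]⟩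
  refine ⟨π, ?_, ?_⟩
  · rw [DownUp.U, RingQuot.liftAlgHom_mkAlgHom_apply, f1]
  · rw [DownUp.D, RingQuot.liftAlgHom_mkAlgHom_apply, f0]

theorem du_rel1 : DownUp.D K α β γ * DownUp.U K α β γ * DownUp.U K α β γ =
    α • (DownUp.U K α β γ * DownUp.D K α β γ * DownUp.U K α β γ)
    + β • (DownUp.U K α β γ * DownUp.U K α β γ * DownUp.D K α β γ) + γ • DownUp.U K α β γ := by
  have := RingQuot.mkAlgHom_rel K (DownUpRel.rel1 (K := K) (a := α) (b := β) (g := γ))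
  simp only [map_mul, map_add, map_smul] at this
  exact this

theorem du_rel2 : DownUp.D K α β γ * DownUp.D K α β γ * DownUp.U K α β γ =
    α • (DownUp.D K α β γ * DownUp.U K α β γ * DownUp.D K α β γ)
    + β • (DownUp.U K α β γ * DownUp.D K α β γ * DownUp.D K α β γ) + γ • DownUp.D K α β γ := by
  have := RingQuot.mkAlgHom_rel K (DownUpRel.rel2 (K := K) (a := α) (b := β) (g := γ))
  simp only [map_mul, map_add, map_smul] at this
  exact this

open LaurentPolynomial in
theorem du_laurent (h1 : α + β ≠ 1) : ∃ φ : DownUp K α β γ →ₐ[K] LaurentPolynomial K,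
    φ (DownUp.U K α β γ) = T 1 := by
  have h2 : 1 - (α + β) ≠ 0 := sub_ne_zero.2 h1.symm
  let c : K := γ / (1 - (α + β))
  have hc : γ = c * (1 - (α + β)) := (div_mul_cancel₀ _ h2).symm
  have ht : (T 1 : LaurentPolynomial K) * T (-1) = 1 := by rw [← T_add]; simp
  have ht' : (T (-1) : LaurentPolynomial K) * T 1 = 1 := by rw [← T_add]; simp
  obtain ⟨φ, h, -⟩ := du_lift (α := α) (β := β) (γ := γ) (T 1 : LaurentPolynomial K) (c • T (-1))
    (by
      simp only [smul_mul_assoc, mul_smul_comm, mul_assoc, ht, ht', mul_one, one_mul]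
      rw [hc]; module)
    (by
      simp only [smul_mul_assoc, mul_smul_comm, mul_assoc, ht, ht', mul_one, one_mul, smul_smul]
      rw [hc]; module)
  exact ⟨φ, h⟩

theorem du_aux {Q : Type} [Ring Q] [Algebra K Q] (u d : Q) (ε : K) (hα : α = μ + μ)
    (hβμ : β = -(μ * μ)) (hγ : γ = ε * (1 - μ))
    (e1 : d * u * u = α • (u * d * u) + β • (u * u * d) + γ • u)
    (e2 : d * d * u = α • (d * u * d) + β • (u * d * d) + γ • d) :
    (d * u - μ • (u * d) - algebraMap K Q ε) * u = μ • (u * (d * u - μ • (u * d) - algebraMap K Q ε)) ∧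
    d * (d * u - μ • (u * d) - algebraMap K Q ε) = μ • ((d * u - μ • (u * d) - algebraMap K Q ε) * d) := by
  constructor
  · simp only [sub_mul, mul_sub, e1, Algebra.algebraMap_eq_smul_one, smul_mul_assoc, mul_smul_comm,
      one_mul, mul_one, smul_sub, smul_smul, ← mul_assoc]
    rw [hα, hβμ, hγ]
    module
  · simp only [sub_mul, mul_sub, ← mul_assoc, e2, Algebra.algebraMap_eq_smul_one, smul_mul_assoc, mul_smul_comm,
      one_mul, mul_one, smul_sub, smul_smul]
    rw [hα, hβμ, hγ]
    module

theorem du_AD (hα : α = μ + μ) (hβμ : β = -(μ * μ)) (h1 : α + β ≠ 1) {n : ℕ} (hn : 1 ≤ n)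
    (hprim : IsPrimitiveRoot μ n) : ∃ (ε : K) (w : DownUp K α β γ),
      AD μ ε n (DownUp.U K α β γ) (DownUp.D K α β γ) w := by
  have hμ1 : μ ≠ 1 := by
    rintro rfl
    apply h1; rw [hα, hβμ]; ring
  have h2 : 1 - μ ≠ 0 := sub_ne_zero.2 hμ1.symm
  let ε : K := γ / (1 - μ)
  have hγ : γ = ε * (1 - μ) := (div_mul_cancel₀ _ h2).symm
  obtain ⟨φ, -⟩ := du_laurent (γ := γ) h1
  refine ⟨ε, DownUp.D K α β γ * DownUp.U K α β γ - μ • (DownUp.U K α β γ * DownUp.D K α β γ)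
    - algebraMap K _ ε, ⟨hprim, ?_, ?_, ?_, ?_, ?_, ?_, φ.toRingHom.domain_nontrivial⟩⟩
  · rcases Nat.lt_or_ge n 2 with h | h
    · obtain rfl : n = 1 := by omega
      exact absurd (by simpa using hprim.pow_eq_one) hμ1
    · exact h
  · exact (du_aux _ _ ε hα hβμ hγ du_rel1 du_rel2).1
  · exact (du_aux _ _ ε hα hβμ hγ du_rel1 du_rel2).2
  · abel
  · have h3 : Algebra.adjoin K (Set.range (FreeAlgebra.ι K : Fin 2 → _)) = ⊤ := FreeAlgebra.adjoin_range_ι ..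
    have h4 := congrArg (Subalgebra.map (RingQuot.mkAlgHom K (DownUpRel K α β γ))) h3
    rw [AlgHom.map_adjoin, Algebra.map_top, (AlgHom.range_eq_top _).2 (RingQuot.mkAlgHom_surjective K _)] at h4
    rw [eq_top_iff, ← h4]
    apply Algebra.adjoin_mono
    rintro _ ⟨_, ⟨i, rfl⟩, rfl⟩
    fin_cases i
    · exact Or.inr rfl
    · exact Or.inl rfl
  · intro Q _ _ u d v e1 e2 e3
    have hv : v = d * u - μ • (u * d) - algebraMap K Q ε := by rw [e3]; abel
    apply du_lift
    · have : d * u * u = μ • (u * d * u) + μ • (u * v) + ε • u := by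
        rw [e3, add_mul, add_mul, e1, smul_mul_assoc, ← Algebra.smul_def]
      rw [this, hv]
      simp only [mul_sub, Algebra.algebraMap_eq_smul_one, mul_smul_comm, mul_one, ← mul_assoc]
      rw [hα, hβμ, hγ]
      module
    · have : d * d * u = μ • (d * u * d) + μ • (v * d) + ε • d := by
        calc d * d * u = d * (d * u) := mul_assoc _ _ _
          _ = d * (μ • (u * d) + v + algebraMap K Q ε) := by rw [e3]
          _ = _ := by
            rw [mul_add, mul_add, e2, mul_smul_comm, ← Algebra.commutes, ← Algebra.smul_def, ← mul_assoc]
      rw [this, hv]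
      simp only [sub_mul, Algebra.algebraMap_eq_smul_one, smul_mul_assoc, one_mul]
      rw [hα, hβμ, hγ]
      module

theorem uni_iff {R : Type} [Ring R] {s : ℕ} (u : Fin s → R) :
    IsUnimodularRow u ↔ ∃ c : Fin s → R, ∑ i, u i * c i = 1 := by
  unfold IsUnimodularRow
  constructor
  · intro h
    have h1 : (1 : R) ∈ Submodule.span Rᵐᵒᵖ (Set.range u) := by rw [h]; trivial
    obtain ⟨c, hc⟩ := (Submodule.mem_span_range_iff_exists_fun _).1 h1
    exact ⟨fun i => (c i).unop, by rw [← hc]; rfl⟩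
  · rintro ⟨c, hc⟩
    have h1 : (1 : R) ∈ Submodule.span Rᵐᵒᵖ (Set.range u) :=
      (Submodule.mem_span_range_iff_exists_fun _).2 ⟨fun i => MulOpposite.op (c i), by rw [← hc]; rfl⟩
    rw [Submodule.eq_top_iff']
    intro x
    have := rmul h1 x
    rwa [one_mul] at this

theorem lau {A : Type} [Ring A] [Algebra K A] {φ : A →ₐ[K] LaurentPolynomial K} {u : A}
    (h : φ u = LaurentPolynomial.T 1) (f : K[X]) : φ (aeval u f) = toLaurent f := by
  have : φ.comp (aeval u) = toLaurentAlg := by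
    ext
    simp [h]
  exact congrArg (fun g => g f) this

theorem no_poly [CharZero K] (r s : LaurentPolynomial K)
    (h : (toLaurent (2 * X - 1 : K[X]) + toLaurent ((X - 1) * (X - 2) : K[X]) * r) * s = 1) : False := by
  obtain ⟨m, r', hr⟩ := LaurentPolynomial.exists_T_pow r
  obtain ⟨k, s', hs⟩ := LaurentPolynomial.exists_T_pow s
  have e : ((2 * X - 1) * X ^ m + ((X - 1) * (X - 2)) * r') * s' = (X : K[X]) ^ (m + k) := by
    apply toLaurent_injective
    simp only [map_add, map_mul toLaurent, hr, hs, toLaurent_X_pow] at h ⊢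
    push_cast
    rw [LaurentPolynomial.T_add]
    linear_combination (LaurentPolynomial.T m * LaurentPolynomial.T k) * h
  obtain ⟨j, -, v, hv⟩ := (dvd_prime_pow (prime_X (R := K)) _).1 (Dvd.intro _ e)
  obtain ⟨c, hc, hcv⟩ := isUnit_iff.1 v.isUnit
  rw [← hcv] at hv
  have h1 := congrArg (eval 1) hv
  have h2 := congrArg (eval 2) hv
  simp at h1 h2
  norm_num at h1
  rw [h1] at h2
  norm_num at h2
  have h3 : 3 * 2 ^ m = 2 ^ j := by exact_mod_cast h2
  have h4 : 3 ∣ 2 ^ j := ⟨_, h3.symm⟩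
  have := Nat.Prime.dvd_of_dvd_pow Nat.prime_three h4
  omega

end Fin
end DUP

/-- Let `K` be algebraically closed of characteristic zero and
`A = A(α,β,γ)` with `β ≠ 0` and `α + β ≠ 1`. If `t² − αt − β = (t − μ)²` for some `μ ∈ K`
that is a primitive `n`-th root of unity for some `n ≥ 1`, then `2 ≤ sr(A) ≤ 3`. -/
theorem downUp_stableRank_double_root_of_unity
    (K : Type) [Field K] [IsAlgClosed K] [CharZero K] (α β γ μ : K)
    (hβ : β ≠ 0) (h1 : α + β ≠ 1)
    (hα : α = μ + μ) (hβμ : β = -(μ * μ))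
    (hprim : ∃ n : ℕ, 1 ≤ n ∧ IsPrimitiveRoot μ n) :
    2 ≤ stableRank (DownUp K α β γ) ∧ stableRank (DownUp K α β γ) ≤ 3 := by
  obtain ⟨n, hn, hprim⟩ := hprim
  obtain ⟨ε, w, hA⟩ := DUP.du_AD (γ := γ) hα hβμ h1 hn hprim
  obtain ⟨φ, hφ⟩ := DUP.du_laurent (γ := γ) h1
  have hnt := hA.nontriv
  have h3 : 3 ∈ {t : ℕ | ∀ u : Fin (t + 1) → DownUp K α β γ, IsUnimodularRow u → IsStableRow u} := by
    intro u hu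
    obtain ⟨c, hc⟩ := (DUP.uni_iff u).1 hu
    obtain ⟨r1, r2, r3, hr⟩ := hA.main (a := u 0) (b := u 1) (c := u 2) (d := u 3)
      ⟨c 0, c 1, c 2, c 3, by rw [← hc, Fin.sum_univ_four]⟩
    obtain ⟨s1, s2, s3, hs⟩ := DUP.mem3.1 hr
    refine ⟨![r1, r2, r3], (DUP.uni_iff _).2 ⟨![s1, s2, s3], ?_⟩⟩
    rw [Fin.sum_univ_three, ← hs]
    rfl
  refine ⟨?_, Nat.sInf_le h3⟩
  refine le_csInf ⟨3, h3⟩ fun t ht => ?_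
  by_contra hlt
  have ht2 : t = 0 ∨ t = 1 := by omega
  rcases ht2 with rfl | rfl
  · obtain ⟨r, hr⟩ := ht (fun _ => 1) ((DUP.uni_iff _).2 ⟨fun _ => 1, by simp⟩)
    obtain ⟨c, hc⟩ := (DUP.uni_iff _).1 hr
    simp at hc
  · set u := DownUp.U K α β γ
    have key := ht ![Polynomial.aeval u (2 * Polynomial.X - 1 : Polynomial K),
      Polynomial.aeval u ((Polynomial.X - 1) * (Polynomial.X - 2) : Polynomial K)] ((DUP.uni_iff _).2
      ⟨![Polynomial.aeval u (-Polynomial.C (1 / 3) * (2 * Polynomial.X - 5) : Polynomial K),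
        Polynomial.aeval u (4 * Polynomial.C (1 / 3) : Polynomial K)], by
        rw [Fin.sum_univ_two]
        simp only [Matrix.cons_val_zero, Matrix.cons_val_one]
        rw [← map_mul, ← map_mul, ← map_add]
        have e : (3 : Polynomial K) * Polynomial.C (1 / 3) = 1 := by
          rw [← map_ofNat (Polynomial.C : K →+* Polynomial K) 3, ← map_mul]
          norm_num
        have e2 : ((2 * Polynomial.X - 1) * (-Polynomial.C (1 / 3) * (2 * Polynomial.X - 5)) +
          (Polynomial.X - 1) * (Polynomial.X - 2) * (4 * Polynomial.C (1 / 3)) : Polynomial K) = 1 := by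
          linear_combination e
        rw [e2, map_one]⟩)
    obtain ⟨r, hr⟩ := key
    obtain ⟨c, hc⟩ := (DUP.uni_iff _).1 hr
    rw [Fin.sum_univ_one] at hc
    have hc2 := congrArg φ hc
    refine DUP.no_poly (φ (r 0)) (φ (c 0)) ?_
    rw [← DUP.lau hφ, ← DUP.lau hφ, ← map_mul φ, ← map_add φ, ← map_mul φ, ← map_one φ]
    exact hc2
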